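/- arXiv:2405.12763 — 2 statements merged into one kernel-verified Lean document; each statement's English description precedes it below -/
import Mathlib

section
/- Let k be a field, let c ≥ 1 and a ≥ 2 be integers, and let q ∈ k be a nonzero element with q^a = 1. Let A be the quantum complete intersection k⟨x_1, …, x_c⟩/(x_i^a for all i, x_i x_j − q x_j x_i for all i < j), i.e. the quotient of the free (tensor) algebra on c generators by the two-sided ideal generated by the elements x_i^a (1 ≤ i ≤ c) and x_i x_j − q x_j x_i (1 ≤ i < j ≤ c). Then, given two finitely generated left A-modules M and N, either Ext_A^n(M, N) = 0 for all n > 0, or there exists a non-negative integer m_0 such that Ext_A^n(M, N) ≠ 0 for all even integers n ≥ m_0, or Ext_A^n(M, N) ≠ 0 for all odd integers n ≥ m_0. -/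
open CategoryTheory

/-- The defining relations of the quantum complete intersection
`k⟨x 1, …, x c⟩/(x i ^ a, x i * x j - q • x j * x i for i < j)`. -/
inductive QCIRel (k : Type) [Field k] (c a : ℕ) (q : k) :
    FreeAlgebra k (Fin c) → FreeAlgebra k (Fin c) → Prop
  | pow (i : Fin c) : QCIRel k c a q (FreeAlgebra.ι k i ^ a) 0
  | comm (i j : Fin c) (hij : i < j) :
      QCIRel k c a q
        (FreeAlgebra.ι k i * FreeAlgebra.ι k j - q • (FreeAlgebra.ι k j * FreeAlgebra.ι k i)) 0

/-- The quantum complete intersection `A_{c,q}^a`: the quotient of the free algebra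
`k⟨x 1, …, x c⟩` by the two-sided ideal generated by the elements `x i ^ a` (`1 ≤ i ≤ c`)
and `x i * x j − q • x j * x i` (`i < j`). -/
abbrev QCI (k : Type) [Field k] (c a : ℕ) (q : k) : Type := RingQuot (QCIRel k c a q)

namespace QCIProof

section Tog
variable {c : ℕ}

/-- Toggle membership of `i` in `p`. -/
def tog (i : Fin c) (p : Finset (Fin c)) : Finset (Fin c) :=
  if i ∈ p then p.erase i else insert i p

lemma mem_tog_self (i : Fin c) (p) : i ∈ tog i p ↔ i ∉ p := by
  unfold tog; split_ifs <;> simp_all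

lemma mem_tog_ne {i j : Fin c} (h : j ≠ i) (p) : j ∈ tog i p ↔ j ∈ p := by
  unfold tog; split_ifs <;> simp_all

lemma tog_tog (i : Fin c) (p) : tog i (tog i p) = p := by
  ext j
  by_cases h : j = i
  · subst h; simp [mem_tog_self]
  · simp [mem_tog_ne h]

lemma tog_comm (i j : Fin c) (p) : tog i (tog j p) = tog j (tog i p) := by
  by_cases hij : i = j
  · subst hij; rfl
  ext l
  by_cases h : l = i
  · subst h; simp [mem_tog_self, mem_tog_ne hij]
  · by_cases h' : l = j
    · subst h'; simp [mem_tog_self, mem_tog_ne h]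
    · simp [mem_tog_ne h, mem_tog_ne h']

lemma card_tog_mem {i : Fin c} {p} (h : i ∈ p) : (tog i p).card + 1 = p.card := by
  simp only [tog, h, if_true]; exact Finset.card_erase_add_one h

lemma card_tog_notMem {i : Fin c} {p} (h : i ∉ p) : (tog i p).card = p.card + 1 := by
  simp only [tog, h, if_false]; exact Finset.card_insert_of_notMem h

variable {k : Type} [Field k]

lemma prod_tog_mem {i : Fin c} {p} (h : i ∈ p) (g : Fin c → k) :
    ∏ j ∈ p, g j = g i * ∏ j ∈ tog i p, g j := by
  simp only [tog, h, if_true]; exact (Finset.mul_prod_erase p g h).symm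

lemma prod_tog_notMem {i : Fin c} {p} (h : i ∉ p) (g : Fin c → k) :
    ∏ j ∈ tog i p, g j = g i * ∏ j ∈ p, g j := by
  simp only [tog, h, if_false]; exact Finset.prod_insert h

end Tog

section Op
variable {c : ℕ} {k : Type} [Field k] {V : Type} [AddCommGroup V] [Module k V]

/-- elementary operators on `Finset (Fin c) → V`. -/
def op (up : Bool) (i : Fin c) (g : Fin c → k) (T : Module.End k V) :
    Module.End k (Finset (Fin c) → V) where
  toFun φ p := if (i ∈ p ↔ up = true) then (∏ j ∈ p, g j) • T (φ (tog i p)) else 0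
  map_add' x y := by funext p; simp only [Pi.add_apply, map_add, smul_add]; split_ifs <;> simp
  map_smul' r x := by
    funext p
    simp only [Pi.smul_apply, map_smul, RingHom.id_apply]
    split_ifs
    · rw [smul_comm]
    · simp

lemma op_apply (up : Bool) (i : Fin c) (g : Fin c → k) (T : Module.End k V) (φ) (p) :
    op up i g T φ p = if (i ∈ p ↔ up = true) then (∏ j ∈ p, g j) • T (φ (tog i p)) else 0 := rfl

/-- change of scalar -/
def eta (up : Bool) (x : k) : k := if up then x⁻¹ else x

lemma prod_tog_eta {i : Fin c} {up : Bool} {p} (h : i ∈ p ↔ up = true) (g : Fin c → k)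
    (hg : g i ≠ 0) : ∏ j ∈ tog i p, g j = eta up (g i) * ∏ j ∈ p, g j := by
  cases up
  · have h : i ∉ p := by simpa using h
    simp [eta, prod_tog_notMem h]
  · have h : i ∈ p := by simpa using h
    rw [prod_tog_mem h]; simp [eta, hg]

lemma op_anticomm {i j : Fin c} (hij : i ≠ j) (up up' : Bool) (g h : Fin c → k)
    (T T' : Module.End k V) (hg : g j ≠ 0) (hh : h i ≠ 0)
    (H : eta up (h i) • (T * T') = - (eta up' (g j) • (T' * T))) :
    op up i g T * op up' j h T' = - (op up' j h T' * op up i g T) := by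
  refine LinearMap.ext fun φ => ?_
  funext p
  simp only [Module.End.mul_apply, LinearMap.neg_apply, Pi.neg_apply, op_apply,
    mem_tog_ne hij, mem_tog_ne hij.symm]
  by_cases h1 : i ∈ p ↔ up = true
  · by_cases h2 : j ∈ p ↔ up' = true
    · simp only [h1, h2, if_true, true_iff, iff_self]
      rw [prod_tog_eta h1 _ hh, prod_tog_eta h2 _ hg, tog_comm j i]
      have H' := congrArg (fun F => F (φ (tog i (tog j p)))) H
      simp only [LinearMap.smul_apply, Module.End.mul_apply, LinearMap.neg_apply] at H'
      simp only [map_smul]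
      rw [mul_comm (eta up _), mul_smul, H', smul_neg, smul_neg, smul_smul, smul_smul, smul_smul]
      congr 2; ring
    · simp [h1, h2]
  · by_cases h2 : j ∈ p ↔ up' = true
    · simp [h1, h2]
    · simp [h1, h2]

lemma op_same_up (i : Fin c) (up : Bool) (g h : Fin c → k)
    (T T' : Module.End k V) : op up i g T * op up i h T' = 0 := by
  refine LinearMap.ext fun φ => ?_
  funext p
  simp only [Module.End.mul_apply, op_apply, mem_tog_self, LinearMap.zero_apply, Pi.zero_apply]
  cases up <;> by_cases hp : i ∈ p <;> simp [hp]

/-- the twisting coefficients -/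
def cf (Q : Fin c → Fin c → k) (i : Fin c) (u v : ℤ) : Fin c → k :=
  fun j => if j < i then - (Q j i) ^ u else if i < j then (Q i j) ^ v else 1

/-- left weight -/
def lam (Q : Fin c → Fin c → k) (i : Fin c) (p : Finset (Fin c)) : k :=
  ∏ j ∈ p, if j < i then Q j i else 1
/-- right weight -/
def rho (Q : Fin c → Fin c → k) (i : Fin c) (p : Finset (Fin c)) : k :=
  ∏ j ∈ p, if i < j then Q i j else 1
/-- sign -/
def sg (k : Type) [Field k] (i : Fin c) (p : Finset (Fin c)) : k :=
  ∏ j ∈ p, if j < i then (-1 : k) else 1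

/-- the parameters -/
structure QM (a : ℕ) (Q : Fin c → Fin c → k) : Prop where
  inv : ∀ i j, i ≠ j → Q j i = (Q i j)⁻¹
  ne : ∀ i j, Q i j ≠ 0
  pw : ∀ i j, Q i j ^ a = 1

variable {a : ℕ} {Q : Fin c → Fin c → k}

lemma prod_cf (i : Fin c) (u v : ℤ) (p) :
    ∏ j ∈ p, cf Q i u v j = sg k i p * lam Q i p ^ u * rho Q i p ^ v := by
  unfold sg lam rho
  rw [← Finset.prod_zpow, ← Finset.prod_zpow, ← Finset.prod_mul_distrib,
    ← Finset.prod_mul_distrib]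
  refine Finset.prod_congr rfl fun j _ => ?_
  unfold cf
  rcases lt_trichotomy j i with h | h | h
  · simp [h, h.not_gt]
  · simp [h]
  · simp [h, h.not_gt]

lemma sg_sq (i : Fin c) (p) : sg k i p * sg k i p = 1 := by
  unfold sg
  rw [← Finset.prod_mul_distrib]
  apply Finset.prod_eq_one
  intro j _; split_ifs <;> simp

lemma lam_ne (hQ : QM a Q) (i : Fin c) (p) : lam Q i p ≠ 0 := by
  unfold lam; rw [Finset.prod_ne_zero_iff]; intro j _; split_ifs <;> simp [hQ.ne]
lemma rho_ne (hQ : QM a Q) (i : Fin c) (p) : rho Q i p ≠ 0 := by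
  unfold rho; rw [Finset.prod_ne_zero_iff]; intro j _; split_ifs <;> simp [hQ.ne]

lemma prod_tog_one (i : Fin c) (p) (g : Fin c → k) (hg : g i = 1) :
    ∏ j ∈ tog i p, g j = ∏ j ∈ p, g j := by
  by_cases h : i ∈ p
  · rw [prod_tog_mem h, hg, one_mul]
  · rw [prod_tog_notMem h, hg, one_mul]

lemma sg_tog (i : Fin c) (p) : sg k i (tog i p) = sg k i p := prod_tog_one i p _ (by simp)
lemma lam_tog (i : Fin c) (p) : lam Q i (tog i p) = lam Q i p := prod_tog_one i p _ (by simp)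
lemma rho_tog (i : Fin c) (p) : rho Q i (tog i p) = rho Q i p := prod_tog_one i p _ (by simp)

lemma cf_ne (hQ : QM a Q) (i : Fin c) (u v : ℤ) (j) : cf Q i u v j ≠ 0 := by
  unfold cf; split_ifs <;> simp [zpow_ne_zero, hQ.ne]

/-- weight sign -/
def ws (up : Bool) : ℤ := if up then 1 else -1

lemma eta_zpow (up : Bool) (x : k) (n : ℤ) : eta up (x ^ n) = x ^ (- ws up * n) := by
  cases up <;> simp [eta, ws]

lemma eta_neg (up : Bool) (x : k) : eta up (-x) = - eta up x := by
  cases up <;> simp [eta, inv_neg]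

/-- key commutation -/
lemma key_anticomm (hQ : QM a Q) {i j : Fin c} (hij : i ≠ j) (up up' : Bool) (u v u' v' : ℤ)
    (T T' : Module.End k V)
    (hw : ∀ x : k, x ≠ 0 → x ^ a = 1 → x ^ (u + v) = x ^ ws up)
    (hw' : ∀ x : k, x ≠ 0 → x ^ a = 1 → x ^ (u' + v') = x ^ ws up')
    (HT : T * T' = (Q i j) ^ (u * u' - v * v') • (T' * T)) :
    op up i (cf Q i u v) T * op up' j (cf Q j u' v') T' =
      - (op up' j (cf Q j u' v') T' * op up i (cf Q i u v) T) := by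
  apply op_anticomm hij _ _ _ _ _ _ (cf_ne hQ _ _ _ _) (cf_ne hQ _ _ _ _)
  rw [HT, smul_smul]
  have hx0 := hQ.ne i j
  have h1 := hw (Q i j) hx0 (hQ.pw i j)
  have h2 := hw' (Q i j) hx0 (hQ.pw i j)
  have hinv := hQ.inv i j hij
  rw [← neg_smul]
  congr 1
  rcases lt_or_gt_of_ne hij with h | h
  · simp only [cf, h, h.not_gt, if_true, if_false, eta_neg, eta_zpow]
    generalize Q i j = x at *
    rw [neg_mul, neg_inj, ← zpow_add₀ hx0]
    have e1 : x ^ (ws up * u') = x ^ ((u + v) * u') := by rw [zpow_mul, ← h1, ← zpow_mul]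
    have e2 : x ^ (ws up' * v) = x ^ ((u' + v') * v) := by rw [zpow_mul, ← h2, ← zpow_mul]
    have : x ^ (-ws up * u' + (u * u' - v * v')) = (x ^ (ws up * u'))⁻¹ * x ^ (u * u' - v * v') := by
      rw [← zpow_neg, ← zpow_add₀ hx0]; congr 1; ring
    rw [this, e1, neg_mul, zpow_neg, e2, ← zpow_neg, ← zpow_neg, ← zpow_add₀ hx0]
    congr 1; ring
  · simp only [cf, h, h.not_gt, if_true, if_false, eta_neg, eta_zpow, hinv]
    generalize Q i j = x at *
    simp only [inv_zpow', neg_neg]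
    rw [← zpow_add₀ hx0]
    have e1 : x ^ (ws up * v') = x ^ ((u + v) * v') := by rw [zpow_mul, ← h1, ← zpow_mul]
    have e2 : x ^ (ws up' * u) = x ^ ((u' + v') * u) := by rw [zpow_mul, ← h2, ← zpow_mul]
    have : x ^ (-(-ws up * v') + (u * u' - v * v')) = x ^ (ws up * v') * x ^ (u * u' - v * v') := by
      rw [← zpow_add₀ hx0]; congr 1; ring
    have t : -(-ws up' * u) = ws up' * u := by ring
    rw [this, e1, t, e2, ← zpow_add₀ hx0]
    congr 1; ring

end Op
end QCIProof

namespace QCIProof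

section Anti
variable {E : Type*} [Ring E]

/-- anticommuting -/
def Anti (x y : E) : Prop := x * y = - (y * x)

lemma Anti.symm {x y : E} (h : Anti x y) : Anti y x := by
  unfold Anti at *; rw [h, neg_neg]
lemma Anti.sub_left {x x' y : E} (h : Anti x y) (h' : Anti x' y) : Anti (x - x') y := by
  unfold Anti at *; rw [sub_mul, mul_sub, h, h']; abel
lemma Anti.add_left {x x' y : E} (h : Anti x y) (h' : Anti x' y) : Anti (x + x') y := by
  unfold Anti at *; rw [add_mul, mul_add, h, h']; abel
lemma Anti.neg_left {x y : E} (h : Anti x y) : Anti (-x) y := by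
  unfold Anti at *; rw [neg_mul, mul_neg, h]
lemma Anti.sum_left {ι : Type*} {s : Finset ι} {f : ι → E} {y : E} (h : ∀ i ∈ s, Anti (f i) y) :
    Anti (∑ i ∈ s, f i) y := by
  unfold Anti at *
  rw [Finset.sum_mul, Finset.mul_sum, ← Finset.sum_neg_distrib]
  exact Finset.sum_congr rfl h
lemma Anti.sub_right {x x' y : E} (h : Anti y x) (h' : Anti y x') : Anti y (x - x') :=
  (h.symm.sub_left h'.symm).symm
lemma Anti.add_right {x x' y : E} (h : Anti y x) (h' : Anti y x') : Anti y (x + x') :=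
  (h.symm.add_left h'.symm).symm
lemma Anti.sum_right {ι : Type*} {s : Finset ι} {f : ι → E} {y : E} (h : ∀ i ∈ s, Anti y (f i)) :
    Anti y (∑ i ∈ s, f i) :=
  (Anti.sum_left fun i hi => (h i hi).symm).symm

lemma sum_sq_zero {ι : Type*} [DecidableEq ι] (D : ι → E) (s : Finset ι)
    (h : ∀ i j, i ≠ j → Anti (D i) (D j)) (h0 : ∀ i, D i * D i = 0) :
    (∑ i ∈ s, D i) * (∑ i ∈ s, D i) = 0 := by
  induction s using Finset.induction_on with
  | empty => simp
  | insert i s hi ih =>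
    rw [Finset.sum_insert hi, add_mul, mul_add, mul_add, ih, h0]
    have : Anti (D i) (∑ j ∈ s, D j) := Anti.sum_right fun j hj => h i j (by rintro rfl; exact hi hj)
    rw [this]; abel

lemma Anti.comm_mul {x y Y Y' : E} (h : Anti x y) (h1 : Commute Y Y') (h2 : Commute x Y')
    (h3 : Commute y Y) : Anti (Y * x) (Y' * y) := by
  unfold Anti at *
  calc Y * x * (Y' * y) = Y * (x * Y') * y := by noncomm_ring
    _ = Y * Y' * (x * y) := by rw [h2.eq]; noncomm_ring
    _ = - (Y' * (Y * y) * x) := by rw [h, h1.eq]; noncomm_ring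
    _ = _ := by rw [← h3.eq]; noncomm_ring

end Anti

lemma qpow {k E : Type*} [Field k] [Ring E] [Algebra k E] {A B : E} {x : k}
    (h : A * B = x • (B * A)) (m n : ℕ) : A ^ m * B ^ n = x ^ (m * n) • (B ^ n * A ^ m) := by
  have h1 : ∀ n : ℕ, A * B ^ n = x ^ n • (B ^ n * A) := by
    intro n
    induction n with
    | zero => simp
    | succ n ih =>
      rw [pow_succ, ← mul_assoc, ih, smul_mul_assoc, mul_assoc, h, mul_smul_comm, smul_smul,
        pow_succ, mul_assoc]
  induction m with
  | zero => simp
  | succ m ih =>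
    rw [pow_succ, mul_assoc, h1, mul_smul_comm, ← mul_assoc, ih, smul_mul_assoc, smul_smul,
      mul_assoc, ← pow_add]
    congr 2; ring

section Dat
variable {c : ℕ} {k : Type} [Field k] {V : Type} [AddCommGroup V] [Module k V]

/-- the data of left and right actions -/
structure Dat (a : ℕ) (Q : Fin c → Fin c → k) (L R : Fin c → Module.End k V) : Prop where
  LL : ∀ i j, i ≠ j → L i * L j = Q i j • (L j * L i)
  RR : ∀ i j, i ≠ j → R i * R j = Q j i • (R j * R i)
  LR : ∀ i j, Commute (L i) (R j)
  La : ∀ i, L i ^ a = 0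
  Ra : ∀ i, R i ^ a = 0

variable {a : ℕ} {Q : Fin c → Fin c → k} {L R : Fin c → Module.End k V}

variable (Q L R) in
/-- first kind of differential -/
def dA (i : Fin c) : Module.End k (Finset (Fin c) → V) :=
  op true i (cf Q i 1 0) (L i) - op true i (cf Q i 0 1) (R i)

variable (a Q L R) in
/-- second kind of differential -/
def dB (i : Fin c) : Module.End k (Finset (Fin c) → V) :=
  ∑ u ∈ Finset.range a,
    op false i (cf Q i (u : ℤ) ((a - 1 - u : ℕ) : ℤ)) (L i ^ u * R i ^ (a - 1 - u))

lemma HT_of (hQ : QM a Q) (hD : Dat a Q L R) {i j : Fin c} (hij : i ≠ j) (u : ℕ) (v : ℤ)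
    (S : Module.End k V)
    (hS : S * R j = (Q i j) ^ (-v) • (R j * S)) (hSL : Commute S (L j)) (u' v' : ℕ) :
    (L i ^ u * S) * (L j ^ u' * R j ^ v') =
      (Q i j) ^ ((u : ℤ) * u' - v * v') • ((L j ^ u' * R j ^ v') * (L i ^ u * S)) := by
  have hx := hQ.ne i j
  have h1 := qpow (hD.LL i j hij) u u'
  have h2 := qpow hS 1 v'
  rw [pow_one, one_mul] at h2
  have h3 : Commute (L i ^ u) (R j ^ v') := (hD.LR i j).pow_pow _ _
  calc (L i ^ u * S) * (L j ^ u' * R j ^ v') = L i ^ u * (S * L j ^ u') * R j ^ v' := by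
        noncomm_ring
    _ = (L i ^ u * L j ^ u') * (S * R j ^ v') := by
        rw [(hSL.pow_right u').eq]; noncomm_ring
    _ = ((Q i j) ^ (u * u') * ((Q i j) ^ (-v)) ^ v') •
          (L j ^ u' * (L i ^ u * R j ^ v') * S) := by
        rw [h1, h2, smul_mul_smul_comm]; congr 1
    _ = _ := by
        rw [h3.eq]
        congr 1
        · rw [sub_eq_add_neg, zpow_add₀ hx, ← zpow_natCast (Q i j ^ (-v)), ← zpow_mul,
            ← zpow_natCast]
          push_cast; congr 2; ring

lemma ws_down_cond {u : ℕ} (hu : u < a) (x : k) (hx : x ≠ 0) (h : x ^ a = 1) :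
    x ^ ((u : ℤ) + ((a - 1 - u : ℕ) : ℤ)) = x ^ ws false := by
  have : (u : ℤ) + ((a - 1 - u : ℕ) : ℤ) = a + (-1) := by omega
  rw [this, zpow_add₀ hx, zpow_natCast, h, one_mul]; rfl

/-- general operator anticommutes with `dA`, `dB`. -/
lemma gen_anti (hQ : QM a Q) (hD : Dat a Q L R) {i j : Fin c} (hij : i ≠ j) (up : Bool)
    (u : ℕ) (v : ℤ) (S : Module.End k V)
    (hw : ∀ x : k, x ≠ 0 → x ^ a = 1 → x ^ ((u : ℤ) + v) = x ^ ws up)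
    (hS : S * R j = (Q i j) ^ (-v) • (R j * S)) (hSL : Commute S (L j)) :
    Anti (op up i (cf Q i u v) (L i ^ u * S)) (dA Q L R j) ∧
    Anti (op up i (cf Q i u v) (L i ^ u * S)) (dB a Q L R j) := by
  have H := HT_of hQ hD hij u v S hS hSL
  refine ⟨Anti.sub_right ?_ ?_, Anti.sum_right fun u' hu' => ?_⟩
  · refine key_anticomm hQ hij _ _ _ _ _ _ _ _ hw ?_ ?_
    · intro x _ _; simp [ws]
    · simpa using H 1 0
  · refine key_anticomm hQ hij _ _ _ _ _ _ _ _ hw ?_ ?_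
    · intro x _ _; simp [ws]
    · simpa using H 0 1
  · refine key_anticomm hQ hij _ _ _ _ _ _ _ _ hw ?_ ?_
    · intro x hx h; exact ws_down_cond (Finset.mem_range.1 hu') x hx h
    · exact_mod_cast H u' (a - 1 - u')

lemma Rpow_cond (hQ : QM a Q) (hD : Dat a Q L R) {i j : Fin c} (hij : i ≠ j) (v : ℕ) :
    R i ^ v * R j = (Q i j) ^ (-(v : ℤ)) • (R j * R i ^ v) := by
  have := qpow (hD.RR i j hij) v 1
  rw [pow_one, mul_one] at this
  rw [this, hQ.inv i j hij, zpow_neg, zpow_natCast, inv_pow]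

lemma dA_anti (hQ : QM a Q) (hD : Dat a Q L R) {i j : Fin c} (hij : i ≠ j) :
    Anti (dA Q L R i) (dA Q L R j) ∧ Anti (dA Q L R i) (dB a Q L R j) := by
  have h1 := gen_anti hQ hD hij true 1 0 (R i ^ 0) (by intro x _ _; simp [ws])
    (Rpow_cond hQ hD hij 0) ((hD.LR j i).symm.pow_left 0)
  have h2 := gen_anti hQ hD hij true 0 1 (R i ^ 1) (by intro x _ _; simp [ws])
    (Rpow_cond hQ hD hij 1) ((hD.LR j i).symm.pow_left 1)
  simp only [pow_one, pow_zero, mul_one, one_mul, Nat.cast_one, Nat.cast_zero] at h1 h2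
  exact ⟨h1.1.sub_left h2.1, h1.2.sub_left h2.2⟩

lemma dB_anti (hQ : QM a Q) (hD : Dat a Q L R) {i j : Fin c} (hij : i ≠ j) :
    Anti (dB a Q L R i) (dB a Q L R j) := by
  refine Anti.sum_left fun u hu => ?_
  exact (gen_anti hQ hD hij false u _ (R i ^ (a - 1 - u))
    (fun x hx h => ws_down_cond (Finset.mem_range.1 hu) x hx h)
    (Rpow_cond hQ hD hij _) ((hD.LR j i).symm.pow_left _)).2

lemma dA_sq (i : Fin c) : dA Q L R i * dA Q L R i = 0 := by
  simp [dA, sub_mul, mul_sub, op_same_up]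

lemma dB_sq (i : Fin c) : dB a Q L R i * dB a Q L R i = 0 := by
  simp [dB, Finset.sum_mul, Finset.mul_sum, op_same_up]

lemma dA_apply (i : Fin c) (φ : Finset (Fin c) → V) (p) :
    dA Q L R i φ p = if i ∈ p then
      sg k i p • (lam Q i p • L i - rho Q i p • R i) (φ (tog i p)) else 0 := by
  simp only [dA, LinearMap.sub_apply, Pi.sub_apply, op_apply, prod_cf]
  by_cases h : i ∈ p
  · simp [h, smul_sub, mul_smul]
  · simp [h]

lemma dB_apply (i : Fin c) (φ : Finset (Fin c) → V) (p) :
    dB a Q L R i φ p = if i ∈ p then 0 else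
      sg k i p • (∑ u ∈ Finset.range a, (lam Q i p • L i) ^ u * (rho Q i p • R i) ^ (a - 1 - u))
        (φ (tog i p)) := by
  simp only [dB, LinearMap.sum_apply, Finset.sum_apply, op_apply, prod_cf]
  by_cases h : i ∈ p
  · simp [h]
  · simp only [h, Bool.false_eq_true, iff_self, if_true, if_false, Finset.smul_sum]
    refine Finset.sum_congr rfl fun u _ => ?_
    rw [smul_pow, smul_pow, smul_mul_smul_comm, LinearMap.smul_apply, smul_smul, mul_assoc,
      zpow_natCast, zpow_natCast]

lemma dA_dB (hD : Dat a Q L R) (i : Fin c) : dA Q L R i * dB a Q L R i = 0 := by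
  refine LinearMap.ext fun φ => ?_
  funext p
  rw [Module.End.mul_apply, dA_apply, dB_apply]
  by_cases h : i ∈ p
  · simp only [h, if_true, mem_tog_self, not_true, if_false, tog_tog, sg_tog, lam_tog, rho_tog,
      map_smul]
    rw [← Module.End.mul_apply, Commute.mul_geom_sum₂, smul_pow, smul_pow, hD.La, hD.Ra]
    · simp
    · exact ((hD.LR i i).smul_left _).smul_right _
  · simp [h]

lemma dB_dA (hD : Dat a Q L R) (i : Fin c) : dB a Q L R i * dA Q L R i = 0 := by
  refine LinearMap.ext fun φ => ?_
  funext p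
  rw [Module.End.mul_apply, dB_apply, dA_apply]
  by_cases h : i ∈ p
  · simp [h]
  · simp only [h, if_true, mem_tog_self, not_false_iff, if_false, tog_tog, sg_tog, lam_tog, rho_tog,
      map_smul]
    have hc : Commute (lam Q i p • L i) (rho Q i p • R i) :=
      ((hD.LR i i).smul_left _).smul_right _
    rw [← Module.End.mul_apply, hc.geom_sum₂_mul, smul_pow, smul_pow, hD.La, hD.Ra]
    simp

end Dat
end QCIProof

namespace QCIProof

/-- cochains -/
abbrev Coch (c : ℕ) (V : Type) : Type := (Fin c →₀ ℕ) → (Finset (Fin c) → V)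

noncomputable section Cx
variable {c : ℕ} {k : Type} [Field k] {V : Type} [AddCommGroup V] [Module k V]

/-- pointwise lift -/
def lft (T : Module.End k (Finset (Fin c) → V)) : Module.End k (Coch c V) :=
  LinearMap.compLeft T _

lemma lft_apply (T : Module.End k (Finset (Fin c) → V)) (φ : Coch c V) (β) :
    lft T φ β = T (φ β) := rfl

variable (k V) in
/-- shift -/
def ysh (i : Fin c) : Module.End k (Coch c V) where
  toFun φ β := if β i = 0 then 0 else φ (β - Finsupp.single i 1)
  map_add' x y := by funext β; simp only [Pi.add_apply]; split_ifs <;> simp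
  map_smul' r x := by
    funext β
    simp only [Pi.smul_apply, RingHom.id_apply]
    split_ifs <;> simp

variable (k V) in
/-- inverse shift -/
def yinv (i : Fin c) : Module.End k (Coch c V) where
  toFun φ β := φ (β + Finsupp.single i 1)
  map_add' x y := rfl
  map_smul' r x := rfl

lemma ysh_apply (i : Fin c) (φ : Coch c V) (β) :
    ysh k V i φ β = if β i = 0 then 0 else φ (β - Finsupp.single i 1) := rfl
lemma yinv_apply (i : Fin c) (φ : Coch c V) (β) :
    yinv k V i φ β = φ (β + Finsupp.single i 1) := rfl

lemma ysh_add (i : Fin c) (φ : Coch c V) (β) :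
    ysh k V i φ (β + Finsupp.single i 1) = φ β := by
  simp [ysh_apply]

lemma exists_add {i : Fin c} {β : Fin c →₀ ℕ} (h : β i ≠ 0) :
    ∃ γ, β = γ + Finsupp.single i 1 := by
  refine ⟨β - Finsupp.single i 1, ?_⟩
  ext j
  by_cases hj : j = i
  · subst hj; simp; omega
  · simp [Finsupp.single_apply, Ne.symm hj]

lemma ysh_zero {i : Fin c} {φ : Coch c V} {β} (h : β i = 0) : ysh k V i φ β = 0 := by
  simp [ysh_apply, h]

lemma lft_ysh (T : Module.End k (Finset (Fin c) → V)) (i) : Commute (lft T) (ysh k V i) := by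
  refine LinearMap.ext fun φ => funext fun β => ?_
  simp only [Module.End.mul_apply, lft_apply, ysh_apply]
  split_ifs <;> simp

lemma lft_yinv (T : Module.End k (Finset (Fin c) → V)) (i) : Commute (lft T) (yinv k V i) := rfl

lemma ysh_comm (i j : Fin c) : Commute (ysh k V i) (ysh k V j) := by
  by_cases hij : i = j
  · subst hij; rfl
  refine LinearMap.ext fun φ => funext fun β => ?_
  have hij' := Ne.symm hij
  simp only [Module.End.mul_apply, ysh_apply, Finsupp.tsub_apply, Finsupp.single_apply, hij, hij',
    if_false, tsub_zero]
  rw [tsub_right_comm]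
  split_ifs <;> rfl

lemma yinv_ysh_comm {i j : Fin c} (hij : i ≠ j) : Commute (yinv k V i) (ysh k V j) := by
  refine LinearMap.ext fun φ => funext fun β => ?_
  simp only [Module.End.mul_apply, ysh_apply, yinv_apply, Finsupp.add_apply, Finsupp.single_apply,
    hij, if_false, add_zero]
  by_cases h : β j = 0
  · simp [h]
  · simp only [h, if_false]
    obtain ⟨γ, rfl⟩ := exists_add h
    rw [add_right_comm]; simp

lemma yinv_ysh (i : Fin c) : yinv k V i * ysh k V i = 1 := by
  refine LinearMap.ext fun φ => funext fun β => ?_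
  simp only [Module.End.mul_apply, yinv_apply, ysh_add]; rfl

lemma ysh_yinv_apply (i : Fin c) (φ : Coch c V) (β) :
    ysh k V i (yinv k V i φ) β = if β i = 0 then 0 else φ β := by
  split_ifs with h
  · exact ysh_zero h
  · obtain ⟨γ, rfl⟩ := exists_add h
    rw [ysh_add, yinv_apply]

lemma lft_mul (S T : Module.End k (Finset (Fin c) → V)) : lft S * lft T = lft (S * T) := rfl
lemma lft_add (S T : Module.End k (Finset (Fin c) → V)) : lft S + lft T = lft (S + T) := rfl
lemma lft_zero : lft (0 : Module.End k (Finset (Fin c) → V)) = 0 := rfl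
lemma lft_anti {S T : Module.End k (Finset (Fin c) → V)} (h : Anti S T) :
    Anti (lft S) (lft T) := by
  unfold Anti at *; rw [lft_mul, h]; rfl

variable (a : ℕ) (Q : Fin c → Fin c → k) (L R : Fin c → Module.End k V)

/-- partial differential -/
def DD (i : Fin c) : Module.End k (Coch c V) :=
  lft (dA Q L R i) + ysh k V i * lft (dB a Q L R i)

/-- total differential -/
def dd : Module.End k (Coch c V) := ∑ i, DD a Q L R i

variable {a Q L R}

lemma dd_apply (φ : Coch c V) (β) : dd a Q L R φ β =
    ∑ i, (dA Q L R i (φ β) + if β i = 0 then 0 else dB a Q L R i (φ (β - Finsupp.single i 1))) := by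
  simp only [dd, LinearMap.sum_apply, Finset.sum_apply, DD, LinearMap.add_apply, Pi.add_apply,
    Module.End.mul_apply, lft_apply, ysh_apply]

lemma anti_DD {s : Module.End k (Finset (Fin c) → V)} {Y : Module.End k (Coch c V)} {j : Fin c}
    (h1 : Anti s (dA Q L R j)) (h2 : Anti s (dB a Q L R j))
    (hY : ∀ T : Module.End k (Finset (Fin c) → V), Commute (lft T) Y)
    (hYY : Commute Y (ysh k V j)) :
    Anti (Y * lft s) (DD a Q L R j) := by
  refine Anti.add_right ?_ ?_
  · have := (lft_anti h1).comm_mul (Y := Y) (Y' := 1) (Commute.one_right _) (Commute.one_right _)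
      (hY _)
    simpa using this
  · exact (lft_anti h2).comm_mul hYY (lft_ysh _ _) (hY _)

lemma DD_anti (hQ : QM a Q) (hD : Dat a Q L R) {i j : Fin c} (hij : i ≠ j) :
    Anti (DD a Q L R i) (DD a Q L R j) := by
  refine Anti.add_left ?_ ?_
  · have := anti_DD (a := a) (Y := 1) (dA_anti hQ hD hij).1 (dA_anti hQ hD hij).2
      (fun _ => Commute.one_right _) (Commute.one_left _)
    simpa using this
  · exact anti_DD ((dA_anti hQ hD hij.symm).2.symm) (dB_anti hQ hD hij)
      (fun T => lft_ysh T i) (ysh_comm i j)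

lemma DD_sq (hD : Dat a Q L R) (i : Fin c) : DD a Q L R i * DD a Q L R i = 0 := by
  unfold DD
  rw [add_mul, mul_add, mul_add, lft_mul, dA_sq, lft_zero, ← mul_assoc, (lft_ysh _ i).eq,
    mul_assoc, lft_mul, dA_dB hD, mul_assoc, lft_mul, dB_dA hD, lft_zero,
    mul_assoc, ← mul_assoc (lft _) (ysh k V i), (lft_ysh _ i).eq, mul_assoc (ysh k V i), lft_mul,
    dB_sq, lft_zero]
  simp

lemma dd_sq (hQ : QM a Q) (hD : Dat a Q L R) : dd a Q L R * dd a Q L R = 0 :=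
  sum_sq_zero _ _ (fun _ _ h => DD_anti hQ hD h) (DD_sq hD)

lemma dd_dd (hQ : QM a Q) (hD : Dat a Q L R) (φ) : dd a Q L R (dd a Q L R φ) = 0 := by
  rw [← Module.End.mul_apply, dd_sq hQ hD]; rfl

lemma dd_ysh (i : Fin c) (φ : Coch c V) :
    dd a Q L R (ysh k V i φ) = ysh k V i (dd a Q L R φ) := by
  have : Commute (dd a Q L R) (ysh k V i) := by
    unfold dd
    refine Commute.sum_left _ _ _ fun j _ => ?_
    exact (lft_ysh _ i).add_left ((ysh_comm j i).mul_left (lft_ysh _ i))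
  exact congrArg (fun F => F φ) this.eq

/-- homogeneous cochains -/
def Dg (n : ℕ) (φ : Coch c V) : Prop :=
  ∀ β p, φ β p ≠ 0 → 2 * β.degree + p.card = n

lemma Dg.zero (n : ℕ) : Dg n (0 : Coch c V) := fun β p h => absurd rfl h
lemma Dg.add {n : ℕ} {φ ψ : Coch c V} (h : Dg n φ) (h' : Dg n ψ) : Dg n (φ + ψ) := by
  intro β p hp
  by_cases h0 : φ β p = 0
  · exact h' β p (by simpa [h0] using hp)
  · exact h β p h0
lemma Dg.neg {n : ℕ} {φ : Coch c V} (h : Dg n φ) : Dg n (-φ) := by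
  intro β p hp
  exact h β p (by simpa using hp)
lemma Dg.sub {n : ℕ} {φ ψ : Coch c V} (h : Dg n φ) (h' : Dg n ψ) : Dg n (φ - ψ) := by
  rw [sub_eq_add_neg]; exact h.add h'.neg
lemma Dg.sum {ι : Type*} {s : Finset ι} {n : ℕ} {φ : ι → Coch c V} (h : ∀ i ∈ s, Dg n (φ i)) :
    Dg n (∑ i ∈ s, φ i) := by
  classical
  induction s using Finset.induction_on with
  | empty => simpa using Dg.zero n
  | insert i s hi ih =>
    rw [Finset.sum_insert hi]
    exact (h i (by simp)).add (ih fun j hj => h j (by simp [hj]))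

lemma Dg.ysh {n : ℕ} {φ : Coch c V} (h : Dg n φ) (i) : Dg (n + 2) (ysh k V i φ) := by
  intro β p hp
  by_cases h0 : β i = 0
  · rw [ysh_zero h0] at hp; exact absurd rfl hp
  · obtain ⟨γ, rfl⟩ := exists_add h0
    rw [ysh_add] at hp
    have := h γ p hp
    simp only [map_add, Finsupp.degree_single]; omega

lemma Dg.yinv {n : ℕ} {φ : Coch c V} (h : Dg (n + 2) φ) (i) : Dg n (yinv k V i φ) := by
  intro β p hp
  have := h _ p hp
  simp only [map_add, Finsupp.degree_single] at this; omega

lemma op_ne {up : Bool} {i : Fin c} {g : Fin c → k} {T : Module.End k V} {φ p}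
    (h : op up i g T φ p ≠ 0) : (i ∈ p ↔ up = true) ∧ φ (tog i p) ≠ 0 := by
  rw [op_apply] at h
  by_cases h0 : (i ∈ p ↔ up = true)
  · refine ⟨h0, fun h1 => ?_⟩
    simp [h1] at h
  · simp [h0] at h

lemma Dg.op_up {n : ℕ} {φ : Coch c V} (h : Dg n φ) (i) (g : Fin c → k) (T : Module.End k V) :
    Dg (n + 1) (lft (op true i g T) φ) := by
  intro β p hp
  obtain ⟨h1, h2⟩ := op_ne hp
  have := h _ _ h2
  have := card_tog_mem (i := i) (p := p) (by simpa using h1)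
  omega

lemma Dg.op_down {n : ℕ} {φ : Coch c V} (h : Dg (n + 1) φ) (i) (g : Fin c → k)
    (T : Module.End k V) : Dg n (lft (op false i g T) φ) := by
  intro β p hp
  obtain ⟨h1, h2⟩ := op_ne hp
  have := h _ _ h2
  have := card_tog_notMem (i := i) (p := p) (by simpa using h1)
  omega

lemma lft_sum_apply {ι : Type*} (s : Finset ι) (f : ι → Module.End k (Finset (Fin c) → V))
    (φ : Coch c V) : lft (∑ i ∈ s, f i) φ = ∑ i ∈ s, lft (f i) φ := by
  funext β; simp [lft_apply]

lemma Dg.dd {n : ℕ} {φ : Coch c V} (h : Dg n φ) : Dg (n + 1) (dd a Q L R φ) := by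
  unfold QCIProof.dd
  rw [LinearMap.sum_apply]
  refine Dg.sum fun i _ => ?_
  unfold DD
  rw [LinearMap.add_apply]
  refine Dg.add ?_ ?_
  · exact (h.op_up i (cf Q i 1 0) (L i)).sub (h.op_up i (cf Q i 0 1) (R i))
  · have e : QCIProof.ysh k V i * lft (dB a Q L R i) = lft (dB a Q L R i) * QCIProof.ysh k V i := (lft_ysh _ _).eq.symm
    rw [e, Module.End.mul_apply]
    unfold dB
    rw [lft_sum_apply]
    exact Dg.sum fun u _ => (h.ysh i).op_down (n := n + 1) i _ _

/-- homogeneous projection -/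
def hp (n : ℕ) (φ : Coch c V) : Coch c V :=
  fun β p => if 2 * β.degree + p.card = n then φ β p else 0

variable (Q a L R) in
/-- vanishing of cohomology in degree `n+1`. -/
def HV (n : ℕ) : Prop := ∀ z : Coch c V, Dg (n + 1) z → dd a Q L R z = 0 →
  ∃ v, Dg n v ∧ z = dd a Q L R v

end Cx
end QCIProof

namespace QCIProof

section Gap
variable {c : ℕ} {k : Type} [Field k] {V : Type} [AddCommGroup V] [Module k V]
  {a : ℕ} {Q : Fin c → Fin c → k} {L R : Fin c → Module.End k V}

/-- cochains divisible by the variables in `J`. -/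
def II (J : Finset (Fin c)) (φ : Coch c V) : Prop := ∀ β, (∀ i ∈ J, β i = 0) → φ β = 0

lemma II.add {J : Finset (Fin c)} {φ ψ : Coch c V} (h : II J φ) (h' : II J ψ) : II J (φ + ψ) := by
  intro β hβ; simp [h β hβ, h' β hβ]
lemma II.neg {J : Finset (Fin c)} {φ : Coch c V} (h : II J φ) : II J (-φ) := by
  intro β hβ; simp [h β hβ]
lemma II.sub {J : Finset (Fin c)} {φ ψ : Coch c V} (h : II J φ) (h' : II J ψ) : II J (φ - ψ) := by
  intro β hβ; simp [h β hβ, h' β hβ]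

lemma II.dd {J : Finset (Fin c)} {φ : Coch c V} (h : II J φ) : II J (dd a Q L R φ) := by
  intro β hβ
  rw [dd_apply]
  refine Finset.sum_eq_zero fun i _ => ?_
  rw [h β hβ, map_zero, zero_add]
  split_ifs with h0
  · rfl
  · rw [h, map_zero]
    intro j hj
    simp [hβ j hj]

lemma II.mono {J : Finset (Fin c)} {φ : Coch c V} (h : II J φ) (i) : II (insert i J) φ :=
  fun β hβ => h β fun j hj => hβ j (by simp [hj])

lemma II.of_ysh {J : Finset (Fin c)} {φ : Coch c V} {i : Fin c} (hi : i ∉ J)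
    (h : II J (ysh k V i φ)) : II J φ := by
  intro β hβ
  have := h (β + Finsupp.single i 1) (fun j hj => by
    have : i ≠ j := by rintro rfl; exact hi hj
    simp [hβ j hj, Finsupp.single_apply, this])
  rwa [ysh_add] at this

lemma II.ysh {J : Finset (Fin c)} {φ : Coch c V} (h : II J φ) (i) : II J (ysh k V i φ) := by
  intro β hβ
  rw [ysh_apply]
  split_ifs
  · rfl
  · exact h _ fun j hj => by simp [hβ j hj]

lemma II_ysh (J : Finset (Fin c)) (φ : Coch c V) (i) : II (insert i J) (ysh k V i φ) := by
  intro β hβ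
  exact ysh_zero (hβ i (by simp))

lemma II.split {J : Finset (Fin c)} {φ : Coch c V} {i : Fin c} (h : II (insert i J) φ) :
    II J (φ - QCIProof.ysh k V i (yinv k V i φ)) := by
  intro β hβ
  rw [Pi.sub_apply, ysh_yinv_apply]
  split_ifs with h0
  · rw [sub_zero]
    refine h β fun j hj => ?_
    rcases Finset.mem_insert.1 hj with rfl | hj
    · exact h0
    · exact hβ j hj
  · simp

variable (a Q L R) in
/-- relative vanishing -/
def PP (J : Finset (Fin c)) (n : ℕ) : Prop := ∀ z : Coch c V, Dg (n + 1) z →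
  II J (dd a Q L R z) → ∃ v, Dg n v ∧ II J (z - dd a Q L R v)

lemma PP_empty (n : ℕ) : PP a Q L R ∅ n ↔ HV a Q L R n := by
  have h : ∀ φ : Coch c V, II ∅ φ ↔ φ = 0 := fun φ =>
    ⟨fun h => funext fun β => h β (by simp), fun h β _ => by rw [h]; rfl⟩
  unfold PP HV
  simp only [h, sub_eq_zero]

lemma PP_univ {n : ℕ} (hn : c ≤ n) : PP a Q L R Finset.univ n := by
  intro z hz _
  refine ⟨0, Dg.zero _, ?_⟩
  rw [map_zero, sub_zero]
  intro β hβ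
  have hβ0 : β = 0 := by ext i; exact hβ i (Finset.mem_univ _)
  subst hβ0
  funext p
  by_contra h0
  have := hz _ _ h0
  have h2 := Finset.card_le_univ p
  simp at this h2
  omega

lemma PP_alpha (hQ : QM a Q) (hD : Dat a Q L R) {J : Finset (Fin c)} {i} (hi : i ∉ J) {n : ℕ}
    (h1 : PP a Q L R J n) (h2 : PP a Q L R J (n + 1)) : PP a Q L R (insert i J) (n + 1) := by
  intro w hw hdw
  have hs := hdw.split (k := k)
  set z := yinv k V i (dd a Q L R w) with hzdef
  have hz : Dg (n + 1) z := (hw.dd (a := a) (Q := Q) (L := L) (R := R)).yinv i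
  have hdz : II J (dd a Q L R z) := by
    have := hs.dd (a := a) (Q := Q) (L := L) (R := R)
    rw [map_sub, dd_dd hQ hD, zero_sub, dd_ysh] at this
    have := this.neg
    rw [neg_neg] at this
    exact this.of_ysh hi
  obtain ⟨v, hv, hv2⟩ := h1 z hz hdz
  have h3 : II J (dd a Q L R (w - ysh k V i v)) := by
    have e : dd a Q L R (w - ysh k V i v) = (dd a Q L R w - ysh k V i z) +
      ysh k V i (z - dd a Q L R v) := by
      rw [map_sub, dd_ysh, map_sub]; abel
    rw [e]
    exact hs.add (hv2.ysh i)
  obtain ⟨u, hu, hu2⟩ := h2 _ (hw.sub (hv.ysh i)) h3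
  refine ⟨u, hu, ?_⟩
  have e : w - dd a Q L R u = (w - ysh k V i v - dd a Q L R u) + ysh k V i v := by abel
  rw [e]
  exact (hu2.mono i).add (II_ysh J v i)

lemma PP_beta (hQ : QM a Q) (hD : Dat a Q L R) {J : Finset (Fin c)} {i} (hi : i ∉ J) {n : ℕ}
    (h1 : PP a Q L R J (n + 2)) (h2 : PP a Q L R (insert i J) (n + 1)) : PP a Q L R J n := by
  intro z hz hdz
  obtain ⟨w, hw, hw2⟩ := h1 (ysh k V i z) (hz.ysh i) (by rw [dd_ysh]; exact hdz.ysh i)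
  have hdw : II (insert i J) (dd a Q L R w) := by
    have e : dd a Q L R w = ysh k V i z - (ysh k V i z - dd a Q L R w) := by abel
    rw [e]; exact (II_ysh J z i).sub (hw2.mono i)
  obtain ⟨v, hv, hv2⟩ := h2 w hw hdw
  have hs := hv2.split (k := k)
  set u := yinv k V i (w - dd a Q L R v) with hu
  refine ⟨u, (hw.sub hv.dd).yinv i, ?_⟩
  have h3 := hs.dd (a := a) (Q := Q) (L := L) (R := R)
  rw [map_sub, map_sub, dd_dd hQ hD, sub_zero, dd_ysh] at h3
  refine II.of_ysh (k := k) hi ?_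
  have e : ysh k V i (z - dd a Q L R u) = (ysh k V i z - dd a Q L R w) +
    (dd a Q L R w - ysh k V i (dd a Q L R u)) := by rw [map_sub]; abel
  rw [e]; exact hw2.add h3

lemma gap_aux (hQ : QM a Q) (hD : Dat a Q L R) (m : ℕ) : ∀ J : Finset (Fin c), Jᶜ.card = m →
    (∃ n0, ∀ n ≥ n0, PP a Q L R J n) → ∀ n ≥ c, PP a Q L R J n := by
  induction m with
  | zero =>
    intro J hJ _ n hn
    rw [Finset.card_eq_zero, Finset.compl_eq_empty_iff] at hJ
    subst hJ
    exact PP_univ hn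
  | succ m ih =>
    intro J hJ ⟨n0, h⟩
    obtain ⟨i, hi⟩ := Finset.card_pos.1 (by omega : 0 < Jᶜ.card)
    have hi' : i ∉ J := by simpa using hi
    have hins := ih (insert i J) (by
        rw [Finset.compl_insert, Finset.card_erase_of_mem hi]; omega)
      ⟨n0 + 1, fun n hn => by
        obtain ⟨n, rfl⟩ : ∃ n', n = n' + 1 := ⟨n - 1, by omega⟩
        exact PP_alpha hQ hD hi' (h n (by omega)) (h (n + 1) (by omega))⟩
    have key : ∀ t : ℕ, ∀ n ≥ c, PP a Q L R J (n + 2 * t) → PP a Q L R J n := by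
      intro t
      induction t with
      | zero => intro n _ h; simpa using h
      | succ t iht =>
        intro n hn h
        refine iht n hn (PP_beta hQ hD hi' ?_ (hins _ (by omega)))
        have e : n + 2 * (t + 1) = n + 2 * t + 2 := by ring
        rwa [e] at h
    intro n hn
    exact key n0 n hn (h _ (by omega))

/-- gap lemma -/
lemma gap (hQ : QM a Q) (hD : Dat a Q L R) (h : ∃ n0, ∀ n ≥ n0, HV a Q L R n) :
    ∀ n ≥ c, HV a Q L R n := by
  intro n hn
  rw [← PP_empty]
  refine gap_aux hQ hD _ ∅ rfl ?_ n hn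
  obtain ⟨n0, h⟩ := h
  exact ⟨n0, fun n hn => (PP_empty n).2 (h n hn)⟩

end Gap
end QCIProof

namespace QCIProof

section Noeth
variable {c : ℕ} {k : Type} [Field k] {V : Type} [AddCommGroup V] [Module k V]
  {a : ℕ} {Q : Fin c → Fin c → k} {L R : Fin c → Module.End k V}

lemma hp_Dg (n : ℕ) (φ : Coch c V) : Dg n (hp n φ) := by
  intro β p h
  by_contra h0
  simp [hp, h0] at h

lemma hp_of_Dg {n : ℕ} {φ : Coch c V} (h : Dg n φ) : hp n φ = φ := by
  funext β p
  unfold hp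
  split_ifs with h0
  · rfl
  · by_contra h1
    exact h0 (h β p (Ne.symm h1))

lemma hp_add (n : ℕ) (φ ψ : Coch c V) : hp n (φ + ψ) = hp n φ + hp n ψ := by
  funext β p
  simp only [hp, Pi.add_apply]
  split_ifs <;> simp

lemma hp_smul (n : ℕ) (r : k) (φ : Coch c V) : hp n (r • φ) = r • hp n φ := by
  funext β p
  simp only [hp, Pi.smul_apply]
  split_ifs <;> simp

lemma hp_zero (n : ℕ) : hp n (0 : Coch c V) = 0 := by
  funext β p
  simp [hp]

lemma hp_sum {ι : Type*} (s : Finset ι) (n : ℕ) (φ : ι → Coch c V) :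
    hp n (∑ i ∈ s, φ i) = ∑ i ∈ s, hp n (φ i) := by
  classical
  induction s using Finset.induction_on with
  | empty => simp [hp_zero]
  | insert i s hi ih => rw [Finset.sum_insert hi, Finset.sum_insert hi, hp_add, ih]

lemma hp_ysh (n : ℕ) (φ : Coch c V) (i) : hp (n + 2) (ysh k V i φ) = ysh k V i (hp n φ) := by
  funext β p
  by_cases h0 : β i = 0
  · unfold hp; rw [ysh_zero h0, ysh_zero h0]; simp
  · obtain ⟨γ, rfl⟩ := exists_add h0
    have : (2 * (γ + Finsupp.single i 1).degree + p.card = n + 2) ↔ 2 * γ.degree + p.card = n := by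
      simp only [map_add, Finsupp.degree_single]; omega
    rw [ysh_add]
    simp only [hp, this, ysh_add]

lemma dd_zero_at {m : ℕ} {φ : Coch c V} (h : ∀ β p, 2 * β.degree + p.card = m → φ β p = 0) :
    ∀ β p, 2 * β.degree + p.card = m + 1 → dd a Q L R φ β p = 0 := by
  intro β p hp
  rw [dd_apply, Finset.sum_apply]
  refine Finset.sum_eq_zero fun i _ => ?_
  rw [Pi.add_apply, dA_apply]
  by_cases hi : i ∈ p
  · have h1 := card_tog_mem hi
    rw [h β (tog i p) (by omega)]
    by_cases h0 : β i = 0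
    · simp [h0]
    · simp [h0, dB_apply, hi]
  · by_cases h0 : β i = 0
    · simp [h0, hi]
    · obtain ⟨γ, rfl⟩ := exists_add h0
      have h1 := card_tog_notMem hi
      simp only [map_add, Finsupp.degree_single] at hp
      have e : γ + Finsupp.single i 1 - Finsupp.single i 1 = γ := by simp
      rw [e, if_neg h0, dB_apply, h γ (tog i p) (by omega)]
      simp [hi]

lemma dd_hp {m : ℕ} {φ : Coch c V} (h : dd a Q L R φ = 0) : dd a Q L R (hp m φ) = 0 := by
  funext β p
  by_contra h0
  have h1 := (hp_Dg m φ).dd (a := a) (Q := Q) (L := L) (R := R) β p h0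
  have h2 := dd_zero_at (a := a) (Q := Q) (L := L) (R := R) (m := m) (φ := φ - hp m φ)
    (fun β p hβ => by simp [hp, hβ]) β p h1
  rw [map_sub, h] at h2
  simp at h2
  exact h0 h2

noncomputable section
variable {d : ℕ} (b : Module.Basis (Fin d) k (Finset (Fin c) → V))

/-- comparison map from a free module over the polynomial ring. -/
def ee : (Fin d → MvPolynomial (Fin c) k) →ₗ[k] Coch c V where
  toFun f β := ∑ j, (f j).coeff β • b j
  map_add' x y := by funext β; simp [add_smul, Finset.sum_add_distrib]
  map_smul' r x := by funext β; simp [mul_smul, Finset.smul_sum]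

lemma ee_X (i : Fin c) (f : Fin d → MvPolynomial (Fin c) k) :
    ee b ((MvPolynomial.X i : MvPolynomial (Fin c) k) • f)
    = ysh k V i (ee b f) := by
  funext β
  by_cases h0 : β i = 0
  · rw [ysh_zero h0]
    simp [ee, MvPolynomial.coeff_X_mul', h0]
  · obtain ⟨γ, rfl⟩ := exists_add h0
    rw [ysh_add]
    simp [ee, MvPolynomial.coeff_X_mul']

lemma ee_surj {z : Coch c V} (s : Finset (Fin c →₀ ℕ)) (h : ∀ β ∉ s, z β = 0) :
    ∃ f, ee b f = z := by
  refine ⟨fun j => ∑ β ∈ s, MvPolynomial.monomial β (b.repr (z β) j), ?_⟩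
  funext β
  have : ∀ j, MvPolynomial.coeff β (∑ β ∈ s, MvPolynomial.monomial β (b.repr (z β) j))
      = b.repr (z β) j := by
    intro j
    rw [MvPolynomial.coeff_sum]
    simp only [MvPolynomial.coeff_monomial]
    rw [Finset.sum_ite_eq' s β]
    split_ifs with h1
    · rfl
    · simp [h β h1]
  simp only [ee, LinearMap.coe_mk, AddHom.coe_mk, this]
  exact b.sum_repr _

lemma ee_bdd (f : Fin d → MvPolynomial (Fin c) k) : ∃ N, ∀ n ≥ N, hp n (ee b f) = 0 := by
  refine ⟨2 * (∑ j, (f j).totalDegree) + c + 1, fun n hn => ?_⟩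
  funext β p
  unfold hp
  split_ifs with h
  · have hc : ∀ j, (f j).coeff β = 0 := by
      intro j
      by_contra h1
      have h2 := MvPolynomial.le_totalDegree (MvPolynomial.mem_support_iff.2 h1)
      have h3 : (f j).totalDegree ≤ ∑ j, (f j).totalDegree :=
        Finset.single_le_sum (f := fun j => (f j).totalDegree) (fun _ _ => Nat.zero_le _)
          (Finset.mem_univ j)
      have h4 := Finset.card_le_univ p
      simp only [Fintype.card_fin] at h4
      have h5 : (β.sum fun _ e => e) = β.degree := by
        rw [Finsupp.degree_eq_sum]
        exact Finsupp.sum_fintype _ _ (fun _ => rfl)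
      omega
    simp [ee, hc]
  · rfl

/-- pullback submodule -/
def pb (B : Submodule k (Coch c V)) (hB : ∀ i, ∀ z ∈ B, ysh k V i z ∈ B) :
    Submodule (MvPolynomial (Fin c) k) (Fin d → MvPolynomial (Fin c) k) where
  carrier := {f | ee b f ∈ B}
  add_mem' {x y} hx hy := by
    simp only [Set.mem_ofPred_eq, map_add] at *
    exact B.add_mem hx hy
  zero_mem' := by simp
  smul_mem' s f hf := by
    simp only [Set.mem_ofPred_eq] at *
    induction s using MvPolynomial.induction_on generalizing f with
    | C r =>
      have : (MvPolynomial.C r : MvPolynomial (Fin c) k) • f = r • f := by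
        funext j; simp [MvPolynomial.smul_eq_C_mul]
      rw [this, map_smul]; exact B.smul_mem _ hf
    | add p q hp hq =>
      rw [add_smul, map_add]; exact B.add_mem (hp f hf) (hq f hf)
    | mul_X p i hp =>
      rw [mul_smul]
      apply hp
      rw [ee_X]
      exact hB i _ hf

end

lemma Dg_finite {n : ℕ} {z : Coch c V} (hz : Dg n z) :
    ∃ s : Finset (Fin c →₀ ℕ), ∀ β ∉ s, z β = 0 := by
  have hf := Finsupp.finite_of_degree_le (σ := Fin c) n
  refine ⟨hf.toFinset, fun β hβ => ?_⟩
  funext p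
  by_contra h0
  have := hz β p h0
  apply hβ
  simp
  omega

/-- periodicity lemma -/
lemma noeth [FiniteDimensional k V] : ∃ n0, ∀ n ≥ n0, HV a Q L R n → HV a Q L R (n + 2) := by
  classical
  let b := Module.finBasis k (Finset (Fin c) → V)
  let K : Submodule k (Coch c V) := LinearMap.ker (dd a Q L R)
  have hK : ∀ i, ∀ z ∈ K, ysh k V i z ∈ K := by
    intro i z hz
    rw [LinearMap.mem_ker] at *
    rw [dd_ysh, hz, map_zero]
  obtain ⟨G, hG⟩ : (pb b K hK).FG := IsNoetherian.noetherian _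
  have hGK : ∀ g ∈ G, ee b g ∈ K := by
    intro g hg
    have : g ∈ pb b K hK := by rw [← hG]; exact Submodule.subset_span hg
    exact this
  let GS : Submodule k (Coch c V) := Submodule.span k (ee b '' G)
  have hGS : GS ≤ K := by
    rw [Submodule.span_le]
    rintro _ ⟨g, hg, rfl⟩
    exact hGK g hg
  let B : Submodule k (Coch c V) :=
    { carrier := {z | ∃ g ∈ GS, ∃ w : Fin c → Coch c V, (∀ i, w i ∈ K) ∧
        z = g + ∑ i, ysh k V i (w i)}
      add_mem' := by
        rintro _ _ ⟨g, hg, w, hw, rfl⟩ ⟨g', hg', w', hw', rfl⟩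
        refine ⟨g + g', GS.add_mem hg hg', w + w', fun i => K.add_mem (hw i) (hw' i), ?_⟩
        simp [Finset.sum_add_distrib]; abel
      zero_mem' := ⟨0, GS.zero_mem, 0, fun i => K.zero_mem, by simp⟩
      smul_mem' := by
        rintro r _ ⟨g, hg, w, hw, rfl⟩
        refine ⟨r • g, GS.smul_mem _ hg, r • w, fun i => K.smul_mem _ (hw i), ?_⟩
        simp [Finset.smul_sum] }
  have hBK : B ≤ K := by
    rintro _ ⟨g, hg, w, hw, rfl⟩
    exact K.add_mem (hGS hg) (K.sum_mem fun i _ => hK i _ (hw i))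
  have hB : ∀ i, ∀ z ∈ B, ysh k V i z ∈ B := by
    intro i z hz
    refine ⟨0, GS.zero_mem, Pi.single i z, fun j => ?_, ?_⟩
    · by_cases h : j = i
      · subst h; simpa using hBK hz
      · simp [h]
    · rw [zero_add, Finset.sum_eq_single i]
      · simp
      · intro j _ hj; simp [hj]
      · simp
  have hle : pb b K hK ≤ pb b B hB := by
    rw [← hG, Submodule.span_le]
    intro g hg
    exact ⟨ee b g, Submodule.subset_span ⟨g, hg, rfl⟩, 0, fun i => K.zero_mem, by simp⟩
  choose N hN using fun f => ee_bdd (c := c) (V := V) b f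
  refine ⟨∑ g ∈ G, N g, fun n hn hv z hz hdz => ?_⟩
  have hg0 : ∀ g ∈ GS, hp (n + 2 + 1) g = 0 := by
    intro g hg
    induction hg using Submodule.span_induction with
    | mem x hx =>
      obtain ⟨g, hg, rfl⟩ := hx
      apply hN
      have : N g ≤ ∑ g ∈ G, N g :=
        Finset.single_le_sum (f := N) (fun _ _ => Nat.zero_le _) hg
      omega
    | zero => exact hp_zero _
    | add x y _ _ hx hy => rw [hp_add, hx, hy, add_zero]
    | smul r x _ hx => rw [hp_smul, hx, smul_zero]
  obtain ⟨s, hs⟩ := Dg_finite hz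
  obtain ⟨f, rfl⟩ := ee_surj b s hs
  have hfB : f ∈ pb b B hB := hle (show ee b f ∈ K from hdz)
  obtain ⟨g, hg, w, hw, e⟩ : ee b f ∈ B := hfB
  have hvi : ∀ i, ∃ v, Dg n v ∧ hp (n + 1) (w i) = dd a Q L R v := fun i =>
    hv _ (hp_Dg _ _) (dd_hp (hw i))
  choose v hv1 hv2 using hvi
  refine ⟨∑ i, ysh k V i (v i), Dg.sum fun i _ => (hv1 i).ysh i, ?_⟩
  rw [← hp_of_Dg hz, e, hp_add, hg0 g hg, zero_add, hp_sum, map_sum]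
  refine Finset.sum_congr rfl fun i _ => ?_
  rw [dd_ysh, ← hv2 i, ← hp_ysh]

end Noeth
end QCIProof

namespace QCIProof

section AlgId
variable {E : Type*} [Ring E] {a : ℕ} {X Y P : E}

lemma alg_id1 (hXY : Commute X Y) (hXP : Commute X P) (hXa : X ^ a = 0)
    (f1 : ∀ u < a, (1 - Y * P) * P ^ u = P ^ (a - 1) * Y ^ (a - 1 - u)) :
    (X - Y) * (- ∑ u ∈ Finset.range a, X ^ u * P ^ (u + 1)) +
      P ^ (a - 1) * ∑ u ∈ Finset.range a, X ^ u * Y ^ (a - 1 - u) = 1 := by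
  have h : ∀ u ∈ Finset.range a, P ^ (a - 1) * (X ^ u * Y ^ (a - 1 - u)) =
      X ^ u * P ^ u - X ^ u * (Y * P ^ (u + 1)) := by
    intro u hu
    have := f1 u (Finset.mem_range.1 hu)
    rw [← mul_assoc, ← ((hXP.pow_pow u (a - 1)).eq), mul_assoc, ← this, pow_succ']
    noncomm_ring
  rw [Finset.mul_sum, Finset.sum_congr rfl h, Finset.sum_sub_distrib, mul_neg, sub_mul,
    Finset.mul_sum, Finset.mul_sum]
  have h2 : ∀ u ∈ Finset.range a, Y * (X ^ u * P ^ (u + 1)) = X ^ u * (Y * P ^ (u + 1)) := by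
    intro u _
    rw [← mul_assoc, ← (hXY.pow_left u).eq, mul_assoc]
  rw [Finset.sum_congr rfl h2]
  have h3 : ∀ u ∈ Finset.range a, X * (X ^ u * P ^ (u + 1)) = X ^ (u + 1) * P ^ (u + 1) := by
    intro u _
    rw [← mul_assoc, pow_succ' X]
  rw [Finset.sum_congr rfl h3]
  have h4 := Finset.sum_range_sub' (fun u => X ^ u * P ^ u) a
  rw [hXa, Finset.sum_sub_distrib] at h4
  simp only [pow_zero, mul_one, zero_mul, sub_zero] at h4
  rw [← h4]; abel

lemma alg_id2 (hXP : Commute X P) (hXa : X ^ a = 0) (hXY : Commute X Y)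
    (f2 : ∀ u < a, P ^ u * (1 - P * Y) = Y ^ (a - 1 - u) * P ^ (a - 1)) :
    (- ∑ u ∈ Finset.range a, X ^ u * P ^ (u + 1)) * (X - Y) +
      (∑ u ∈ Finset.range a, X ^ u * Y ^ (a - 1 - u)) * P ^ (a - 1) = 1 := by
  have h : ∀ u ∈ Finset.range a, (X ^ u * Y ^ (a - 1 - u)) * P ^ (a - 1) =
      X ^ u * P ^ u - X ^ u * P ^ (u + 1) * Y := by
    intro u hu
    have := f2 u (Finset.mem_range.1 hu)
    rw [mul_assoc, ← this, pow_succ]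
    noncomm_ring
  rw [Finset.sum_mul, Finset.sum_congr rfl h, Finset.sum_sub_distrib, neg_mul, mul_sub,
    Finset.sum_mul, Finset.sum_mul]
  have h3 : ∀ u ∈ Finset.range a, (X ^ u * P ^ (u + 1)) * X = X ^ (u + 1) * P ^ (u + 1) := by
    intro u _
    rw [mul_assoc, ← (hXP.pow_right (u + 1)).eq, ← mul_assoc, pow_succ X]
  rw [Finset.sum_congr rfl h3]
  have h4 := Finset.sum_range_sub' (fun u => X ^ u * P ^ u) a
  rw [hXa, Finset.sum_sub_distrib] at h4
  simp only [pow_zero, mul_one, zero_mul, sub_zero] at h4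
  rw [← h4]; abel

end AlgId

section Htpy
variable {c : ℕ} {k : Type} [Field k] {V : Type} [AddCommGroup V] [Module k V]
  {a : ℕ} {Q : Fin c → Fin c → k} {L R : Fin c → Module.End k V}

variable (a Q L R) in
/-- homotopy data in the variable `i`. -/
structure FreeV (i : Fin c) (S : Module.End k V) : Prop where
  SR : ∀ j, j ≠ i → S * R j = Q i j • (R j * S)
  SL : ∀ j, Commute S (L j)
  f1 : ∀ u < a, (1 - R i * S) * S ^ u = S ^ (a - 1) * R i ^ (a - 1 - u)
  f2 : ∀ u < a, S ^ u * (1 - S * R i) = R i ^ (a - 1 - u) * S ^ (a - 1)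

variable (a Q L) in
/-- homotopy, first part -/
def hs (i : Fin c) (S : Module.End k V) : Module.End k (Finset (Fin c) → V) :=
  - ∑ u ∈ Finset.range a, op false i (cf Q i (u : ℤ) (-((u + 1 : ℕ) : ℤ))) (L i ^ u * S ^ (u + 1))

variable (a Q) in
/-- homotopy, second part -/
def ht (i : Fin c) (S : Module.End k V) : Module.End k (Finset (Fin c) → V) :=
  op true i (cf Q i ((0 : ℕ) : ℤ) (-((a - 1 : ℕ) : ℤ))) (S ^ (a - 1))

variable (a Q L) in
/-- the homotopy -/
noncomputable def hh (i : Fin c) (S : Module.End k V) : Module.End k (Coch c V) :=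
  lft (hs a Q L i S) + yinv k V i * lft (ht a Q i S)

lemma hs_apply (i : Fin c) (S : Module.End k V) (φ : Finset (Fin c) → V) (p) :
    hs a Q L i S φ p = if i ∈ p then 0 else
      sg k i p • (- ∑ u ∈ Finset.range a, (lam Q i p • L i) ^ u * ((rho Q i p)⁻¹ • S) ^ (u + 1))
        (φ (tog i p)) := by
  simp only [hs, LinearMap.neg_apply, Pi.neg_apply, LinearMap.sum_apply, Finset.sum_apply, op_apply,
    prod_cf]
  by_cases h : i ∈ p
  · simp [h]
  · simp only [h, Bool.false_eq_true, iff_self, if_true, if_false, Finset.smul_sum, smul_neg]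
    congr 1
    refine Finset.sum_congr rfl fun u _ => ?_
    rw [smul_pow, smul_pow, smul_mul_smul_comm, LinearMap.smul_apply, smul_smul, mul_assoc,
      zpow_natCast, zpow_neg, zpow_natCast, inv_pow]

lemma ht_apply (i : Fin c) (S : Module.End k V) (φ : Finset (Fin c) → V) (p) :
    ht a Q i S φ p = if i ∈ p then
      sg k i p • (((rho Q i p)⁻¹ • S) ^ (a - 1)) (φ (tog i p)) else 0 := by
  simp only [ht, op_apply, prod_cf]
  by_cases h : i ∈ p
  · simp only [h, iff_self, if_true]
    rw [smul_pow, LinearMap.smul_apply, smul_smul, zpow_neg, zpow_natCast, inv_pow]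
    simp
  · simp [h]

lemma FreeV.Spow {i : Fin c} {S : Module.End k V} (hF : FreeV a Q L R i S) {j} (hj : j ≠ i)
    (v : ℕ) : S ^ v * R j = (Q i j) ^ (-(-(v : ℤ))) • (R j * S ^ v) := by
  have := qpow (hF.SR j hj) v 1
  rw [pow_one, mul_one] at this
  rw [this, neg_neg, zpow_natCast]

lemma hh_anti (hQ : QM a Q) (hD : Dat a Q L R) (ha : 1 ≤ a) {i : Fin c} {S : Module.End k V}
    (hF : FreeV a Q L R i S) {j} (hj : j ≠ i) : Anti (hh a Q L i S) (DD a Q L R j) := by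
  have h1 : ∀ u : ℕ, _ := fun u => gen_anti hQ hD hj.symm false u (-((u + 1 : ℕ) : ℤ)) (S ^ (u + 1))
    (by
      intro x hx _
      congr 1
      simp [ws]) (hF.Spow hj _) ((hF.SL j).pow_left _)
  have h2 := gen_anti hQ hD hj.symm true 0 (-((a - 1 : ℕ) : ℤ)) (S ^ (a - 1))
    (by
      intro x hx h
      have e : ((0 : ℕ) : ℤ) + (-((a - 1 : ℕ) : ℤ)) = -(a : ℤ) + 1 := by omega
      rw [e, zpow_add₀ hx, zpow_neg, zpow_natCast, h]; simp [ws]) (hF.Spow hj _)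
      ((hF.SL j).pow_left _)
  rw [pow_zero, one_mul] at h2
  have h1' : Anti (hs a Q L i S) (dA Q L R j) ∧ Anti (hs a Q L i S) (dB a Q L R j) :=
    ⟨(Anti.sum_left fun u _ => (h1 u).1).neg_left, (Anti.sum_left fun u _ => (h1 u).2).neg_left⟩
  refine Anti.add_left ?_ ?_
  · have := anti_DD (Y := 1) h1'.1 h1'.2 (fun _ => Commute.one_right _) (Commute.one_left _)
    simpa using this
  · exact anti_DD h2.1 h2.2 (fun T => lft_yinv T i) (yinv_ysh_comm hj.symm)

lemma hh_homotopy (hQ : QM a Q) (hD : Dat a Q L R) (ha : 1 ≤ a) {i : Fin c} {S : Module.End k V}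
    (hF : FreeV a Q L R i S) (z : Coch c V) :
    dd a Q L R (hh a Q L i S z) + hh a Q L i S (dd a Q L R z) =
      DD a Q L R i (hh a Q L i S z) + hh a Q L i S (DD a Q L R i z) := by
  have e : dd a Q L R * hh a Q L i S + hh a Q L i S * dd a Q L R =
      DD a Q L R i * hh a Q L i S + hh a Q L i S * DD a Q L R i := by
    have h1 : dd a Q L R = DD a Q L R i + ∑ j ∈ Finset.univ.erase i, DD a Q L R j := by
      unfold dd; rw [Finset.add_sum_erase _ _ (Finset.mem_univ i)]
    have h2 : Anti (hh a Q L i S) (∑ j ∈ Finset.univ.erase i, DD a Q L R j) :=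
      Anti.sum_right fun j hj => hh_anti hQ hD ha hF (Finset.ne_of_mem_erase hj)
    rw [h1, add_mul, mul_add, h2]; abel
  exact congrArg (fun F => F z) e

/-- scaled identities -/
lemma FreeV.sc1 {i : Fin c} {S : Module.End k V} (hF : FreeV a Q L R i S) {r : k} (hr : r ≠ 0) :
    ∀ u < a, (1 - (r • R i) * (r⁻¹ • S)) * (r⁻¹ • S) ^ u =
      (r⁻¹ • S) ^ (a - 1) * (r • R i) ^ (a - 1 - u) := by
  intro u hu
  rw [smul_mul_smul_comm, mul_inv_cancel₀ hr, one_smul, smul_pow, mul_smul_comm, hF.f1 u hu,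
    smul_pow, smul_pow, smul_mul_smul_comm]
  congr 1
  have e : a - 1 = u + (a - 1 - u) := by omega
  conv_rhs => rw [e, show u + (a - 1 - u) - u = a - 1 - u by omega]
  rw [pow_add, mul_assoc, inv_pow _ (a - 1 - u), inv_mul_cancel₀ (pow_ne_zero _ hr), mul_one]

lemma FreeV.sc2 {i : Fin c} {S : Module.End k V} (hF : FreeV a Q L R i S) {r : k} (hr : r ≠ 0) :
    ∀ u < a, (r⁻¹ • S) ^ u * (1 - (r⁻¹ • S) * (r • R i)) =
      (r • R i) ^ (a - 1 - u) * (r⁻¹ • S) ^ (a - 1) := by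
  intro u hu
  rw [smul_mul_smul_comm, inv_mul_cancel₀ hr, one_smul, smul_pow, smul_mul_assoc, hF.f2 u hu,
    smul_pow, smul_pow, smul_mul_smul_comm]
  congr 1
  have e : a - 1 = u + (a - 1 - u) := by omega
  conv_rhs => rw [e, show u + (a - 1 - u) - u = a - 1 - u by omega]
  rw [pow_add, mul_comm, mul_assoc, inv_pow _ (a - 1 - u), inv_mul_cancel₀ (pow_ne_zero _ hr),
    mul_one]

lemma hh_main (hQ : QM a Q) (hD : Dat a Q L R) {i : Fin c} {S : Module.End k V}
    (hF : FreeV a Q L R i S) (z : Coch c V) (β p) :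
    ((i ∈ p ∨ β i ≠ 0) → (DD a Q L R i (hh a Q L i S z) + hh a Q L i S (DD a Q L R i z)) β p
      = z β p) ∧
    (z β p = 0 → (DD a Q L R i (hh a Q L i S z) + hh a Q L i S (DD a Q L R i z)) β p = 0) := by
  have hr := rho_ne hQ i p
  have hXY : Commute (lam Q i p • L i) (rho Q i p • R i) :=
    ((hD.LR i i).smul_left _).smul_right _
  have hXP : Commute (lam Q i p • L i) ((rho Q i p)⁻¹ • S) :=
    ((hF.SL i).symm.smul_left _).smul_right _
  have hXa : (lam Q i p • L i) ^ a = 0 := by rw [smul_pow, hD.La, smul_zero]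
  have I1 := alg_id1 hXY hXP hXa (hF.sc1 hr)
  have I2 := alg_id2 hXP hXa hXY (hF.sc2 hr)
  have hsg : ∀ v : V, sg k i p • sg k i p • v = v := fun v => by
    rw [smul_smul, sg_sq, one_smul]
  by_cases hi : i ∈ p
  · have key : (DD a Q L R i (hh a Q L i S z) + hh a Q L i S (DD a Q L R i z)) β p = z β p := by
      have I := congrArg (fun F => F (z β p)) I1
      simp only [LinearMap.add_apply, Module.End.mul_apply, Module.End.one_apply] at I
      by_cases h0 : β i = 0
      · simp only [DD, hh, LinearMap.add_apply, Pi.add_apply, Module.End.mul_apply, lft_apply,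
          ysh_apply, yinv_apply, h0, if_true, dA_apply, hs_apply, ht_apply, dB_apply, hi,
          mem_tog_self, not_true, if_false, tog_tog, sg_tog, lam_tog, rho_tog, map_smul, hsg,
          Finsupp.add_apply, Finsupp.single_eq_same, map_add, Pi.zero_apply, add_zero, zero_add,
          map_zero, smul_zero, Nat.add_eq_zero_iff, one_ne_zero, and_false, add_tsub_cancel_right]
        exact I
      · simp only [DD, hh, LinearMap.add_apply, Pi.add_apply, Module.End.mul_apply, lft_apply,
          ysh_apply, yinv_apply, h0, if_true, dA_apply, hs_apply, ht_apply, dB_apply, hi,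
          mem_tog_self, not_true, if_false, tog_tog, sg_tog, lam_tog, rho_tog, map_smul, hsg,
          Finsupp.add_apply, Finsupp.single_eq_same, map_add, Pi.zero_apply, add_zero, zero_add,
          map_zero, smul_zero, Nat.add_eq_zero_iff, one_ne_zero, and_false, add_tsub_cancel_right]
        exact I
    exact ⟨fun _ => key, fun h => key.trans h⟩
  · have I := congrArg (fun F => F (z β p)) I2
    simp only [LinearMap.add_apply, Module.End.mul_apply, Module.End.one_apply] at I
    by_cases h0 : β i = 0
    · refine ⟨fun h => absurd h (by simp [hi, h0]), fun hz => ?_⟩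
      simp only [DD, hh, LinearMap.add_apply, Pi.add_apply, Module.End.mul_apply, lft_apply,
          ysh_apply, yinv_apply, h0, if_true, dA_apply, hs_apply, ht_apply, dB_apply, hi,
          mem_tog_self, not_false_iff, if_false, tog_tog, sg_tog, lam_tog, rho_tog, map_smul, hsg,
          Finsupp.add_apply, Finsupp.single_eq_same, map_add, Pi.zero_apply, add_zero, zero_add,
          map_zero, smul_zero, Nat.add_eq_zero_iff, one_ne_zero, and_false, add_tsub_cancel_right,
          hz]
    · have key : (DD a Q L R i (hh a Q L i S z) + hh a Q L i S (DD a Q L R i z)) β p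
          = z β p := by
        obtain ⟨γ, rfl⟩ := exists_add h0
        simp only [DD, hh, LinearMap.add_apply, Pi.add_apply, Module.End.mul_apply, lft_apply,
          ysh_apply, yinv_apply, h0, if_true, dA_apply, hs_apply, ht_apply, dB_apply, hi,
          mem_tog_self, not_false_iff, if_false, tog_tog, sg_tog, lam_tog, rho_tog, map_smul, hsg,
          Finsupp.add_apply, Finsupp.single_eq_same, map_add, Pi.zero_apply, add_zero, zero_add,
          map_zero, smul_zero, Nat.add_eq_zero_iff, one_ne_zero, and_false, add_tsub_cancel_right]
        rw [add_comm]
        exact I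
      exact ⟨fun _ => key, fun h => key.trans h⟩

lemma hh_Dg {n : ℕ} {z : Coch c V} (hz : Dg (n + 1) z) (i : Fin c) (S : Module.End k V) :
    Dg n (hh a Q L i S z) := by
  unfold hh
  rw [LinearMap.add_apply, Module.End.mul_apply]
  refine Dg.add ?_ (Dg.yinv ?_ i)
  · have e : lft (hs a Q L i S) z = - lft (∑ u ∈ Finset.range a,
      op false i (cf Q i (u : ℤ) (-((u + 1 : ℕ) : ℤ))) (L i ^ u * S ^ (u + 1))) z := rfl
    rw [e, lft_sum_apply]
    exact (Dg.sum fun u _ => hz.op_down i _ _).neg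
  · exact hz.op_up i _ _

/-- vanishing for free modules -/
lemma HV_of_free (hQ : QM a Q) (hD : Dat a Q L R) (ha : 1 ≤ a)
    (hF : ∀ i, ∃ S, FreeV a Q L R i S) (n : ℕ) : HV a Q L R n := by
  choose S hS using hF
  intro z hz hdz
  have key : ∀ s : Finset (Fin c), ∃ v, Dg n v ∧
      ∀ β p, (∃ i ∈ s, i ∈ p ∨ β i ≠ 0) → (z - dd a Q L R v) β p = 0 := by
    intro s
    induction s using Finset.induction_on with
    | empty => exact ⟨0, Dg.zero _, by simp⟩
    | insert i s hi ih =>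
      obtain ⟨v, hv, hv2⟩ := ih
      set w := z - dd a Q L R v with hw
      have hwD : Dg (n + 1) w := hz.sub hv.dd
      have hdw : dd a Q L R w = 0 := by rw [hw, map_sub, hdz, dd_dd hQ hD, sub_zero]
      have hom := hh_homotopy hQ hD ha (hS i) w
      rw [hdw, map_zero, add_zero] at hom
      refine ⟨v + hh a Q L i (S i) w, hv.add (hh_Dg hwD i _), fun β p h => ?_⟩
      rw [map_add, ← sub_sub, ← hw, hom]
      obtain ⟨h1, h2⟩ := hh_main hQ hD (hS i) w β p
      rw [Pi.sub_apply, Pi.sub_apply]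
      by_cases h3 : i ∈ p ∨ β i ≠ 0
      · rw [h1 h3, sub_self]
      · obtain ⟨j, hj, hj2⟩ := h
        have hj' : j ∈ s := by
          rcases Finset.mem_insert.1 hj with rfl | h
          · exact absurd hj2 h3
          · exact h
        have := hv2 β p ⟨j, hj', hj2⟩
        rw [h2 this, this, sub_zero]
  obtain ⟨v, hv, hv2⟩ := key Finset.univ
  refine ⟨v, hv, ?_⟩
  rw [← sub_eq_zero]
  funext β p
  by_contra h0
  have hd := (hz.sub (hv.dd (a := a) (Q := Q) (L := L) (R := R))) β p h0
  apply h0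
  apply hv2
  by_contra hne
  push Not at hne
  have hp : p = ∅ := by ext i; simpa using (hne i (Finset.mem_univ _)).1
  have hβ : β = 0 := by ext i; exact (hne i (Finset.mem_univ _)).2
  subst hp hβ
  simp at hd

end Htpy
end QCIProof

namespace QCIProof

section Rep
variable {c : ℕ} {k : Type} [Field k] {M : Type} [AddCommGroup M] [Module k M]
  {a : ℕ} {Q : Fin c → Fin c → k}

variable (a Q) in
/-- representations -/
structure IsRep (X : Fin c → Module.End k M) : Prop where
  XX : ∀ i j, i ≠ j → X i * X j = Q i j • (X j * X i)
  Xa : ∀ i, X i ^ a = 0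

variable (a Q) in
/-- freeness in the variable `i`. -/
structure FreeM (X : Fin c → Module.End k M) (i : Fin c) (y : Module.End k M) : Prop where
  Xy : ∀ j, j ≠ i → X j * y = Q i j • (y * X j)
  f1 : ∀ u < a, y ^ u * (1 - y * X i) = X i ^ (a - 1 - u) * y ^ (a - 1)
  f2 : ∀ u < a, (1 - X i * y) * y ^ u = y ^ (a - 1) * X i ^ (a - 1 - u)

variable (k M a) in
/-- extended coordinates -/
def gx (n : ℕ) : (Fin a → M) →ₗ[k] M := if h : n < a then LinearMap.proj ⟨n, h⟩ else 0

variable (k M a) in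
/-- up shift -/
def upS (u : ℕ) : Module.End k (Fin a → M) :=
  LinearMap.pi fun s => if u ≤ s then gx k M a (s - u) else 0

variable (k M a) in
/-- down shift -/
def dnS (u : ℕ) : Module.End k (Fin a → M) :=
  LinearMap.pi fun s => gx k M a (s + u)

/-- twisted diagonal -/
def dgS (a : ℕ) (r : k) (t : ℕ) (T : Module.End k M) : Module.End k (Fin a → M) :=
  LinearMap.pi fun s => (r ^ ((s : ℕ) + t)) • (T ∘ₗ LinearMap.proj s)

lemma gx_lt {n : ℕ} (h : n < a) (g : Fin a → M) : gx k M a n g = g ⟨n, h⟩ := by simp [gx, h]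
lemma gx_ge {n : ℕ} (h : a ≤ n) (g : Fin a → M) : gx k M a n g = 0 := by simp [gx, h.not_gt]
lemma gx_fin (s : Fin a) (g : Fin a → M) : gx k M a s g = g s := gx_lt s.2 g

lemma ext_gx {g g' : Fin a → M} (h : ∀ n < a, gx k M a n g = gx k M a n g') : g = g' := by
  funext s
  have := h s s.2
  rwa [gx_fin, gx_fin] at this

lemma gx_up (n u : ℕ) (g : Fin a → M) : gx k M a n (upS k M a u g) =
    if u ≤ n ∧ n < a then gx k M a (n - u) g else 0 := by
  by_cases h : n < a
  · rw [gx_lt h]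
    simp only [upS, LinearMap.pi_apply, h, and_true]
    split_ifs <;> rfl
  · rw [gx_ge (by omega)]; simp [h]

lemma gx_dn (n u : ℕ) (g : Fin a → M) : gx k M a n (dnS k M a u g) =
    if n < a then gx k M a (n + u) g else 0 := by
  by_cases h : n < a
  · rw [gx_lt h]; simp [dnS, h]
  · rw [gx_ge (by omega)]; simp [h]

lemma gx_dg (n : ℕ) (r : k) (t : ℕ) (T : Module.End k M) (g : Fin a → M) :
    gx k M a n (dgS a r t T g) = r ^ (n + t) • T (gx k M a n g) := by
  by_cases h : n < a
  · rw [gx_lt h, gx_lt h]; simp [dgS]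
  · rw [gx_ge (by omega), gx_ge (by omega)]; simp

lemma upS_pow (u : ℕ) : upS k M a 1 ^ u = upS k M a u := by
  induction u with
  | zero =>
    refine LinearMap.ext fun g => ext_gx (k := k) fun n hn => ?_
    rw [gx_up]; simp [hn]
  | succ u ih =>
    refine LinearMap.ext fun g => ext_gx (k := k) fun n hn => ?_
    rw [pow_succ, ih, Module.End.mul_apply, gx_up, gx_up, gx_up]
    split_ifs <;> first | rfl | omega | (congr 1)

lemma dnS_pow (u : ℕ) : dnS k M a 1 ^ u = dnS k M a u := by
  induction u with
  | zero =>
    refine LinearMap.ext fun g => ext_gx (k := k) fun n hn => ?_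
    rw [gx_dn]; simp [hn]
  | succ u ih =>
    refine LinearMap.ext fun g => ext_gx (k := k) fun n hn => ?_
    rw [pow_succ, ih, Module.End.mul_apply, gx_dn, gx_dn, gx_dn]
    simp only [hn, if_true]
    split_ifs with h
    · congr 1
    · rw [gx_ge (by omega)]

lemma dgS_mul (r r' : k) (t : ℕ) (T T' : Module.End k M) :
    dgS a r t T * dgS a r' t T' = dgS a (r * r') t (T * T') := by
  refine LinearMap.ext fun g => ext_gx (k := k) fun n hn => ?_
  simp [gx_dg, mul_pow, mul_smul]

lemma dgS_one (t : ℕ) : dgS a (1 : k) t (1 : Module.End k M) = 1 := by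
  refine LinearMap.ext fun g => ext_gx (k := k) fun n hn => ?_
  simp [gx_dg]

lemma dgS_pow (r : k) (t : ℕ) (T : Module.End k M) (u : ℕ) :
    dgS a r t T ^ u = dgS a (r ^ u) t (T ^ u) := by
  induction u with
  | zero => simp [dgS_one]
  | succ u ih => rw [pow_succ, ih, dgS_mul, pow_succ, pow_succ]

lemma dgS_smul (r x : k) (t : ℕ) (T : Module.End k M) : dgS a r t (x • T) = x • dgS a r t T := by
  refine LinearMap.ext fun g => ext_gx (k := k) fun n hn => ?_
  rw [gx_dg, LinearMap.smul_apply, LinearMap.smul_apply, map_smul, gx_dg, smul_comm]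

lemma dgS_sub (r : k) (t : ℕ) (T T' : Module.End k M) :
    dgS a r t (T - T') = dgS a r t T - dgS a r t T' := by
  refine LinearMap.ext fun g => ext_gx (k := k) fun n hn => ?_
  simp [gx_dg, smul_sub]

lemma up_dg {r : k} (hr : r ≠ 0) (t : ℕ) (T : Module.End k M) :
    upS k M a 1 * dgS a r t T = r⁻¹ • (dgS a r t T * upS k M a 1) := by
  refine LinearMap.ext fun g => ext_gx (k := k) fun n hn => ?_
  rw [LinearMap.smul_apply, map_smul, Module.End.mul_apply, Module.End.mul_apply, gx_dg, gx_up,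
    gx_up, gx_dg]
  split_ifs with h
  · rw [smul_smul]
    congr 1
    rw [show n + t = n - 1 + t + 1 by omega, pow_succ]
    field_simp
  · simp

lemma dn_dg {r : k} (hr : r ≠ 0) (t : ℕ) (T : Module.End k M) :
    dgS a r t T * dnS k M a 1 = r⁻¹ • (dnS k M a 1 * dgS a r t T) := by
  refine LinearMap.ext fun g => ext_gx (k := k) fun n hn => ?_
  rw [LinearMap.smul_apply, map_smul, Module.End.mul_apply, Module.End.mul_apply, gx_dg, gx_dn,
    gx_dn, gx_dg]
  split_ifs with h
  · rw [smul_smul]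
    congr 1
    rw [show n + 1 + t = n + t + 1 by omega, pow_succ]
    field_simp
  

/-- the induced representation -/
def XE (a : ℕ) (Q : Fin c → Fin c → k) (X : Fin c → Module.End k M) (i : Fin c) (t : ℕ)
    (j : Fin c) : Module.End k (Fin a → M) :=
  if j = i then upS k M a 1 else dgS a (Q j i) t (X j)

variable {X : Fin c → Module.End k M}

lemma XE_self (i : Fin c) (t : ℕ) : XE a Q X i t i = upS k M a 1 := by simp [XE]
lemma XE_ne {i j : Fin c} (h : j ≠ i) (t : ℕ) : XE a Q X i t j = dgS a (Q j i) t (X j) := by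
  simp [XE, h]

lemma XE_rep (hQ : QM a Q) (hX : IsRep a Q X) (i : Fin c) (t : ℕ) :
    IsRep a Q (XE a Q X i t) := by
  constructor
  · intro j l hjl
    by_cases hj : j = i
    · subst hj
      rw [XE_self, XE_ne hjl.symm, up_dg (hQ.ne _ _), hQ.inv l j hjl.symm]
    · by_cases hl : l = i
      · subst hl
        rw [XE_self, XE_ne hj, up_dg (hQ.ne _ _), smul_smul, mul_inv_cancel₀ (hQ.ne _ _), one_smul]
      · rw [XE_ne hj, XE_ne hl, dgS_mul, dgS_mul, hX.XX j l hjl, dgS_smul, mul_comm]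
  · intro j
    by_cases hj : j = i
    · subst hj
      rw [XE_self, upS_pow]
      refine LinearMap.ext fun g => ext_gx (k := k) fun n hn => ?_
      rw [gx_up, if_neg (by omega)]; simp
    · rw [XE_ne hj, dgS_pow, hX.Xa]
      refine LinearMap.ext fun g => ext_gx (k := k) fun n hn => ?_
      rw [gx_dg]; simp

lemma XE_free_self (hQ : QM a Q) (i : Fin c) (t : ℕ) :
    FreeM a Q (XE a Q X i t) i (dnS k M a 1) := by
  constructor
  · intro j hj
    rw [XE_ne hj, dn_dg (hQ.ne _ _), hQ.inv j i hj]
  · intro u hu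
    rw [XE_self, upS_pow, dnS_pow, dnS_pow]
    refine LinearMap.ext fun g => ext_gx (k := k) fun n hn => ?_
    simp only [Module.End.mul_apply, LinearMap.sub_apply, Module.End.one_apply, gx_dn, gx_up,
      map_sub]
    by_cases h : n + u = a - 1
    · have h1 : ¬ (n + u + 1 < a) := by omega
      have h2 : a - 1 - u ≤ n := by omega
      have h3 : n - (a - 1 - u) < a := by omega
      have h4 : n - (a - 1 - u) + (a - 1) = n + u := by omega
      simp [hn, h1, h2, h3, h4]
    · rcases lt_or_ge (n + u) a with h1 | h1
      · have h2 : n + u + 1 < a := by omega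
        have h3 : ¬ (a - 1 - u ≤ n) := by omega
        simp [hn, h1, h2, h3]
      · have h4 : a ≤ n - (a - 1 - u) + (a - 1) := by omega
        simp [hn, h1.not_gt, gx_ge h1, gx_ge h4]
  · intro u hu
    rw [XE_self, upS_pow, dnS_pow, dnS_pow]
    refine LinearMap.ext fun g => ext_gx (k := k) fun n hn => ?_
    simp only [Module.End.mul_apply, LinearMap.sub_apply, Module.End.one_apply, gx_dn, gx_up,
      map_sub]
    rcases Nat.eq_zero_or_pos n with rfl | h
    · have h2 : a - 1 - u ≤ a - 1 ∧ a - 1 < a := by omega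
      have h3 : a - 1 - (a - 1 - u) = u := by omega
      simp [hn, h2, h3]
    · have h2 : ¬ (n + (a - 1) < a) := by omega
      have h3 : n - 1 < a := by omega
      have h4 : n - 1 + 1 = n := by omega
      have h5 : 1 ≤ n := h
      simp [hn, h2, h3, h4, h5]

lemma XE_free_ne (hQ : QM a Q) {i j : Fin c} (hji : j ≠ i) (t : ℕ) {y}
    (hy : FreeM a Q X j y) : FreeM a Q (XE a Q X i t) j (dgS a (Q i j) t y) := by
  have hm : Q i j * Q j i = 1 := by
    rw [hQ.inv i j hji.symm]; exact mul_inv_cancel₀ (hQ.ne _ _)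
  have hm' : Q j i * Q i j = 1 := by rw [mul_comm, hm]
  constructor
  · intro l hl
    by_cases hli : l = i
    · subst hli
      rw [XE_self, up_dg (hQ.ne _ _), hQ.inv l j hji.symm]
    · rw [XE_ne hli, dgS_mul, dgS_mul, hy.Xy l hl, dgS_smul, mul_comm]
  · intro u hu
    rw [XE_ne hji, dgS_mul, hm, ← dgS_one (k := k) (M := M) (a := a) t, ← dgS_sub, dgS_pow, dgS_mul,
      dgS_pow, dgS_pow, dgS_mul, hy.f1 u hu]
    congr 1
    rw [show a - 1 = (a - 1 - u) + u by omega, show a - 1 - u + u - u = a - 1 - u by omega,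
      pow_add, ← mul_assoc, ← mul_pow, hm']
    simp
  · intro u hu
    rw [XE_ne hji, dgS_mul, hm', ← dgS_one (k := k) (M := M) (a := a) t, ← dgS_sub, dgS_pow, dgS_mul,
      dgS_pow, dgS_pow, dgS_mul, hy.f2 u hu]
    congr 1
    rw [show a - 1 = (a - 1 - u) + u by omega, show a - 1 - u + u - u = a - 1 - u by omega,
      pow_add, mul_right_comm, ← mul_pow, hm]
    simp

/-- evaluation -/
def evE (a : ℕ) (X : Fin c → Module.End k M) (i : Fin c) : (Fin a → M) →ₗ[k] M :=
  ∑ s ∈ Finset.range a, (X i ^ s) ∘ₗ gx k M a s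

lemma XXpow (hX : IsRep a Q X) {i j : Fin c} (hij : j ≠ i) (u : ℕ) :
    X j * X i ^ u = Q j i ^ u • (X i ^ u * X j) := by
  have := qpow (hX.XX j i hij) 1 u
  simpa using this

lemma evE_comm (hX : IsRep a Q X) (ha : 1 ≤ a) (i j : Fin c) (g) :
    evE a X i (XE a Q X i 0 j g) = X j (evE a X i g) := by
  by_cases hj : j = i
  · subst hj
    rw [XE_self]
    simp only [evE, LinearMap.sum_apply, LinearMap.comp_apply, gx_up, map_sum]
    obtain ⟨b, rfl⟩ : ∃ b, a = b + 1 := ⟨a - 1, by omega⟩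
    rw [Finset.sum_range_succ', Finset.sum_range_succ (n := b)]
    rw [← Module.End.mul_apply, ← pow_succ', hX.Xa]
    simp only [LinearMap.zero_apply, add_zero]
    rw [if_neg (by omega), map_zero, add_zero]
    refine Finset.sum_congr rfl fun s hs => ?_
    have := Finset.mem_range.1 hs
    rw [if_pos (by omega), pow_succ', Module.End.mul_apply]
    rfl
  · rw [XE_ne hj]
    simp only [evE, LinearMap.sum_apply, LinearMap.comp_apply, gx_dg, map_sum]
    refine Finset.sum_congr rfl fun s hs => ?_
    rw [← Module.End.mul_apply (X j), XXpow hX hj]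
    simp

lemma evE_surj (ha : 1 ≤ a) (i : Fin c) : Function.Surjective (evE a X i) := by
  intro m
  refine ⟨fun s => if (s : ℕ) = 0 then m else 0, ?_⟩
  simp only [evE, LinearMap.sum_apply, LinearMap.comp_apply]
  rw [Finset.sum_eq_single 0]
  · rw [gx_lt (by omega)]; simp
  · intro s hs h0
    rw [gx_lt (Finset.mem_range.1 hs)]; simp [h0]
  · intro h; simp at h; omega

/-- coinduction embedding -/
def inE (a : ℕ) (X : Fin c → Module.End k M) (i : Fin c) : M →ₗ[k] (Fin a → M) :=
  LinearMap.pi fun s => X i ^ (a - 1 - s)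

lemma gx_in (n : ℕ) (hn : n < a) (i : Fin c) (m : M) :
    gx k M a n (inE a X i m) = (X i ^ (a - 1 - n)) m := by
  rw [gx_lt hn]; simp [inE]

lemma inE_comm (hQ : QM a Q) (hX : IsRep a Q X) (i j : Fin c) (m) :
    inE a X i (X j m) = XE a Q X i 1 j (inE a X i m) := by
  refine ext_gx (k := k) fun n hn => ?_
  by_cases hj : j = i
  · subst hj
    rw [XE_self, gx_up, gx_in _ hn, ← Module.End.mul_apply, ← pow_succ]
    by_cases h : 1 ≤ n
    · rw [if_pos ⟨h, hn⟩, gx_in _ (by omega)]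
      congr 2; omega
    · rw [if_neg (by omega), show a - 1 - n + 1 = a by omega, hX.Xa]; rfl
  · rw [XE_ne hj, gx_dg, gx_in _ hn, gx_in _ hn, ← Module.End.mul_apply, ← Module.End.mul_apply,
      XXpow hX hj, LinearMap.smul_apply, smul_smul, ← pow_add,
      show n + 1 + (a - 1 - n) = a by omega, hQ.pw, one_smul]

lemma inE_inj (ha : 1 ≤ a) (i : Fin c) : Function.Injective (inE a X i) := by
  intro m m' h
  have := congrArg (gx k (M := M) a (a - 1)) h
  rw [gx_in _ (by omega), gx_in _ (by omega)] at this
  simpa using this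

/-- free cover -/
lemma exists_cover (hQ : QM a Q) (hX : IsRep a Q X) (ha : 1 ≤ a) (s : Finset (Fin c)) :
    ∃ (E : Type) (_ : AddCommGroup E) (_ : Module k E) (XX : Fin c → Module.End k E),
      IsRep a Q XX ∧ (∃ f : E →ₗ[k] M, Function.Surjective f ∧ ∀ i e, f (XX i e) = X i (f e)) ∧
      ∀ i ∈ s, ∃ y, FreeM a Q XX i y := by
  induction s using Finset.induction_on with
  | empty => exact ⟨M, _, _, X, hX, ⟨LinearMap.id, fun m => ⟨m, rfl⟩, fun _ _ => rfl⟩, by simp⟩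
  | insert i s hi ih =>
    obtain ⟨E, _, _, XX, h1, ⟨f, hf, hf2⟩, h3⟩ := ih
    refine ⟨Fin a → E, inferInstance, inferInstance, XE a Q XX i 0, XE_rep hQ h1 i 0,
      ⟨f ∘ₗ evE a XX i, hf.comp (evE_surj ha i), fun j e => ?_⟩, fun j hj => ?_⟩
    · rw [LinearMap.comp_apply, evE_comm h1 ha, hf2]; rfl
    · by_cases hji : j = i
      · subst hji; exact ⟨_, XE_free_self hQ j 0⟩
      · obtain ⟨y, hy⟩ := h3 j (by simpa [hji] using hj)
        exact ⟨_, XE_free_ne hQ hji 0 hy⟩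

/-- embedding in a free module -/
lemma exists_hull (hQ : QM a Q) (hX : IsRep a Q X) (ha : 1 ≤ a) (s : Finset (Fin c)) :
    ∃ (E : Type) (_ : AddCommGroup E) (_ : Module k E) (XX : Fin c → Module.End k E),
      IsRep a Q XX ∧ (∃ f : M →ₗ[k] E, Function.Injective f ∧ ∀ i e, f (X i e) = XX i (f e)) ∧
      ∀ i ∈ s, ∃ y, FreeM a Q XX i y := by
  induction s using Finset.induction_on with
  | empty => exact ⟨M, _, _, X, hX, ⟨LinearMap.id, fun _ _ h => h, fun _ _ => rfl⟩, by simp⟩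
  | insert i s hi ih =>
    obtain ⟨E, _, _, XX, h1, ⟨f, hf, hf2⟩, h3⟩ := ih
    refine ⟨Fin a → E, inferInstance, inferInstance, XE a Q XX i 1, XE_rep hQ h1 i 1,
      ⟨inE a XX i ∘ₗ f, (inE_inj ha i).comp hf, fun j e => ?_⟩, fun j hj => ?_⟩
    · rw [LinearMap.comp_apply, hf2, inE_comm hQ h1]; rfl
    · by_cases hji : j = i
      · subst hji; exact ⟨_, XE_free_self hQ j 1⟩
      · obtain ⟨y, hy⟩ := h3 j (by simpa [hji] using hj)
        exact ⟨_, XE_free_ne hQ hji 1 hy⟩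

end Rep
end QCIProof

namespace QCIProof

section Fun
variable {c : ℕ} {k : Type} [Field k] {a : ℕ} {Q : Fin c → Fin c → k}
  {V : Type} [AddCommGroup V] [Module k V] {L R : Fin c → Module.End k V}
  {V' : Type} [AddCommGroup V'] [Module k V'] {L' R' : Fin c → Module.End k V'}
  {V'' : Type} [AddCommGroup V''] [Module k V''] {L'' R'' : Fin c → Module.End k V''}

/-- functoriality of cochains -/
def mapC (T : V →ₗ[k] V') : Coch c V →ₗ[k] Coch c V' where
  toFun φ β p := T (φ β p)
  map_add' x y := by funext β p; simp
  map_smul' r x := by funext β p; simp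

lemma mapC_apply (T : V →ₗ[k] V') (φ : Coch c V) (β p) : mapC T φ β p = T (φ β p) := rfl

lemma Dg.mapC {n : ℕ} {φ : Coch c V} (h : Dg n φ) (T : V →ₗ[k] V') : Dg n (mapC T φ) := by
  intro β p hp
  refine h β p fun h0 => hp ?_
  rw [mapC_apply, h0, map_zero]

/-- intertwiner -/
structure Intw (L R : Fin c → Module.End k V) (L' R' : Fin c → Module.End k V')
    (T : V →ₗ[k] V') : Prop where
  l : ∀ i v, T (L i v) = L' i (T v)
  r : ∀ i v, T (R i v) = R' i (T v)

lemma pow_intw {A : Module.End k V} {B : Module.End k V'} {T : V →ₗ[k] V'}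
    (h : ∀ v, T (A v) = B (T v)) (n : ℕ) (v) : T ((A ^ n) v) = (B ^ n) (T v) := by
  induction n generalizing v with
  | zero => simp
  | succ n ih => rw [pow_succ, pow_succ, Module.End.mul_apply, Module.End.mul_apply, ih, h]

lemma dd_mapC {T : V →ₗ[k] V'} (hT : Intw L R L' R' T) (φ : Coch c V) :
    dd a Q L' R' (mapC T φ) = mapC T (dd a Q L R φ) := by
  funext β p
  rw [mapC_apply, dd_apply, dd_apply, Finset.sum_apply, Finset.sum_apply, map_sum]
  refine Finset.sum_congr rfl fun i _ => ?_
  rw [Pi.add_apply, Pi.add_apply, map_add]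
  congr 1
  · rw [dA_apply, dA_apply, mapC_apply]
    split_ifs
    · simp [hT.l, hT.r]
    · simp
  · by_cases h0 : β i = 0
    · simp [h0]
    · rw [if_neg h0, if_neg h0, dB_apply, dB_apply, mapC_apply]
      split_ifs
      · simp
      · rw [map_smul, LinearMap.sum_apply, LinearMap.sum_apply, map_sum]
        congr 1
        refine Finset.sum_congr rfl fun u _ => ?_
        rw [Module.End.mul_apply, Module.End.mul_apply,
          pow_intw (A := lam Q i p • L i) (B := lam Q i p • L' i) (T := T) (by simp [hT.l]),
          pow_intw (A := rho Q i p • R i) (B := rho Q i p • R' i) (T := T) (by simp [hT.r])]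

lemma HV_retract {T : V →ₗ[k] V'} (hT : Intw L R L' R' T) {U : V' →ₗ[k] V}
    (hU : Intw L' R' L R U) (hUT : ∀ v, U (T v) = v) {n : ℕ} (h : HV a Q L' R' n) :
    HV a Q L R n := by
  intro z hz hdz
  obtain ⟨v, hv, hv2⟩ := h (mapC T z) (hz.mapC T) (by rw [dd_mapC hT, hdz, map_zero])
  refine ⟨mapC U v, hv.mapC U, ?_⟩
  rw [dd_mapC hU, ← hv2]
  funext β p
  simp [mapC_apply, hUT]

/-- abstract short exact sequence -/
structure SES (L R : Fin c → Module.End k V) (L' R' : Fin c → Module.End k V')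
    (L'' R'' : Fin c → Module.End k V'') (T : V →ₗ[k] V') (U : V' →ₗ[k] V'')
    (σ : V' →ₗ[k] V) (τ : V'' →ₗ[k] V') : Prop where
  hT : Intw L R L' R' T
  hU : Intw L' R' L'' R'' U
  inj : ∀ v, T v = 0 → v = 0
  UT : ∀ v, U (T v) = 0
  Uτ : ∀ v, U (τ v) = v
  Tσ : ∀ v, U v = 0 → T (σ v) = v

variable {T : V →ₗ[k] V'} {U : V' →ₗ[k] V''} {σ : V' →ₗ[k] V} {τ : V'' →ₗ[k] V'}

lemma SES.c_inj (h : SES L R L' R' L'' R'' T U σ τ) {z : Coch c V} (hz : mapC T z = 0) : z = 0 := by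
  funext β p
  exact h.inj _ (congrFun (congrFun hz β) p)
lemma SES.c_UT (h : SES L R L' R' L'' R'' T U σ τ) (z : Coch c V) : mapC U (mapC T z) = 0 := by
  funext β p
  exact h.UT _
lemma SES.c_Uτ (h : SES L R L' R' L'' R'' T U σ τ) (z : Coch c V'') :
    mapC U (mapC τ z) = z := by
  funext β p
  exact h.Uτ _
lemma SES.c_Tσ (h : SES L R L' R' L'' R'' T U σ τ) {z : Coch c V'} (hz : mapC U z = 0) :
    mapC T (mapC σ z) = z := by
  funext β p
  exact h.Tσ _ (congrFun (congrFun hz β) p)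

lemma SES.shift (hQ : QM a Q) (hD' : Dat a Q L' R')
    (h : SES L R L' R' L'' R'' T U σ τ) (hV : ∀ n, HV a Q L' R' n) (n : ℕ) :
    HV a Q L R (n + 1) ↔ HV a Q L'' R'' n := by
  constructor
  · intro h1 z hz hdz
    have e1 : mapC U (dd a Q L' R' (mapC τ z)) = 0 := by
      rw [← dd_mapC h.hU, h.c_Uτ, hdz]
    have e2 := h.c_Tσ e1
    set w := mapC σ (dd a Q L' R' (mapC τ z)) with hw
    have hdw : dd a Q L R w = 0 := by
      apply h.c_inj
      rw [← dd_mapC h.hT, e2, dd_dd hQ hD']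
    obtain ⟨v, hv, hv2⟩ := h1 w ((hz.mapC τ).dd.mapC σ) hdw
    obtain ⟨x, hx, hx2⟩ := hV n (mapC τ z - mapC T v) ((hz.mapC τ).sub (hv.mapC T)) (by
      rw [map_sub, dd_mapC h.hT, ← hv2, e2, sub_self])
    refine ⟨mapC U x, hx.mapC U, ?_⟩
    rw [dd_mapC h.hU, ← hx2, map_sub, h.c_UT, h.c_Uτ, sub_zero]
  · intro h3 w hw hdw
    obtain ⟨y, hy, hy2⟩ := hV (n + 1) (mapC T w) (hw.mapC T) (by rw [dd_mapC h.hT, hdw, map_zero])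
    obtain ⟨x, hx, hx2⟩ := h3 (mapC U y) (hy.mapC U) (by
      rw [dd_mapC h.hU, ← hy2, h.c_UT])
    have e1 : mapC U (y - dd a Q L' R' (mapC τ x)) = 0 := by
      rw [map_sub, ← dd_mapC h.hU, h.c_Uτ, hx2, sub_self]
    have e2 := h.c_Tσ e1
    refine ⟨mapC σ (y - dd a Q L' R' (mapC τ x)), (hy.sub (hx.mapC τ).dd).mapC σ, ?_⟩
    rw [← sub_eq_zero]
    apply h.c_inj
    rw [map_sub, ← dd_mapC h.hT, e2, map_sub, dd_dd hQ hD', sub_zero, hy2, sub_self]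

/-- degree zero cochains -/
noncomputable def del (f : V) : Coch c V := fun β p => if β = 0 ∧ p = ∅ then f else 0

lemma del_Dg (f : V) : Dg 0 (del f : Coch c V) := by
  intro β p h
  have : β = 0 ∧ p = ∅ := by
    by_contra h0
    simp [del, h0] at h
  simp [this.1, this.2]

lemma Dg0_del {z : Coch c V} (hz : Dg 0 z) : z = del (z 0 ∅) := by
  funext β p
  by_cases h : β = 0 ∧ p = ∅
  · simp [del, h]
  · simp only [del, h, if_false]
    by_contra h0
    have := hz β p h0
    apply h
    have h1 : β.degree = 0 := by omega
    have h2 : p.card = 0 := by omega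
    exact ⟨(Finsupp.degree_eq_zero_iff β).1 h1, Finset.card_eq_zero.1 h2⟩

lemma dd_del_apply (f : V) (i : Fin c) :
    dd a Q L R (del f) 0 {i} = L i f - R i f := by
  rw [dd_apply, Finset.sum_apply, Finset.sum_eq_single i]
  · have ht : tog i {i} = ∅ := by simp [tog]
    simp [dA_apply, ht, sg, lam, rho, del]
  · intro j _ hj
    simp [dA_apply, hj]
  · simp

lemma dd_del (f : V) : dd a Q L R (del f) = 0 ↔ ∀ i, L i f = R i f := by
  constructor
  · intro h i
    have := dd_del_apply (a := a) (Q := Q) (L := L) (R := R) f i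
    rw [h] at this
    exact (sub_eq_zero.1 this.symm)
  · intro h
    funext β p
    by_contra h0
    have hd := (del_Dg f).dd (a := a) (Q := Q) (L := L) (R := R) β p h0
    have h1 : β.degree = 0 := by omega
    have h2 : p.card = 1 := by omega
    obtain rfl := (Finsupp.degree_eq_zero_iff β).1 h1
    obtain ⟨i, rfl⟩ := Finset.card_eq_one.1 h2
    apply h0
    rw [dd_del_apply, h i, sub_self]; rfl

lemma SES.base (hQ : QM a Q) (hD' : Dat a Q L' R')
    (h : SES L R L' R' L'' R'' T U σ τ) (hV : HV a Q L' R' 0) :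
    HV a Q L R 0 ↔ ∀ f : V'', (∀ i, L'' i f = R'' i f) →
      ∃ g : V', (∀ i, L' i g = R' i g) ∧ U g = f := by
  constructor
  · intro h1 f hf
    have hz : Dg 0 (del f : Coch c V'') := del_Dg f
    have hdz : dd a Q L'' R'' (del f) = 0 := (dd_del f).2 hf
    have e1 : mapC U (dd a Q L' R' (mapC τ (del f))) = 0 := by
      rw [← dd_mapC h.hU, h.c_Uτ, hdz]
    have e2 := h.c_Tσ e1
    set w := mapC σ (dd a Q L' R' (mapC τ (del f))) with hw
    have hdw : dd a Q L R w = 0 := by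
      apply h.c_inj
      rw [← dd_mapC h.hT, e2, dd_dd hQ hD']
    obtain ⟨v, hv, hv2⟩ := h1 w ((hz.mapC τ).dd.mapC σ) hdw
    have hy : Dg 0 (mapC τ (del f) - mapC T v) := (hz.mapC τ).sub (hv.mapC T)
    refine ⟨(mapC τ (del f) - mapC T v : Coch c V') 0 ∅, ?_, ?_⟩
    · rw [← dd_del (a := a) (Q := Q), ← Dg0_del hy, map_sub, dd_mapC h.hT, ← hv2, e2, sub_self]
    · have e3 : mapC U (mapC τ (del f) - mapC T v) = del f := by
        rw [map_sub, h.c_UT, h.c_Uτ, sub_zero]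
      have := congrFun (congrFun e3 0) ∅
      rw [mapC_apply] at this
      rw [this]; simp [del]
  · intro h3 w hw hdw
    obtain ⟨y, hy, hy2⟩ := hV (mapC T w) (hw.mapC T) (by rw [dd_mapC h.hT, hdw, map_zero])
    have hUy : dd a Q L'' R'' (mapC U y) = 0 := by rw [dd_mapC h.hU, ← hy2, h.c_UT]
    rw [Dg0_del (hy.mapC U), dd_del] at hUy
    obtain ⟨g, hg, hg2⟩ := h3 _ hUy
    have e1 : mapC U (y - del g) = 0 := by
      have : mapC U (del g : Coch c V') = mapC U y := by
        rw [Dg0_del (hy.mapC U), ← hg2]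
        rw [Dg0_del ((del_Dg g).mapC U)]
        simp [mapC_apply, del]
      rw [map_sub, this, sub_self]
    have e2 := h.c_Tσ e1
    refine ⟨mapC σ (y - del g), (hy.sub (del_Dg g)).mapC σ, ?_⟩
    rw [← sub_eq_zero]
    apply h.c_inj
    rw [map_sub, ← dd_mapC h.hT, e2, map_sub, (dd_del g).2 hg, sub_zero, hy2, sub_self]

end Fun

section HomRep
variable {c : ℕ} {k : Type} [Field k] {a : ℕ} {Q : Fin c → Fin c → k}
  {M : Type} [AddCommGroup M] [Module k M] {X : Fin c → Module.End k M}
  {M' : Type} [AddCommGroup M'] [Module k M'] {X' : Fin c → Module.End k M'}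
  {M'' : Type} [AddCommGroup M''] [Module k M''] {X'' : Fin c → Module.End k M''}
  {N : Type} [AddCommGroup N] [Module k N] {Y : Fin c → Module.End k N}

variable (M) in
/-- left action on Hom -/
def LH (Y : Fin c → Module.End k N) (i : Fin c) : Module.End k (M →ₗ[k] N) where
  toFun φ := Y i ∘ₗ φ
  map_add' x y := by ext; simp
  map_smul' r x := by ext; simp

variable (N) in
/-- precomposition -/
def pre (f : M →ₗ[k] M') : (M' →ₗ[k] N) →ₗ[k] (M →ₗ[k] N) where
  toFun φ := φ ∘ₗ f
  map_add' x y := by ext; simp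
  map_smul' r x := by ext; simp

variable (N) in
/-- right action on Hom -/
def RH (X : Fin c → Module.End k M) (i : Fin c) : Module.End k (M →ₗ[k] N) := pre N (X i)

lemma LH_pow (i : Fin c) (n : ℕ) (φ : M →ₗ[k] N) : (LH M Y i ^ n) φ = (Y i ^ n) ∘ₗ φ := by
  induction n generalizing φ with
  | zero => rfl
  | succ n ih => rw [pow_succ, Module.End.mul_apply, ih, pow_succ]; rfl

lemma pre_pow (f : M →ₗ[k] M) (n : ℕ) (φ : M →ₗ[k] N) : (pre N f ^ n) φ = φ ∘ₗ (f ^ n) := by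
  induction n generalizing φ with
  | zero => rfl
  | succ n ih => rw [pow_succ, Module.End.mul_apply, ih, pow_succ']; rfl

lemma Dat_hom (hX : IsRep a Q X) (hY : IsRep a Q Y) : Dat a Q (LH M Y) (RH N X) where
  LL i j h := by
    refine LinearMap.ext fun φ => LinearMap.ext fun m => ?_
    exact congrArg (fun F => F (φ m)) (hY.XX i j h)
  RR i j h := by
    refine LinearMap.ext fun φ => LinearMap.ext fun m => ?_
    have := congrArg (fun F => φ (F m)) (hX.XX j i h.symm)
    simp only [LinearMap.smul_apply, map_smul] at this
    exact this
  LR i j := rfl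
  La i := by
    refine LinearMap.ext fun φ => ?_
    rw [LH_pow, hY.Xa]; rfl
  Ra i := by
    refine LinearMap.ext fun φ => ?_
    unfold RH
    rw [pre_pow, hX.Xa]; simp

lemma FreeV_hom {i : Fin c} {y : Module.End k M} (h : FreeM a Q X i y) :
    FreeV a Q (LH M Y) (RH N X) i (pre N y) where
  SR j hj := by
    refine LinearMap.ext fun φ => LinearMap.ext fun m => ?_
    have := congrArg (fun F => φ (F m)) (h.Xy j hj)
    simp only [LinearMap.smul_apply, map_smul] at this
    exact this
  SL j := rfl
  f1 u hu := by
    refine LinearMap.ext fun φ => LinearMap.ext fun m => ?_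
    have := congrArg (fun F => φ (F m)) (h.f1 u hu)
    simp only [RH, Module.End.mul_apply, pre_pow, LinearMap.sub_apply, Module.End.one_apply] at this ⊢
    simp only [pre, LinearMap.coe_mk, AddHom.coe_mk, LinearMap.comp_apply] at this ⊢
    rw [← this, map_sub, map_sub]
  f2 u hu := by
    refine LinearMap.ext fun φ => LinearMap.ext fun m => ?_
    have := congrArg (fun F => φ (F m)) (h.f2 u hu)
    simp only [RH, Module.End.mul_apply, pre_pow, LinearMap.sub_apply, Module.End.one_apply] at this ⊢
    simp only [pre, LinearMap.coe_mk, AddHom.coe_mk, LinearMap.comp_apply] at this ⊢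
    rw [← this, map_sub]
    rfl

variable (a Q) in
/-- vanishing for representations -/
def HR (X : Fin c → Module.End k M) (Y : Fin c → Module.End k N) (n : ℕ) : Prop :=
  HV a Q (LH M Y) (RH N X) n

lemma HR_of_free (hQ : QM a Q) (hX : IsRep a Q X) (hY : IsRep a Q Y) (ha : 1 ≤ a)
    (h : ∀ i, ∃ y, FreeM a Q X i y) (n : ℕ) : HR a Q X Y n :=
  HV_of_free hQ (Dat_hom hX hY) ha
    (fun i => by obtain ⟨y, hy⟩ := h i; exact ⟨_, FreeV_hom hy⟩) n

lemma pre_intw {f : M →ₗ[k] M'} (hf : ∀ i m, f (X i m) = X' i (f m)) :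
    Intw (LH M' Y) (RH N X') (LH M Y) (RH N X) (pre N f) where
  l i v := rfl
  r i v := by
    refine LinearMap.ext fun m => ?_
    exact congrArg v (hf i m).symm

lemma HR_retract {f : M →ₗ[k] M'} (hf : ∀ i m, f (X i m) = X' i (f m))
    {g : M' →ₗ[k] M} (hg : ∀ i m, g (X' i m) = X i (g m)) (hgf : ∀ m, g (f m) = m) {n : ℕ}
    (h : HR a Q X' Y n) : HR a Q X Y n :=
  HV_retract (pre_intw hg) (pre_intw hf) (fun v => by
    refine LinearMap.ext fun m => ?_
    exact congrArg v (hgf m)) h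

lemma exists_SES {f : M →ₗ[k] M'} (hf : ∀ i m, f (X i m) = X' i (f m))
    {g : M' →ₗ[k] M''} (hg : ∀ i m, g (X' i m) = X'' i (g m)) (inj : Function.Injective f)
    (surj : Function.Surjective g) (ex : ∀ m, g m = 0 ↔ ∃ m', f m' = m) :
    ∃ σ τ, SES (LH M'' Y) (RH N X'') (LH M' Y) (RH N X') (LH M Y) (RH N X)
      (pre N g) (pre N f) σ τ := by
  obtain ⟨s, hs⟩ := f.exists_leftInverse_of_injective (LinearMap.ker_eq_bot.2 inj)
  obtain ⟨r, hr⟩ := g.exists_rightInverse_of_surjective (LinearMap.range_eq_top.2 surj)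
  have hs' : ∀ m, s (f m) = m := fun m => congrArg (fun F => F m) hs
  have hr' : ∀ m, g (r m) = m := fun m => congrArg (fun F => F m) hr
  refine ⟨pre N r, pre N s, pre_intw hg, pre_intw hf, ?_, ?_, ?_, ?_⟩
  · intro v hv
    refine LinearMap.ext fun m => ?_
    have := congrArg (fun F => F (r m)) hv
    simp only [pre, LinearMap.coe_mk, AddHom.coe_mk, LinearMap.comp_apply, hr'] at this
    exact this
  · intro v
    refine LinearMap.ext fun m => ?_
    have : g (f m) = 0 := (ex _).2 ⟨m, rfl⟩
    simp [pre, this]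
  · intro v
    refine LinearMap.ext fun m => ?_
    simp [pre, hs']
  · intro v hv
    refine LinearMap.ext fun m => ?_
    obtain ⟨m', hm'⟩ := (ex (m - r (g m))).1 (by rw [map_sub, hr', sub_self])
    have := congrArg (fun F => F m') hv
    simp only [pre, LinearMap.coe_mk, AddHom.coe_mk, LinearMap.comp_apply, hm', map_sub,
      LinearMap.zero_apply, sub_eq_zero] at this ⊢
    exact this.symm

end HomRep
end QCIProof

namespace QCIProof
section Rep
variable {k : Type} [Field k] {c a : ℕ} {Q : Fin c → Fin c → k}

lemma rep_vanish (hQ : QM a Q) (ha : 1 ≤ a) {N : Type} [AddCommGroup N] [Module k N]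
    {Y : Fin c → Module.End k N} (hY : IsRep a Q Y) (t : ℕ) :
    ∀ (M : Type) [AddCommGroup M] [Module k M] (X : Fin c → Module.End k M), IsRep a Q X →
      (∃ n0, ∀ n ≥ n0, HR a Q X Y n) → ∀ n, c ≤ n + t → HR a Q X Y n := by
  induction t with
  | zero =>
    intro M _ _ X hX h n hn
    exact gap hQ (Dat_hom hX hY) h n hn
  | succ t ih =>
    intro M _ _ X hX h n hn
    obtain ⟨E, _, _, XX, hXX, ⟨f, finj, hf⟩, hfree⟩ := exists_hull hQ hX ha Finset.univ
    have hcl : ∀ i, LinearMap.range f ≤ (LinearMap.range f).comap (XX i) := by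
      rintro i _ ⟨m, rfl⟩
      exact ⟨X i m, hf i m⟩
    let X' : Fin c → Module.End k (E ⧸ LinearMap.range f) :=
      fun i => (LinearMap.range f).mapQ (LinearMap.range f) (XX i) (hcl i)
    have hX'app : ∀ i e, X' i (Submodule.Quotient.mk e) = Submodule.Quotient.mk (XX i e) :=
      fun i e => rfl
    have hX'pow : ∀ i n e, (X' i ^ n) (Submodule.Quotient.mk e)
        = Submodule.Quotient.mk ((XX i ^ n) e) := by
      intro i n
      induction n with
      | zero => intro e; rfl
      | succ n ih => intro e; rw [pow_succ, Module.End.mul_apply, hX'app, ih, pow_succ]; rfl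
    have hX' : IsRep a Q X' := by
      constructor
      · intro i j hij
        refine LinearMap.ext fun e => ?_
        obtain ⟨e, rfl⟩ := Submodule.Quotient.mk_surjective _ e
        have := congrArg (fun F => (Submodule.Quotient.mk (F e) : E ⧸ LinearMap.range f))
          (hXX.XX i j hij)
        exact this
      · intro i
        refine LinearMap.ext fun e => ?_
        obtain ⟨e, rfl⟩ := Submodule.Quotient.mk_surjective _ e
        rw [hX'pow, hXX.Xa]; rfl
    obtain ⟨σ, τ, hS⟩ := exists_SES (Y := Y) (f := f) (g := (LinearMap.range f).mkQ)
      (X := X) (X' := XX) (X'' := X') hf (fun i m => rfl) finj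
      (Submodule.mkQ_surjective _) (fun m => by simp)
    have hE : ∀ n, HR a Q XX Y n :=
      HR_of_free hQ hXX hY ha (fun i => hfree i (Finset.mem_univ i))
    have hsh := fun n => SES.shift hQ (Dat_hom hXX hY) hS hE n
    refine (hsh n).1 (ih _ X' hX' ?_ (n+1) (by omega))
    obtain ⟨n0, h0⟩ := h
    refine ⟨n0 + 1, fun m hm => ?_⟩
    obtain ⟨m, rfl⟩ : ∃ m', m = m' + 1 := ⟨m - 1, by omega⟩
    exact (hsh m).2 (h0 m (by omega))

lemma rep_vanish_all (hQ : QM a Q) (ha : 1 ≤ a) {N : Type} [AddCommGroup N] [Module k N]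
    {Y : Fin c → Module.End k N} (hY : IsRep a Q Y)
    {M : Type} [AddCommGroup M] [Module k M] {X : Fin c → Module.End k M} (hX : IsRep a Q X)
    (h : ∃ n0, ∀ n ≥ n0, HR a Q X Y n) (n : ℕ) : HR a Q X Y n :=
  rep_vanish hQ ha hY c M X hX h n (by omega)

variable (c) in
/-- the commutation matrix -/
def Qm (q : k) (i j : Fin c) : k := if i < j then q else if j < i then q⁻¹ else 1

lemma QM_Qm {q : k} (h0 : q ≠ 0) (ha : q ^ a = 1) : QM a (Qm c q) where
  inv i j h := by
    unfold Qm
    rcases lt_or_gt_of_ne h with h | h <;> simp [h, h.not_gt]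
  ne i j := by unfold Qm; split_ifs <;> simp [h0]
  pw i j := by unfold Qm; split_ifs <;> simp [ha]
end Rep
end QCIProof

namespace QCIProof
section Bridge
variable {k : Type} [Field k] {c a : ℕ} {q : k}

variable (k c a q) in
/-- the generators -/
noncomputable def xg (i : Fin c) : QCI k c a q :=
  RingQuot.mkAlgHom k (QCIRel k c a q) (FreeAlgebra.ι k i)

lemma xg_pow (i : Fin c) : xg k c a q i ^ a = 0 := by
  have := RingQuot.mkAlgHom_rel k (QCIRel.pow (k := k) (a := a) (q := q) i)
  rw [map_pow, map_zero] at this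
  exact this

lemma xg_comm (i j : Fin c) (h : i < j) :
    xg k c a q i * xg k c a q j = q • (xg k c a q j * xg k c a q i) := by
  have := RingQuot.mkAlgHom_rel k (QCIRel.comm (k := k) (a := a) (q := q) i j h)
  rw [map_sub, map_smul, map_mul, map_mul, map_zero, sub_eq_zero] at this
  exact this

lemma xg_commQ (hq : q ≠ 0) (i j : Fin c) (h : i ≠ j) :
    xg k c a q i * xg k c a q j = Qm c q i j • (xg k c a q j * xg k c a q i) := by
  rcases lt_or_gt_of_ne h with h | h
  · rw [xg_comm i j h]; simp [Qm, h]
  · rw [xg_comm j i h]; simp [Qm, h, h.not_gt, hq]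

section
variable {M : Type} [AddCommGroup M] [Module k M] [Module (QCI k c a q) M]
  [IsScalarTower k (QCI k c a q) M]

variable (k c a q M) in
/-- the action of the generators -/
noncomputable def act (i : Fin c) : Module.End k M := Algebra.lsmul k k M (xg k c a q i)

lemma act_apply (i : Fin c) (m : M) : act k c a q M i m = xg k c a q i • m := rfl

lemma act_rep (hq : q ≠ 0) : IsRep a (Qm c q) (act k c a q M) where
  XX i j h := by
    unfold act
    rw [← map_mul, ← map_mul, xg_commQ hq i j h, map_smul]
  Xa i := by
    unfold act
    rw [← map_pow, xg_pow, map_zero]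

variable {N : Type} [AddCommGroup N] [Module k N] [Module (QCI k c a q) N]
  [IsScalarTower k (QCI k c a q) N]

lemma smul_of_comm (φ : M →ₗ[k] N) (h : ∀ i m, φ (xg k c a q i • m) = xg k c a q i • φ m)
    (r : QCI k c a q) : ∀ m, φ (r • m) = r • φ m := by
  obtain ⟨r, rfl⟩ := RingQuot.mkAlgHom_surjective k (QCIRel k c a q) r
  induction r using FreeAlgebra.induction with
  | grade0 r => intro m; rw [AlgHom.commutes, algebraMap_smul, algebraMap_smul, map_smul]
  | grade1 x => intro m; exact h x m
  | mul x y hx hy => intro m; rw [map_mul, mul_smul, mul_smul, hx, hy]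
  | add x y hx hy => intro m; rw [map_add, add_smul, add_smul, map_add, hx, hy]

/-- intertwiners are linear -/
def mkLin (φ : M →ₗ[k] N) (h : ∀ i m, φ (xg k c a q i • m) = xg k c a q i • φ m) :
    M →ₗ[QCI k c a q] N where
  toFun := φ
  map_add' := map_add φ
  map_smul' r m := smul_of_comm φ h r m

end

lemma exists_module {E : Type} [AddCommGroup E] [Module k E] {X : Fin c → Module.End k E}
    (hX : IsRep a (Qm c q) X) : ∃ (_ : Module (QCI k c a q) E),
      IsScalarTower k (QCI k c a q) E ∧ ∀ i e, xg k c a q i • e = X i e := by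
  let F : QCI k c a q →ₐ[k] Module.End k E := RingQuot.liftAlgHom k ⟨FreeAlgebra.lift k X, by
    rintro x y (i | ⟨i, j, h⟩)
    · rw [map_pow, FreeAlgebra.lift_ι_apply, hX.Xa, map_zero]
    · rw [map_sub, map_smul, map_mul, map_mul, FreeAlgebra.lift_ι_apply, FreeAlgebra.lift_ι_apply,
        map_zero, hX.XX i j h.ne]
      simp [Qm, h]⟩
  letI inst : Module (QCI k c a q) E := Module.compHom E F.toRingHom
  refine ⟨inst, ⟨fun r x e => ?_⟩, fun i e => ?_⟩
  · exact congrArg (fun G : Module.End k E => G e) (map_smul F r x)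
  · have : F (xg k c a q i) = X i := by
      unfold xg
      simp only [F, RingQuot.liftAlgHom_mkAlgHom_apply, FreeAlgebra.lift_ι_apply]
    exact congrArg (fun G : Module.End k E => G e) this

lemma HR_proj (hq : q ≠ 0) (hqa : q ^ a = 1) (ha : 1 ≤ a) {P : Type} [AddCommGroup P] [Module k P]
    [Module (QCI k c a q) P] [IsScalarTower k (QCI k c a q) P]
    [Module.Projective (QCI k c a q) P]
    {N : Type} [AddCommGroup N] [Module k N] {Y : Fin c → Module.End k N}
    (hY : IsRep a (Qm c q) Y) (n : ℕ) : HR a (Qm c q) (act k c a q P) Y n := by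
  have hQ : QM a (Qm c q) := QM_Qm (c := c) hq hqa
  obtain ⟨E, _, _, XX, hXX, ⟨f, fs, hf⟩, hfree⟩ :=
    exists_cover hQ (act_rep (M := P) hq) ha Finset.univ
  obtain ⟨_, _, hx⟩ := exists_module hXX
  let F : E →ₗ[QCI k c a q] P := mkLin f (fun i m => by rw [hx, hf]; rfl)
  obtain ⟨s, hs⟩ := Module.projective_lifting_property F LinearMap.id (fun p => fs p)
  have hE : HR a (Qm c q) XX Y n := HR_of_free hQ hXX hY ha (fun i => hfree i (Finset.mem_univ i)) n
  refine HR_retract (f := s.restrictScalars k) (g := f) ?_ hf ?_ hE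
  · intro i m
    rw [← hx]
    exact s.map_smul _ _
  · intro m
    exact congrArg (fun G => G m) hs

/-! finite dimensionality -/

section fd
variable {V : Type} [AddCommGroup V] [Module k V] {Q : Fin c → Fin c → k}
  {X : Fin c → Module.End k V}

lemma exists_fd (hX : IsRep a Q X) (ha : 1 ≤ a) (U : Submodule k V) [FiniteDimensional k U]
    (S : Finset (Fin c)) :
    ∃ P : Submodule k V, FiniteDimensional k P ∧ U ≤ P ∧ ∀ i ∈ S, ∀ p ∈ P, X i p ∈ P := by
  induction S using Finset.induction_on with
  | empty => exact ⟨U, inferInstance, le_rfl, by simp⟩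
  | insert i S hi ih =>
    obtain ⟨P, hP, hU, hS⟩ := ih
    have hpow : ∀ j, j ≠ i → ∀ s : ℕ, ∀ p, X j ((X i ^ s) p) = Q j i ^ s • (X i ^ s) (X j p) := by
      intro j hj s
      induction s with
      | zero => intro p; simp
      | succ s ih =>
        intro p
        rw [pow_succ, Module.End.mul_apply, ih]
        have := congrArg (fun F => F p) (hX.XX j i hj)
        simp only [Module.End.mul_apply, LinearMap.smul_apply] at this
        rw [this, map_smul, smul_smul, pow_succ, Module.End.mul_apply]
    refine ⟨⨆ s : Fin a, P.map (X i ^ (s : ℕ)), inferInstance, ?_, ?_⟩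
    · refine hU.trans (le_trans ?_ (le_iSup _ (⟨0, ha⟩ : Fin a)))
      simp [Module.End.one_eq_id]
    · intro j hj
      have key : (⨆ s : Fin a, P.map (X i ^ (s : ℕ))) ≤
          (⨆ s : Fin a, P.map (X i ^ (s : ℕ))).comap (X j) := by
        refine iSup_le fun s => ?_
        rintro _ ⟨p, hp, rfl⟩
        rw [Submodule.mem_comap]
        by_cases hji : j = i
        · subst hji
          rw [← Module.End.mul_apply, ← pow_succ']
          by_cases hs : (s : ℕ) + 1 < a
          · exact (le_iSup (fun s : Fin a => P.map (X j ^ (s : ℕ))) ⟨s + 1, hs⟩) ⟨p, hp, rfl⟩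
          · have : (s : ℕ) + 1 = a := by omega
            rw [this, hX.Xa]; simp
        · rw [hpow j hji]
          refine Submodule.smul_mem _ _ ?_
          exact (le_iSup (fun s : Fin a => P.map (X i ^ (s : ℕ))) s)
            ⟨X j p, hS j ((Finset.mem_insert.1 hj).resolve_left hji) p hp, rfl⟩
      exact fun p hp => key hp
end fd

lemma fd_of_finite (hq : q ≠ 0) (ha : 1 ≤ a) {M : Type} [AddCommGroup M] [Module k M]
    [Module (QCI k c a q) M] [IsScalarTower k (QCI k c a q) M] [Module.Finite (QCI k c a q) M] :
    FiniteDimensional k M := by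
  obtain ⟨G, hG⟩ := (Module.Finite.fg_top : (⊤ : Submodule (QCI k c a q) M).FG)
  obtain ⟨P, hP, hU, hS⟩ := exists_fd (act_rep (c := c) (M := M) hq) ha (Submodule.span k (G : Set M))
    Finset.univ
  have hcl : ∀ (r : QCI k c a q), ∀ p ∈ P, r • p ∈ P := by
    intro r
    obtain ⟨r, rfl⟩ := RingQuot.mkAlgHom_surjective k (QCIRel k c a q) r
    induction r using FreeAlgebra.induction with
    | grade0 r => intro m hm; rw [AlgHom.commutes, algebraMap_smul]; exact P.smul_mem r hm
    | grade1 x => intro m hm; exact hS x (Finset.mem_univ x) m hm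
    | mul x y hx hy => intro m hm; rw [map_mul, mul_smul]; exact hx _ (hy _ hm)
    | add x y hx hy => intro m hm; rw [map_add, add_smul]; exact P.add_mem (hx _ hm) (hy _ hm)
  let P' : Submodule (QCI k c a q) M := { P with smul_mem' := fun r p hp => hcl r p hp }
  have : (⊤ : Submodule (QCI k c a q) M) ≤ P' := by
    rw [← hG, Submodule.span_le]
    exact fun g hg => hU (Submodule.subset_span hg)
  have hT : P = ⊤ := eq_top_iff.2 fun m _ => this (Submodule.mem_top (x := m))
  subst hT
  exact Module.finite_def.2 ((Submodule.fg_iff_finiteDimensional _).2 hP)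

end Bridge
end QCIProof

namespace QCIProof
section Res
variable {k : Type} [Field k] {c a : ℕ} {q : k}
variable {N : Type} [AddCommGroup N] [Module k N] [Module (QCI k c a q) N]
  [IsScalarTower k (QCI k c a q) N]

section one
variable {P M : Type} [AddCommGroup P] [Module k P]
  [Module (QCI k c a q) P] [IsScalarTower k (QCI k c a q) P]
  [AddCommGroup M] [Module k M]
  [Module (QCI k c a q) M] [IsScalarTower k (QCI k c a q) M]

variable {K : Type} [AddCommGroup K] [Module k K]
  [Module (QCI k c a q) K] [IsScalarTower k (QCI k c a q) K]

lemma ses_ker (ε : P →ₗ[QCI k c a q] M) (hε : Function.Surjective ε)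
    (ι : K →ₗ[QCI k c a q] P) (hι : Function.Injective ι) (ex : ∀ m, ε m = 0 ↔ ∃ m', ι m' = m) :
    ∃ σ τ, SES (LH M (act k c a q N)) (RH N (act k c a q M))
      (LH P (act k c a q N)) (RH N (act k c a q P))
      (LH K (act k c a q N)) (RH N (act k c a q K))
      (pre N (ε.restrictScalars k)) (pre N (ι.restrictScalars k)) σ τ :=
  exists_SES (fun i m => ι.map_smul _ _) (fun i m => ε.map_smul _ _) hι hε ex

lemma HR_shift (hq : q ≠ 0) (hqa : q ^ a = 1) (ha : 1 ≤ a) [Module.Projective (QCI k c a q) P]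
    (ε : P →ₗ[QCI k c a q] M) (hε : Function.Surjective ε)
    (ι : K →ₗ[QCI k c a q] P) (hι : Function.Injective ι) (ex : ∀ m, ε m = 0 ↔ ∃ m', ι m' = m)
    (n : ℕ) :
    HR a (Qm c q) (act k c a q M) (act k c a q N) (n + 1) ↔
      HR a (Qm c q) (act k c a q K) (act k c a q N) n := by
  obtain ⟨σ, τ, h⟩ := ses_ker (N := N) ε hε ι hι ex
  exact SES.shift (QM_Qm (c := c) hq hqa) (Dat_hom (act_rep hq) (act_rep hq)) h
    (fun n => HR_proj hq hqa ha (act_rep hq) n) n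

lemma HR_base (hq : q ≠ 0) (hqa : q ^ a = 1) (ha : 1 ≤ a) [Module.Projective (QCI k c a q) P]
    (ε : P →ₗ[QCI k c a q] M) (hε : Function.Surjective ε)
    (ι : K →ₗ[QCI k c a q] P) (hι : Function.Injective ι) (ex : ∀ m, ε m = 0 ↔ ∃ m', ι m' = m) :
    HR a (Qm c q) (act k c a q M) (act k c a q N) 0 ↔
      ∀ f : K →ₗ[QCI k c a q] N, ∃ g : P →ₗ[QCI k c a q] N, ∀ x : K, g (ι x) = f x := by
  obtain ⟨σ, τ, h⟩ := ses_ker (N := N) ε hε ι hι ex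
  refine (SES.base (QM_Qm (c := c) hq hqa) (Dat_hom (act_rep hq) (act_rep hq)) h
    (HR_proj hq hqa ha (act_rep hq) 0)).trans ⟨fun H f => ?_, fun H f hf => ?_⟩
  · obtain ⟨g, hg, hgf⟩ := H (f.restrictScalars k) (fun i => by
      refine LinearMap.ext fun m => ?_
      exact (f.map_smul _ _).symm)
    refine ⟨mkLin g (fun i m => ?_), fun x => ?_⟩
    · exact (congrArg (fun F => F m) (hg i)).symm
    · exact congrArg (fun F => F x) hgf
  · obtain ⟨g, hg⟩ := H (mkLin f (fun i m => (congrArg (fun F => F m) (hf i)).symm))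
    refine ⟨g.restrictScalars k, fun i => ?_, ?_⟩
    · refine LinearMap.ext fun m => ?_
      exact (g.map_smul _ _).symm
    · refine LinearMap.ext fun m => ?_
      exact hg m
end one

lemma HR_res (hq : q ≠ 0) (hqa : q ^ a = 1) (ha : 1 ≤ a) (n : ℕ) :
    ∀ (P : ℕ → Type) [∀ n, AddCommGroup (P n)] [∀ n, Module k (P n)]
      [∀ n, Module (QCI k c a q) (P n)] [∀ n, IsScalarTower k (QCI k c a q) (P n)]
      [∀ n, Module.Projective (QCI k c a q) (P n)]
      (M : Type) [AddCommGroup M] [Module k M] [Module (QCI k c a q) M]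
      [IsScalarTower k (QCI k c a q) M]
      (d : ∀ n, P (n + 1) →ₗ[QCI k c a q] P n) (ε : P 0 →ₗ[QCI k c a q] M),
      Function.Surjective ε → (∀ x, ε x = 0 ↔ ∃ y, d 0 y = x) →
      (∀ n x, d n x = 0 ↔ ∃ y, d (n + 1) y = x) →
      (HR a (Qm c q) (act k c a q M) (act k c a q N) n ↔
        ∀ f : P (n + 1) →ₗ[QCI k c a q] N, (∀ y, f (d (n + 1) y) = 0) →
          ∃ g : P n →ₗ[QCI k c a q] N, ∀ x, g (d n x) = f x) := by
  induction n with
  | zero =>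
    intro P _ _ _ _ _ M _ _ _ _ d ε hε h0 hd
    have hker : ∀ m, ε m = 0 ↔ ∃ m', (LinearMap.ker ε).subtype m' = m :=
      fun m => ⟨fun h => ⟨⟨m, h⟩, rfl⟩, by rintro ⟨m, rfl⟩; exact m.2⟩
    rw [HR_base hq hqa ha ε hε (K := LinearMap.ker ε) (LinearMap.ker ε).subtype
      Subtype.val_injective hker]
    constructor
    · intro H f hf
      have hch : ∀ x : LinearMap.ker ε, ∃ y, d 0 y = x := fun x => (h0 x).1 x.2
      have hwd : ∀ y y', d 0 y = d 0 y' → f y = f y' := by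
        intro y y' h
        have : d 0 (y - y') = 0 := by rw [map_sub, h, sub_self]
        obtain ⟨z, hz⟩ := (hd 0 _).1 this
        have := hf z
        rw [hz, map_sub, sub_eq_zero] at this
        exact this
      choose s hs using hch
      obtain ⟨g, hg⟩ := H
        { toFun := fun x => f (s x)
          map_add' := fun x y => by
            rw [← map_add]
            apply hwd
            rw [map_add, hs, hs, hs]; rfl
          map_smul' := fun r x => by
            rw [RingHom.id_apply, ← map_smul]
            apply hwd
            rw [map_smul, hs, hs]; rfl }
      refine ⟨g, fun x => ?_⟩
      have := hg ⟨d 0 x, (h0 _).2 ⟨x, rfl⟩⟩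
      refine this.trans ?_
      exact hwd _ _ (hs _)
    · intro H f
      obtain ⟨g, hg⟩ := H (f ∘ₗ (d 0).codRestrict (LinearMap.ker ε) (fun x => (h0 _).2 ⟨x, rfl⟩))
        (fun y => by
          have : d 0 (d 1 y) = 0 := (hd 0 _).2 ⟨y, rfl⟩
          rw [LinearMap.comp_apply]
          convert map_zero f
          exact Subtype.ext this)
      refine ⟨g, fun x => ?_⟩
      obtain ⟨y, hy⟩ := (h0 x).1 x.2
      rw [Submodule.subtype_apply, ← hy, hg, LinearMap.comp_apply]
      congr 1
      exact Subtype.ext hy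
  | succ n ih =>
    intro P _ _ _ _ _ M _ _ _ _ d ε hε h0 hd
    have hker : ∀ m, ε m = 0 ↔ ∃ m', (LinearMap.ker ε).subtype m' = m :=
      fun m => ⟨fun h => ⟨⟨m, h⟩, rfl⟩, by rintro ⟨m, rfl⟩; exact m.2⟩
    refine (HR_shift hq hqa ha ε hε (K := LinearMap.ker ε) (LinearMap.ker ε).subtype
      Subtype.val_injective hker n).trans ?_
    refine ih (fun n => P (n + 1)) (LinearMap.ker ε) (fun n => d (n + 1))
      ((d 0).codRestrict (LinearMap.ker ε) (fun x => (h0 _).2 ⟨x, rfl⟩)) ?_ ?_ ?_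
    · intro x
      obtain ⟨y, hy⟩ := (h0 x).1 x.2
      exact ⟨y, Subtype.ext hy⟩
    · intro x
      rw [← hd 0 x]
      exact ⟨fun h => congrArg Subtype.val h, fun h => Subtype.ext h⟩
    · intro n x
      exact hd (n + 1) x
end Res

section Cat
variable {k : Type} [Field k] {c a : ℕ} {q : k}

open scoped ModuleCat.Algebra

lemma ext_iff (M N : ModuleCat.{0} (QCI k c a q)) (P : ProjectiveResolution M) (n : ℕ) :
    Subsingleton (((_root_.Ext k (ModuleCat (QCI k c a q)) (n + 1)).obj (Opposite.op M)).obj N) ↔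
    ∀ f : P.complex.X (n + 1) →ₗ[QCI k c a q] N,
      (∀ y, f ((P.complex.d (n + 2) (n + 1)).hom y) = 0) →
        ∃ g : P.complex.X n →ₗ[QCI k c a q] N, ∀ x, g ((P.complex.d (n + 1) n).hom x) = f x := by
  have e := P.isoExt (R := k) (n + 1) N
  have h1 : Subsingleton (((_root_.Ext k (ModuleCat (QCI k c a q)) (n + 1)).obj
      (Opposite.op M)).obj N) ↔ (P.complex.linearYonedaObj k N).ExactAt (n + 1) := by
    rw [HomologicalComplex.exactAt_iff_isZero_homology, ← e.isZero_iff]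
    exact ⟨fun h => ModuleCat.isZero_of_subsingleton _, fun h => ModuleCat.subsingleton_of_isZero h⟩
  rw [h1, HomologicalComplex.exactAt_iff' _ n (n + 1) (n + 2) (by simp) (by simp),
    ShortComplex.moduleCat_exact_iff]
  constructor
  · intro H f hf
    obtain ⟨g, hg⟩ := H (ModuleCat.ofHom f) (by
      change P.complex.d (n + 2) (n + 1) ≫ ModuleCat.ofHom f = 0
      ext y
      exact hf y)
    refine ⟨ModuleCat.Hom.hom (show P.complex.X n ⟶ N from g), fun x => ?_⟩
    have hg' : P.complex.d (n + 1) n ≫ (show P.complex.X n ⟶ N from g) = ModuleCat.ofHom f := hg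
    exact congrArg (fun F => F.hom x) hg'
  · intro H f hf
    have hf' : P.complex.d (n + 2) (n + 1) ≫ (show P.complex.X (n + 1) ⟶ N from f) = 0 := hf
    obtain ⟨g, hg⟩ := H (ModuleCat.Hom.hom (show P.complex.X (n + 1) ⟶ N from f)) (fun y => 
      congrArg (fun F => F.hom y) hf')
    refine ⟨ModuleCat.ofHom g, ?_⟩
    change P.complex.d (n + 1) n ≫ ModuleCat.ofHom g = (show P.complex.X (n + 1) ⟶ N from f)
    ext x
    exact hg x

lemma ext_HR (hq : q ≠ 0) (hqa : q ^ a = 1) (ha : 1 ≤ a) (M N : ModuleCat.{0} (QCI k c a q))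
    (n : ℕ) :
    Subsingleton (((_root_.Ext k (ModuleCat (QCI k c a q)) (n + 1)).obj (Opposite.op M)).obj N) ↔
    HR a (Qm c q) (act k c a q M) (act k c a q N) n := by
  have P : ProjectiveResolution M := projectiveResolution M
  rw [ext_iff M N P n]
  have hp : ∀ n, Module.Projective (QCI k c a q) (P.complex.X n) := fun n =>
    (IsProjective.iff_projective _).2 (P.projective n)
  refine (HR_res hq hqa ha n (fun n => P.complex.X n) M (fun n => (P.complex.d (n + 1) n).hom)
    (ModuleCat.Hom.hom (show P.complex.X 0 ⟶ M from P.π.f 0)) ?_ ?_ ?_).symm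
  · have : Epi (show P.complex.X 0 ⟶ M from P.π.f 0) := inferInstanceAs (Epi (P.π.f 0))
    exact (ModuleCat.epi_iff_surjective _).1 this
  · intro x
    constructor
    · exact (ShortComplex.moduleCat_exact_iff _).1 P.exact₀ x
    · rintro ⟨y, rfl⟩
      exact congrArg (fun F => F.hom y) P.complex_d_comp_π_f_zero
  · intro n x
    constructor
    · exact (ShortComplex.moduleCat_exact_iff _).1 (P.exact_succ n) x
    · rintro ⟨y, rfl⟩
      exact congrArg (fun F => F.hom y) (P.complex.d_comp_d (n + 2) (n + 1) n)

lemma main (hq : q ≠ 0) (hqa : q ^ a = 1) (ha : 1 ≤ a) (M N : ModuleCat.{0} (QCI k c a q))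
    [Module.Finite (QCI k c a q) M] [Module.Finite (QCI k c a q) N] :
    (∀ n : ℕ, 0 < n → Subsingleton
      (((_root_.Ext k (ModuleCat (QCI k c a q)) n).obj (Opposite.op M)).obj N)) ∨
    ∃ m₀ : ℕ,
      (∀ n ≥ m₀, Even n → Nontrivial
        (((_root_.Ext k (ModuleCat (QCI k c a q)) n).obj (Opposite.op M)).obj N)) ∨
      (∀ n ≥ m₀, Odd n → Nontrivial
        (((_root_.Ext k (ModuleCat (QCI k c a q)) n).obj (Opposite.op M)).obj N)) := by
  have : FiniteDimensional k M := fd_of_finite (c := c) (a := a) (q := q) hq ha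
  have : FiniteDimensional k N := fd_of_finite (c := c) (a := a) (q := q) hq ha
  have hE := ext_HR hq hqa ha M N
  obtain ⟨n0, hn0⟩ := noeth (a := a) (Q := Qm c q) (L := LH M (act k c a q N))
    (R := RH N (act k c a q M))
  change ∀ n ≥ n0, HR a (Qm c q) (act k c a q M) (act k c a q N) n →
    HR a (Qm c q) (act k c a q M) (act k c a q N) (n + 2) at hn0
  have hprop : ∀ n ≥ n0, HR a (Qm c q) (act k c a q M) (act k c a q N) n → ∀ t,
      HR a (Qm c q) (act k c a q M) (act k c a q N) (n + 2 * t) := by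
    intro n hn h t
    induction t with
    | zero => exact h
    | succ t ih => exact hn0 (n + 2 * t) (by omega) ih
  by_cases H1 : ∀ n ≥ n0 + 1, Even n → Nontrivial
        (((_root_.Ext k (ModuleCat (QCI k c a q)) n).obj (Opposite.op M)).obj N)
  · exact Or.inr ⟨_, Or.inl H1⟩
  by_cases H2 : ∀ n ≥ n0 + 1, Odd n → Nontrivial
        (((_root_.Ext k (ModuleCat (QCI k c a q)) n).obj (Opposite.op M)).obj N)
  · exact Or.inr ⟨_, Or.inr H2⟩
  left
  push Not at H1 H2
  obtain ⟨n1, hn1, he, h1⟩ := H1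
  obtain ⟨n2, hn2, ho, h2⟩ := H2
  obtain ⟨n1, rfl⟩ : ∃ m, n1 = m + 1 := ⟨n1 - 1, by omega⟩
  obtain ⟨n2, rfl⟩ : ∃ m, n2 = m + 1 := ⟨n2 - 1, by omega⟩
  rw [hE] at h1 h2
  have hall := rep_vanish_all (QM_Qm (c := c) hq hqa) ha (act_rep (M := N) hq)
    (act_rep (M := M) hq) ⟨n1 + n2, fun n hn => by
      obtain ⟨u, hu⟩ := he
      obtain ⟨v, hv⟩ := ho
      rcases Nat.even_or_odd' n with ⟨w, hw | hw⟩
      · have := hprop n2 (by omega) h2 (w - v)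
        rwa [show n2 + 2 * (w - v) = n by omega] at this
      · have := hprop n1 (by omega) h1 (w - (u - 1))
        rwa [show n1 + 2 * (w - (u - 1)) = n by omega] at this⟩
  intro n hn
  obtain ⟨n, rfl⟩ : ∃ m, n = m + 1 := ⟨n - 1, by omega⟩
  exact (hE n).2 (hall n)
end Cat
end QCIProof

/-- Let `k` be a field, `c ≥ 1`, `a ≥ 2`, and `q ∈ k` nonzero with
`q ^ a = 1`.  Let `A = A_{c,q}^a` be the corresponding quantum complete intersection.
Then for finitely generated left `A`-modules `M, N`, either `Ext_A^n(M,N) = 0` for all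
`n > 0`, or there is a non-negative integer `m₀` such that `Ext_A^n(M,N) ≠ 0` for all
even `n ≥ m₀`, or for all odd `n ≥ m₀`. -/
theorem stmt_11 (k : Type) [Field k] (c a : ℕ) (hc : 1 ≤ c) (ha : 2 ≤ a)
    (q : k) (hq0 : q ≠ 0) (hqa : q ^ a = 1)
    (M N : Type) [AddCommGroup M] [Module (QCI k c a q) M] [Module.Finite (QCI k c a q) M]
    [AddCommGroup N] [Module (QCI k c a q) N] [Module.Finite (QCI k c a q) N] :
    (∀ n : ℕ, 0 < n → Subsingleton
      (((_root_.Ext k (ModuleCat (QCI k c a q)) n).obj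
        (Opposite.op (ModuleCat.of (QCI k c a q) M))).obj (ModuleCat.of (QCI k c a q) N))) ∨
    ∃ m₀ : ℕ,
      (∀ n ≥ m₀, Even n → Nontrivial
        (((_root_.Ext k (ModuleCat (QCI k c a q)) n).obj
          (Opposite.op (ModuleCat.of (QCI k c a q) M))).obj (ModuleCat.of (QCI k c a q) N))) ∨
      (∀ n ≥ m₀, Odd n → Nontrivial
        (((_root_.Ext k (ModuleCat (QCI k c a q)) n).obj
          (Opposite.op (ModuleCat.of (QCI k c a q) M))).obj (ModuleCat.of (QCI k c a q) N))) := by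
  exact QCIProof.main hq0 hqa (by omega) (ModuleCat.of (QCI k c a q) M) (ModuleCat.of (QCI k c a q) N)
end

section
/- Let k be a field, c ≥ 1 an integer, and A the exterior algebra k⟨x_1, …, x_c⟩/(x_i^2 for all i, x_i x_j + x_j x_i for all i ≠ j), equivalently the exterior algebra on a c-dimensional k-vector space. Then, given two finitely generated left A-modules M and N, either Ext_A^n(M, N) = 0 for all n > 0, or there exists a non-negative integer m_0 such that Ext_A^n(M, N) ≠ 0 for all even integers n ≥ m_0, or Ext_A^n(M, N) ≠ 0 for all odd integers n ≥ m_0. -/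
open CategoryTheory

set_option linter.unusedSectionVars false
set_option linter.unusedSimpArgs false

namespace ExtAux

section Comb

variable {k : Type*} [Field k] {ι : Type*} [Fintype ι] [DecidableEq ι]
  {H : Type*} [AddCommGroup H] [Module k H]

/-- The operator `∑ χ_i A_i` on polynomials (power series) with coefficients in `H`. -/
noncomputable def Dop (A : Bool → ι → Module.End k H) (ε : Bool) (F : (ι →₀ ℕ) → H)
    (s : ι →₀ ℕ) : H :=
  ∑ i, if s i = 0 then 0 else A ε i (F (s - Finsupp.single i 1))

/-- Multiplication by `χ_j`. -/
noncomputable def Xs (j : ι) (F : (ι →₀ ℕ) → H) (s : ι →₀ ℕ) : H :=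
  if s j = 0 then 0 else F (s - Finsupp.single j 1)

/-- Multi-indices of degree `n` supported on `J`. -/
def Rg (J : Finset ι) (n : ℕ) (s : ι →₀ ℕ) : Prop := (∀ i, s i ≠ 0 → i ∈ J) ∧ s.degree = n

/-- Exactness in degree `n`. -/
def Ex (A : Bool → ι → Module.End k H) (J : Finset ι) (ε : Bool) (n : ℕ) : Prop :=
  ∀ F : (ι →₀ ℕ) → H, (∀ s, Rg J (n + 1) s → Dop A ε F s = 0) →
    ∃ G : (ι →₀ ℕ) → H, ∀ s, Rg J n s → F s = Dop A (!ε) G s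

/-- The relations making `Dop` a differential. -/
def Rel (A : Bool → ι → Module.End k H) : Prop :=
  (∀ ε i j u, A ε i (A (!ε) j u) + A ε j (A (!ε) i u) = 0) ∧ (∀ ε i u, A ε i (A (!ε) i u) = 0)

lemma degree_sub {s : ι →₀ ℕ} {i : ι} (h : s i ≠ 0) :
    (s - Finsupp.single i 1).degree + 1 = s.degree := by
  have : s = (s - Finsupp.single i 1) + Finsupp.single i 1 := by
    ext t
    by_cases ht : i = t
    · subst ht; simp; omega
    · simp [Finsupp.single_apply, ht]
  conv_rhs => rw [this]
  simp

lemma Rg.sub {J : Finset ι} {n : ℕ} {s : ι →₀ ℕ} {i : ι} (hs : Rg J (n + 1) s) (h : s i ≠ 0) :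
    Rg J n (s - Finsupp.single i 1) := by
  refine ⟨fun t ht => hs.1 t fun h0 => ht (by simp [h0]), ?_⟩
  have := degree_sub h
  have := hs.2
  omega

lemma Rg.add {J : Finset ι} {n : ℕ} {s : ι →₀ ℕ} {i : ι} (hs : Rg J n s) (h : i ∈ J) :
    Rg J (n + 1) (s + Finsupp.single i 1) := by
  refine ⟨fun t ht => ?_, by simp [hs.2]⟩
  by_cases hti : i = t
  · exact hti ▸ h
  · exact hs.1 t (by simpa [Finsupp.single_apply, hti] using ht)

lemma Rg.mono {J J' : Finset ι} (hJ : J ⊆ J') {n : ℕ} {s : ι →₀ ℕ} (hs : Rg J n s) : Rg J' n s :=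
  ⟨fun i h => hJ (hs.1 i h), hs.2⟩

variable (A : Bool → ι → Module.End k H)

lemma Dop_add (ε) (F G : (ι →₀ ℕ) → H) (s) : Dop A ε (F + G) s = Dop A ε F s + Dop A ε G s := by
  simp only [Dop, ← Finset.sum_add_distrib]
  refine Finset.sum_congr rfl fun i _ => ?_
  split_ifs <;> simp

lemma Dop_sub (ε) (F G : (ι →₀ ℕ) → H) (s) : Dop A ε (F - G) s = Dop A ε F s - Dop A ε G s := by
  simp only [Dop, ← Finset.sum_sub_distrib]
  refine Finset.sum_congr rfl fun i _ => ?_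
  split_ifs <;> simp

lemma Dop_congr {J : Finset ι} {n : ℕ} (ε) {F G : (ι →₀ ℕ) → H} (h : ∀ s, Rg J n s → F s = G s)
    (s) (hs : Rg J (n + 1) s) : Dop A ε F s = Dop A ε G s := by
  refine Finset.sum_congr rfl fun i _ => ?_
  split_ifs with h0
  · rfl
  · rw [h _ (hs.sub h0)]

lemma sub_sub_comm' (s : ι →₀ ℕ) (i j : ι) : s - Finsupp.single i 1 - Finsupp.single j 1
    = s - Finsupp.single j 1 - Finsupp.single i 1 := by
  ext t; simp only [Finsupp.tsub_apply]; omega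

lemma swap_cond (s : ι →₀ ℕ) (i j : ι) :
    (s i ≠ 0 ∧ (s - Finsupp.single i 1 : ι →₀ ℕ) j ≠ 0) ↔ (s j ≠ 0 ∧ (s - Finsupp.single j 1 : ι →₀ ℕ) i ≠ 0) := by
  by_cases h : i = j
  · subst h; rfl
  · simp [Finsupp.single_apply, h, Ne.symm h]; tauto

lemma Dop_Dop (hA : Rel A) (ε) (F : (ι →₀ ℕ) → H) (s) : Dop A ε (Dop A (!ε) F) s = 0 := by
  have key : Dop A ε (Dop A (!ε) F) s = ∑ p : ι × ι,
      if (s p.1 ≠ 0 ∧ (s - Finsupp.single p.1 1 : ι →₀ ℕ) p.2 ≠ 0) then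
        A ε p.1 (A (!ε) p.2 (F (s - Finsupp.single p.1 1 - Finsupp.single p.2 1))) else 0 := by
    rw [Fintype.sum_prod_type]
    refine Finset.sum_congr rfl fun i _ => ?_
    by_cases h : s i = 0
    · simp [h]
    · simp only [h, if_false, Dop, map_sum]
      refine Finset.sum_congr rfl fun j _ => ?_
      by_cases h' : (s - Finsupp.single i 1 : ι →₀ ℕ) j = 0
      · simp [h, h', -Finsupp.coe_tsub]
      · simp [h, h', -Finsupp.coe_tsub]
  rw [key]
  refine Finset.sum_involution (fun p _ => p.swap) ?_ ?_ (fun _ _ => Finset.mem_univ _)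
    (fun p _ => Prod.swap_swap p)
  · rintro ⟨i, j⟩ -
    simp only [Prod.swap, swap_cond s j i, sub_sub_comm' s j i]
    split_ifs
    · exact hA.1 _ _ _ _
    · simp
  · rintro ⟨i, j⟩ - hne heq
    simp only [Prod.swap, Prod.mk.injEq] at heq
    obtain ⟨rfl, -⟩ := heq
    apply hne
    simp [hA.2]

lemma Dop_Xs (ε) (j : ι) (F : (ι →₀ ℕ) → H) : Dop A ε (Xs j F) = Xs j (Dop A ε F) := by
  funext s
  have h1 : Dop A ε (Xs j F) s = ∑ i, if (s i ≠ 0 ∧ (s - Finsupp.single i 1 : ι →₀ ℕ) j ≠ 0) then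
      A ε i (F (s - Finsupp.single i 1 - Finsupp.single j 1)) else 0 := by
    refine Finset.sum_congr rfl fun i _ => ?_
    by_cases h : s i = 0
    · simp [h]
    · by_cases h' : (s - Finsupp.single i 1 : ι →₀ ℕ) j = 0
      · simp [Xs, h, h', -Finsupp.coe_tsub]
      · simp [Xs, h, h', -Finsupp.coe_tsub]
  have h2 : Xs j (Dop A ε F) s = ∑ i, if (s j ≠ 0 ∧ (s - Finsupp.single j 1 : ι →₀ ℕ) i ≠ 0) then
      A ε i (F (s - Finsupp.single j 1 - Finsupp.single i 1)) else 0 := by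
    by_cases h : s j = 0
    · simp [Xs, h]
    · simp only [Xs, h, if_false, Dop]
      refine Finset.sum_congr rfl fun i _ => ?_
      by_cases h' : (s - Finsupp.single j 1 : ι →₀ ℕ) i = 0
      · simp [h, h', -Finsupp.coe_tsub]
      · simp [h, h', -Finsupp.coe_tsub]
  rw [h1, h2]
  simp only [swap_cond s j, sub_sub_comm' s j]

/-- Division by `χ_j`. -/
lemma exists_div {J : Finset ι} {j : ι} {n : ℕ} {G : (ι →₀ ℕ) → H}
    (h : ∀ s, Rg J n s → G s = 0) :
    ∃ u : (ι →₀ ℕ) → H, ∀ s, Rg (insert j J) n s → G s = Xs j u s := by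
  refine ⟨fun s => G (s + Finsupp.single j 1), fun s hs => ?_⟩
  by_cases h0 : s j = 0
  · simp only [Xs, h0, if_true]
    refine h s ⟨fun i hi => ?_, hs.2⟩
    have := hs.1 i hi
    rcases Finset.mem_insert.1 this with rfl | h'
    · exact absurd h0 hi
    · exact h'
  · simp only [Xs, h0, if_false]
    congr 1
    ext t
    by_cases ht : j = t
    · subst ht; simp; omega
    · simp [Finsupp.single_apply, ht]

lemma Xs_cancel {J : Finset ι} {j : ι} (hj : j ∈ J) {n : ℕ} {u v : (ι →₀ ℕ) → H}
    (h : ∀ s, Rg J (n + 1) s → Xs j u s = Xs j v s) (s) (hs : Rg J n s) : u s = v s := by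
  have := h _ (hs.add hj)
  simpa [Xs] using this

lemma Xs_congr {J : Finset ι} {j : ι} {n : ℕ} {u v : (ι →₀ ℕ) → H}
    (h : ∀ s, Rg J n s → u s = v s) (s) (hs : Rg J (n + 1) s) : Xs j u s = Xs j v s := by
  unfold Xs
  split_ifs with h0
  · rfl
  · exact h _ (hs.sub h0)

/-- Contractible case: exactness in all positive degrees. -/
lemma Ex_of_contract (hA : Rel A)
    (hh : ∀ ε j u, ∃ y, ∀ i, A ε i u = 0 → A (!ε) i y = if i = j then u else 0)
    (J : Finset ι) : ∀ n, ∀ ε, Ex A J ε (n + 1) := by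
  induction J using Finset.induction_on with
  | empty =>
    intro n ε F _
    refine ⟨0, fun s hs => ?_⟩
    exfalso
    have h0 : s = 0 := by
      ext i
      by_contra h
      simpa using hs.1 i h
    have := hs.2
    simp [h0] at this
  | insert j J hjJ IH =>
    intro n
    induction n with
    | zero =>
      intro ε F hF
      obtain ⟨G0, hG0⟩ := IH 0 ε F fun s hs => hF s (hs.mono (Finset.subset_insert _ _))
      obtain ⟨u, hu⟩ := exists_div (j := j) (G := F - Dop A (!ε) G0) (n := 1) (J := J)
        (fun s hs => by simp [hG0 s hs])
      have hu2 : ∀ s, Rg (insert j J) 1 s → Dop A ε u s = 0 := by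
        apply Xs_cancel (j := j) (v := 0) (Finset.mem_insert_self _ _)
        intro s hs
        rw [← Dop_Xs, ← Dop_congr A ε hu s hs, Dop_sub, Dop_Dop A hA, hF s hs]
        simp [Xs]
      obtain ⟨y, hy⟩ := hh ε j (u 0)
      refine ⟨G0 + fun _ => y, fun s hs => ?_⟩
      have hs1 := hs
      have : ∃ i, s = Finsupp.single i 1 := by
        have h1 := hs.2
        have : s ≠ 0 := by rintro rfl; simp at h1
        obtain ⟨i, hi⟩ := Finsupp.ne_iff.1 this
        refine ⟨i, ?_⟩
        have h2 := degree_sub hi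
        have h3 : (s - Finsupp.single i 1).degree = 0 := by omega
        rw [Finsupp.degree_eq_zero_iff] at h3
        ext t
        have h4 := DFunLike.congr_fun h3 t
        by_cases ht : i = t
        · subst ht; simp at h4 hi ⊢; omega
        · simpa [Finsupp.single_apply, ht] using h4
      obtain ⟨i, rfl⟩ := this
      have hsingle : ∀ ε (f : (ι →₀ ℕ) → H), Dop A ε f (Finsupp.single i 1) = A ε i (f 0) := by
        intro ε f
        unfold Dop
        rw [Finset.sum_eq_single i]
        · simp
        · intro b _ hb; simp [Finsupp.single_apply, Ne.symm hb]
        · simp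
      have e1 := hu _ hs
      have e2 := hu2 _ hs
      rw [hsingle] at e2
      rw [Dop_add, hsingle _ (fun _ => y), hy i e2, ← sub_eq_iff_eq_add']
      refine e1.trans ?_
      unfold Xs
      by_cases hij : i = j
      · subst hij; simp
      · simp [Finsupp.single_apply, hij]
    | succ n ihn =>
      intro ε F hF
      obtain ⟨G0, hG0⟩ := IH (n + 1) ε F fun s hs => hF s (hs.mono (Finset.subset_insert _ _))
      obtain ⟨u, hu⟩ := exists_div (j := j) (G := F - Dop A (!ε) G0) (n := n + 2) (J := J)
        (fun s hs => by simp [hG0 s hs])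
      have hu2 : ∀ s, Rg (insert j J) (n + 2) s → Dop A ε u s = 0 := by
        apply Xs_cancel (j := j) (v := 0) (Finset.mem_insert_self _ _)
        intro s hs
        rw [← Dop_Xs, ← Dop_congr A ε hu s hs, Dop_sub, Dop_Dop A hA, hF s hs]
        simp [Xs]
      obtain ⟨v, hv⟩ := ihn ε u hu2
      refine ⟨G0 + Xs j v, fun s hs => ?_⟩
      rw [Dop_add, Dop_Xs, ← Xs_congr hv s hs, ← hu s hs]
      simp

/-- Eventual exactness implies exactness in all positive degrees. -/
lemma Ex_of_eventually (hA : Rel A) (J : Finset ι) (N : ℕ) (hN : ∀ n ≥ N, ∀ ε, Ex A J ε n) :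
    ∀ n, 1 ≤ n → ∀ ε, Ex A J ε n := by
  induction J using Finset.induction_on generalizing N with
  | empty =>
    intro n hn ε F _
    refine ⟨0, fun s hs => ?_⟩
    exfalso
    have h0 : s = 0 := by
      ext i
      by_contra h
      simpa using hs.1 i h
    have := hs.2
    simp [h0] at this
    omega
  | insert j J hjJ IH =>
    have hJ : ∀ n, 1 ≤ n → ∀ ε, Ex A J ε n := by
      refine IH N fun n hn ε F hF => ?_
      classical
      let F' : (ι →₀ ℕ) → H := fun s => if Rg J n s then F s else 0
      have hF' : ∀ s, Rg J n s → F s = F' s := fun s hs => by simp [F', hs]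
      obtain ⟨u, hu⟩ := exists_div (j := j) (G := Dop A ε F') (n := n + 1) (J := J)
        (fun s hs => by rw [← Dop_congr A ε hF' s hs, hF s hs])
      have hu2 : ∀ s, Rg (insert j J) (n + 1) s → Dop A (!ε) u s = 0 := by
        apply Xs_cancel (j := j) (v := 0) (Finset.mem_insert_self _ _)
        intro s hs
        rw [← Dop_Xs, ← Dop_congr A (!ε) hu s hs]
        have := Dop_Dop A hA (!ε) F' s
        rw [Bool.not_not] at this
        rw [this]
        simp [Xs]
      obtain ⟨v, hv⟩ := hN n hn (!ε) u hu2
      rw [Bool.not_not] at hv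
      obtain ⟨w, hw⟩ := hN n hn ε (F' - Xs j v) (fun s hs => by
        rw [Dop_sub, Dop_Xs, ← Xs_congr hv s hs, ← hu s hs, sub_self])
      refine ⟨w, fun s hs => ?_⟩
      rw [← hw s (hs.mono (Finset.subset_insert _ _)), hF' s hs]
      have : s j = 0 := by
        by_contra h
        exact hjJ (hs.1 j h)
      simp [Xs, this]
    have hdown : ∀ n, 1 ≤ n → (∀ ε, Ex A (insert j J) ε (n + 1)) →
        ∀ ε, Ex A (insert j J) ε n := by
      intro n hn h ε z hz
      obtain ⟨y, hy⟩ := h ε (Xs j z) (fun s hs => by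
        rw [Dop_Xs, Xs_congr (v := 0) hz s hs]; simp [Xs])
      obtain ⟨w, hw⟩ := hJ n hn (!ε) y (fun s hs => by
        rw [← hy s (hs.mono (Finset.subset_insert _ _))]
        have : s j = 0 := by
          by_contra h
          exact hjJ (hs.1 j h)
        simp [Xs, this])
      rw [Bool.not_not] at hw
      obtain ⟨u, hu⟩ := exists_div (j := j) (G := y - Dop A ε w) (n := n) (J := J)
        (fun s hs => by simp [hw s hs])
      refine ⟨u, ?_⟩
      apply Xs_cancel (j := j) (Finset.mem_insert_self _ _)
      intro s hs
      have h3 := Dop_Dop A hA (!ε) w s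
      rw [Bool.not_not] at h3
      rw [hy s hs, ← Dop_Xs, ← Dop_congr A (!ε) hu s hs, Dop_sub, h3, sub_zero]
    have : ∀ m n, 1 ≤ n → N ≤ n + m → ∀ ε, Ex A (insert j J) ε n := by
      intro m
      induction m with
      | zero => intro n _ h; exact hN n h
      | succ m ih => intro n h1 h2; exact hdown n h1 (ih (n + 1) (by omega) (by omega))
    intro n hn
    exact this N n hn (by omega)


lemma Dop_zero (ε) (s : ι →₀ ℕ) : Dop A ε (0 : (ι →₀ ℕ) → H) s = 0 := by
  simp [Dop]

lemma Dop_smul (ε) (r : k) (F : (ι →₀ ℕ) → H) (s) : Dop A ε (r • F) s = r • Dop A ε F s := by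
  simp only [Dop, Finset.smul_sum]
  refine Finset.sum_congr rfl fun i _ => ?_
  split_ifs <;> simp

lemma Dop_sum (ε) {κ : Type*} (t : Finset κ) (F : κ → (ι →₀ ℕ) → H) (s) :
    Dop A ε (∑ i ∈ t, F i) s = ∑ i ∈ t, Dop A ε (F i) s := by
  classical
  induction t using Finset.induction_on with
  | empty => simp [Dop_zero]
  | insert a t ha ih => rw [Finset.sum_insert ha, Finset.sum_insert ha, Dop_add, ih]

lemma Xs_add (j : ι) (F G : (ι →₀ ℕ) → H) (s) : Xs j (F + G) s = Xs j F s + Xs j G s := by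
  unfold Xs; split_ifs <;> simp

lemma Xs_smul (j : ι) (r : k) (F : (ι →₀ ℕ) → H) (s) : Xs j (r • F) s = r • Xs j F s := by
  unfold Xs; split_ifs <;> simp

/-- Polynomial vectors as functions. -/
noncomputable def Phi {m : ℕ} (b : Module.Basis (Fin m) k H) (w : Fin m → MvPolynomial ι k)
    (s : ι →₀ ℕ) : H := ∑ a, (w a).coeff s • b a

lemma Phi_add {m : ℕ} (b : Module.Basis (Fin m) k H) (w w' : Fin m → MvPolynomial ι k) :
    Phi b (w + w') = Phi b w + Phi b w' := by
  funext s; simp [Phi, add_smul, Finset.sum_add_distrib]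

lemma Phi_zero {m : ℕ} (b : Module.Basis (Fin m) k H) :
    Phi b (0 : Fin m → MvPolynomial ι k) = 0 := by
  funext s; simp [Phi]

lemma Phi_C {m : ℕ} (b : Module.Basis (Fin m) k H) (r : k) (w : Fin m → MvPolynomial ι k) :
    Phi b ((MvPolynomial.C r : MvPolynomial ι k) • w) = r • Phi b w := by
  funext s; simp [Phi, MvPolynomial.coeff_C_mul, mul_smul, Finset.smul_sum]

lemma Phi_X {m : ℕ} (b : Module.Basis (Fin m) k H) (i : ι) (w : Fin m → MvPolynomial ι k) :
    Phi b ((MvPolynomial.X i : MvPolynomial ι k) • w) = Xs i (Phi b w) := by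
  funext s
  unfold Phi Xs
  by_cases h : s i = 0
  · simp [MvPolynomial.coeff_X_mul', h]
  · simp [MvPolynomial.coeff_X_mul', h]

lemma exists_Phi {m : ℕ} (b : Module.Basis (Fin m) k H) (n : ℕ) (F : (ι →₀ ℕ) → H) :
    ∃ w : Fin m → MvPolynomial ι k, ∀ s, Phi b w s = if s.degree = n then F s else 0 := by
  classical
  have hfin : {s : ι →₀ ℕ | s.degree ≤ n}.Finite := Finsupp.finite_of_degree_le n
  refine ⟨fun a => ∑ s ∈ hfin.toFinset,
    MvPolynomial.monomial s (b.repr (if s.degree = n then F s else 0) a), fun s => ?_⟩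
  have : ∀ a, MvPolynomial.coeff s (∑ s ∈ hfin.toFinset,
      MvPolynomial.monomial s (b.repr (if s.degree = n then F s else 0) a))
      = b.repr (if s.degree = n then F s else 0) a := by
    intro a
    rw [MvPolynomial.coeff_sum]
    simp only [MvPolynomial.coeff_monomial]
    rw [Finset.sum_ite_eq']
    split_ifs with h1 h2 h2 <;> simp_all
  simp only [Phi, this]
  exact b.sum_repr _

lemma Ex_succ_one [FiniteDimensional k H] (ε : Bool) :
    ∃ N : ℕ, ∀ n ≥ N, Ex A Finset.univ ε n → Ex A Finset.univ ε (n + 1) := by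
  let b := Module.finBasis k H
  let Q : ℕ →o Submodule (MvPolynomial ι k)
      (Fin (Module.finrank k H) → MvPolynomial ι k) :=
    { toFun := fun n => Submodule.span _ {w | ∃ d ≤ n, (∀ s, s.degree ≠ d → Phi b w s = 0) ∧
        ∀ s, Dop A ε (Phi b w) s = 0}
      monotone' := fun n n' h => Submodule.span_mono (by
        rintro w ⟨d, hd, hw⟩
        exact ⟨d, hd.trans h, hw⟩) }
  obtain ⟨N, hN⟩ := monotone_stabilizes_iff_noetherian.2
    (inferInstance : IsNoetherian (MvPolynomial ι k)
      (Fin (Module.finrank k H) → MvPolynomial ι k)) Q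
  refine ⟨N, fun n hn hEx F hF => ?_⟩
  have hQ : Q n = Q (n + 1) := (hN n hn).symm.trans (hN (n + 1) (by omega))
  obtain ⟨w, hw⟩ := exists_Phi b (n + 1) F
  have hwQ : w ∈ Q (n + 1) := by
    refine Submodule.subset_span ⟨n + 1, le_rfl, fun s hs => by rw [hw, if_neg hs], fun s => ?_⟩
    by_cases hs : s.degree = n + 2
    · rw [Dop_congr A ε (J := Finset.univ) (n := n + 1) (G := F) _ s ⟨by simp, hs⟩]
      · exact hF s ⟨by simp, hs⟩
      · intro s hs; rw [hw, if_pos hs.2]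
    · refine Finset.sum_eq_zero fun i _ => ?_
      split_ifs with h0
      · rfl
      · have := degree_sub h0
        rw [hw, if_neg (by omega), map_zero]
  rw [← hQ] at hwQ
  have key : ∀ y ∈ Q n, (∀ s, Dop A ε (Phi b y) s = 0) ∧ ∃ z : ι → (ι →₀ ℕ) → H,
      (∀ i s, Rg Finset.univ (n + 1) s → Dop A ε (z i) s = 0) ∧
      ∀ s, Rg Finset.univ (n + 1) s → Phi b y s = ∑ i, Xs i (z i) s := by
    intro y hy
    refine Submodule.span_induction ?_ ?_ ?_ ?_ hy
    · rintro w ⟨d, hd, hw1, hw2⟩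
      refine ⟨hw2, 0, fun i s _ => Dop_zero A ε s, fun s hs => ?_⟩
      rw [hw1 s (by rw [hs.2]; omega)]
      simp [Xs]
    · rw [Phi_zero]
      exact ⟨Dop_zero A ε, 0, fun i s _ => Dop_zero A ε s, fun s hs => by simp [Xs]⟩
    · rintro y y' - - ⟨h1, z, h2, h3⟩ ⟨h1', z', h2', h3'⟩
      rw [Phi_add]
      refine ⟨fun s => by rw [Dop_add, h1, h1', add_zero], z + z', fun i s hs => ?_, fun s hs => ?_⟩
      · rw [Pi.add_apply, Dop_add, h2 i s hs, h2' i s hs, add_zero]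
      · simp only [Pi.add_apply z z', Xs_add, Finset.sum_add_distrib, Pi.add_apply (Phi b y), h3 s hs, h3' s hs]
    · intro p y _ hy
      induction p using MvPolynomial.induction_on with
      | C r =>
        obtain ⟨h1, z, h2, h3⟩ := hy
        rw [Phi_C]
        refine ⟨fun s => by rw [Dop_smul, h1, smul_zero], fun i => r • z i, fun i s hs => ?_,
          fun s hs => ?_⟩
        · rw [Dop_smul, h2 i s hs, smul_zero]
        · simp only [Xs_smul, ← Finset.smul_sum, Pi.smul_apply, h3 s hs]
      | add p q hp hq =>
        rw [add_smul, Phi_add]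
        obtain ⟨h1, z, h2, h3⟩ := hp
        obtain ⟨h1', z', h2', h3'⟩ := hq
        refine ⟨fun s => by rw [Dop_add, h1, h1', add_zero], z + z', fun i s hs => ?_,
          fun s hs => ?_⟩
        · rw [Pi.add_apply, Dop_add, h2 i s hs, h2' i s hs, add_zero]
        · simp only [Pi.add_apply z z', Xs_add, Finset.sum_add_distrib, Pi.add_apply (Phi b _), h3 s hs, h3' s hs]
      | mul_X p i hp =>
        obtain ⟨h1, -⟩ := hp
        rw [mul_comm, mul_smul, Phi_X]
        refine ⟨fun s => ?_, Pi.single i (Phi b (p • y)), fun i' s hs => ?_, fun s hs => ?_⟩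
        · rw [Dop_Xs]; simp [Xs, h1]
        · by_cases hi : i' = i
          · subst hi; rw [Pi.single_eq_same]; exact h1 s
          · rw [Pi.single_eq_of_ne hi]; exact Dop_zero A ε s
        · rw [Finset.sum_eq_single i]
          · rw [Pi.single_eq_same]
          · intro i' _ hi; rw [Pi.single_eq_of_ne hi]; simp [Xs]
          · simp
  obtain ⟨-, z, hz1, hz2⟩ := key w hwQ
  choose G hG using fun i => hEx (z i) (hz1 i)
  refine ⟨∑ i, Xs i (G i), fun s hs => ?_⟩
  have e := hz2 s hs
  rw [hw, if_pos hs.2] at e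
  rw [e, Dop_sum]
  refine Finset.sum_congr rfl fun i _ => ?_
  rw [Dop_Xs]
  exact Xs_congr (hG i) s hs

lemma Ex_succ [FiniteDimensional k H] :
    ∃ N : ℕ, ∀ n ≥ N, ∀ ε, Ex A Finset.univ ε n → ∀ m ≥ n, Ex A Finset.univ ε m := by
  obtain ⟨N1, h1⟩ := Ex_succ_one A true
  obtain ⟨N2, h2⟩ := Ex_succ_one A false
  refine ⟨max N1 N2, fun n hn ε h m hm => ?_⟩
  induction m, hm using Nat.le_induction with
  | base => exact h
  | succ m hm ih =>
    cases ε
    · exact h2 m (by omega) ih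
    · exact h1 m (by omega) ih

end Comb

section Mods

variable {k : Type*} [Field k] {c : ℕ}

/-- The generators of the exterior algebra. -/
noncomputable def xg (k : Type*) [Field k] {c : ℕ} (i : Fin c) : ExteriorAlgebra k (Fin c → k) :=
  ExteriorAlgebra.ι k (Pi.single i 1)

lemma xg_sq (i : Fin c) : xg k i * xg k i = 0 := ExteriorAlgebra.ι_sq_zero _

lemma xg_anti (i j : Fin c) : xg k i * xg k j = - (xg k j * xg k i) :=
  eq_neg_of_add_eq_zero_left (ExteriorAlgebra.ι_add_mul_swap _ _)

lemma iota_eq (v : Fin c → k) : ExteriorAlgebra.ι k v = ∑ j, v j • xg k j := by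
  conv_lhs => rw [pi_eq_sum_univ' v]
  simp only [map_sum, xg, map_smul]

/-- Sign. -/
def sg (k : Type*) [Field k] (ε : Bool) : k := if ε then 1 else -1

variable (M P K N : Type*) [AddCommGroup M] [Module k M] [Module (ExteriorAlgebra k (Fin c → k)) M]
  [IsScalarTower k (ExteriorAlgebra k (Fin c → k)) M]
  [AddCommGroup P] [Module k P] [Module (ExteriorAlgebra k (Fin c → k)) P]
  [IsScalarTower k (ExteriorAlgebra k (Fin c → k)) P]
  [AddCommGroup K] [Module k K] [Module (ExteriorAlgebra k (Fin c → k)) K]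
  [IsScalarTower k (ExteriorAlgebra k (Fin c → k)) K]
  [AddCommGroup N] [Module k N] [Module (ExteriorAlgebra k (Fin c → k)) N]
  [IsScalarTower k (ExteriorAlgebra k (Fin c → k)) N]

/-- The operators `f ↦ x_i f ± f x_i`. -/
noncomputable def opM (ε : Bool) (i : Fin c) : Module.End k (M →ₗ[k] N) where
  toFun f := (Algebra.lsmul k k N (xg k i)) ∘ₗ f + sg k ε • (f ∘ₗ (Algebra.lsmul k k M (xg k i)))
  map_add' f g := by ext m; simp; abel
  map_smul' r f := by
    ext m; simp [smul_comm r (xg k i), smul_comm r (sg k ε)]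

lemma opM_apply (ε : Bool) (i : Fin c) (f : M →ₗ[k] N) (m : M) :
    opM M N ε i f m = xg k i • f m + sg k ε • f (xg k i • m) := rfl

lemma smul_anti (i j : Fin c) (m : M) : xg k i • xg k j • m = - (xg k j • xg k i • m) := by
  rw [← mul_smul, xg_anti, neg_smul, mul_smul]

lemma smul_sq (i : Fin c) (m : M) : xg k i • xg k i • m = 0 := by
  rw [← mul_smul, xg_sq, zero_smul]

lemma opM_rel : Rel (opM M N : Bool → Fin c → Module.End k (M →ₗ[k] N)) := by
  constructor
  · intro ε i j u
    ext m
    simp only [LinearMap.add_apply, opM_apply, LinearMap.zero_apply, smul_add, smul_anti M j i,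
      smul_anti N j i]
    cases ε <;> simp [sg] <;> abel
  · intro ε i u
    ext m
    simp only [LinearMap.add_apply, opM_apply, LinearMap.zero_apply, smul_sq, smul_add]
    cases ε <;> simp [sg, smul_sq]

variable (k c) in
/-- Exactness in degree `n` for the complex computing `Ext`. -/
def EM (ε : Bool) (n : ℕ) : Prop := Ex (opM (k := k) (c := c) M N) Finset.univ ε n

variable {M P K N}

/-- Precomposition. -/
def pull (g : K →ₗ[ExteriorAlgebra k (Fin c → k)] P) (F : (Fin c →₀ ℕ) → P →ₗ[k] N) :
    (Fin c →₀ ℕ) → K →ₗ[k] N := fun s => F s ∘ₗ g.restrictScalars k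

lemma Dop_pull (g : K →ₗ[ExteriorAlgebra k (Fin c → k)] P) (ε) (F : (Fin c →₀ ℕ) → P →ₗ[k] N) (s) :
    Dop (opM K N) ε (pull g F) s = Dop (opM P N) ε F s ∘ₗ g.restrictScalars k := by
  ext m
  simp only [Dop, LinearMap.comp_apply, LinearMap.sum_apply]
  refine Finset.sum_congr rfl fun i _ => ?_
  split_ifs
  · rfl
  · simp [opM_apply, pull]

lemma Ex_retract (i : K →ₗ[ExteriorAlgebra k (Fin c → k)] P)
    (q : P →ₗ[ExteriorAlgebra k (Fin c → k)] K) (hqi : ∀ x, q (i x) = x) (ε n)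
    (h : EM k c P N ε n) : EM k c K N ε n := by
  intro F hF
  obtain ⟨G, hG⟩ := h (pull q F) fun s hs => by rw [Dop_pull, hF s hs, LinearMap.zero_comp]
  refine ⟨pull i G, fun s hs => ?_⟩
  rw [Dop_pull, ← hG s hs]
  ext m
  simp [pull, hqi]

lemma Ex_of_deriv (d : Fin c → Module.End k M)
    (hd : ∀ i j m, d j (xg k i • m) + xg k i • d j m = if i = j then m else 0) (n ε) :
    EM k c M N ε (n + 1) := by
  refine Ex_of_contract _ (opM_rel M N) (fun ε j u => ⟨(- sg k ε) • (u ∘ₗ d j), fun i h => ?_⟩) Finset.univ n ε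
  ext m
  have h1 := LinearMap.congr_fun h (d j m)
  have h2 := eq_sub_of_add_eq (hd i j m)
  rw [opM_apply] at h1
  rw [opM_apply]
  simp only [LinearMap.smul_apply, LinearMap.comp_apply, h2, map_sub]
  simp only [LinearMap.zero_apply] at h1
  rw [smul_comm, eq_neg_of_add_eq_zero_left h1]
  by_cases hij : i = j
  · cases ε <;> simp [sg, hij]
  · cases ε <;> simp [sg, hij]

lemma Ex_of_projective [Module.Projective (ExteriorAlgebra k (Fin c → k)) P] (n ε) :
    EM k c P N ε (n + 1) := by
  obtain ⟨i, hi⟩ := Module.projective_def'.1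
    (inferInstance : Module.Projective (ExteriorAlgebra k (Fin c → k)) P)
  refine Ex_retract i (Finsupp.linearCombination _ id) (fun x => LinearMap.congr_fun hi x) ε _ ?_
  refine Ex_of_deriv (fun j => Finsupp.mapRange.linearMap
    (CliffordAlgebra.contractLeft (Q := (0 : QuadraticForm k (Fin c → k)))
      (LinearMap.proj (R := k) (φ := fun _ : Fin c => k) j))) ?_ n ε
  intro i j m
  ext a
  have := CliffordAlgebra.contractLeft_ι_mul (Q := (0 : QuadraticForm k (Fin c → k)))
    (LinearMap.proj (R := k) (φ := fun _ : Fin c => k) j) (Pi.single i 1) (m a)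
  simp only [Finsupp.add_apply, Finsupp.mapRange.linearMap_apply, Finsupp.mapRange_apply,
    Finsupp.smul_apply, smul_eq_mul]
  refine (congrArg (· + _) this).trans ?_
  simp only [LinearMap.proj_apply]
  refine (sub_add_cancel _ _).trans ?_
  by_cases hij : i = j
  · subst hij; simp
  · simp [hij, Pi.single_apply, Ne.symm hij]

section SES

variable {i : K →ₗ[ExteriorAlgebra k (Fin c → k)] P} {p : P →ₗ[ExteriorAlgebra k (Fin c → k)] M}

lemma descend_aux (hex : Function.Exact i p) (t : M →ₗ[k] P) (ht : ∀ m, p (t m) = m)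
    (f : P →ₗ[k] N) (hf : ∀ y, f (i y) = 0) (x : P) : f (t (p x)) = f x := by
  obtain ⟨y, hy⟩ := (hex (x - t (p x))).1 (by rw [map_sub, ht, sub_self])
  have := hf y
  rw [hy, map_sub, sub_eq_zero] at this
  exact this.symm

lemma EM_succ_iff [Module.Projective (ExteriorAlgebra k (Fin c → k)) P]
    (hi : Function.Injective i) (hp : Function.Surjective p) (hex : Function.Exact i p) (ε n) :
    EM k c M N ε (n + 1) ↔ ∀ ψ : (Fin c →₀ ℕ) → K →ₗ[k] N,
      (∀ s, Rg Finset.univ (n + 1) s → Dop (opM K N) (!ε) ψ s = 0) →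
      ∃ Ψ : (Fin c →₀ ℕ) → P →ₗ[k] N,
        (∀ s, Rg Finset.univ (n + 1) s → Dop (opM P N) (!ε) Ψ s = 0) ∧
        ∀ s, Rg Finset.univ n s → pull i Ψ s = ψ s := by
  obtain ⟨r, hr⟩ := LinearMap.exists_leftInverse_of_injective (i.restrictScalars k)
    (LinearMap.ker_eq_bot.2 hi)
  obtain ⟨t, ht⟩ := LinearMap.exists_rightInverse_of_surjective (p.restrictScalars k)
    (LinearMap.range_eq_top.2 hp)
  have hr' : ∀ y, r (i y) = y := fun y => LinearMap.congr_fun hr y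
  have ht' : ∀ m, p (t m) = m := fun m => LinearMap.congr_fun ht m
  have hpi : ∀ y, p (i y) = 0 := fun y => (hex (i y)).2 ⟨y, rfl⟩
  constructor
  · intro h ψ hψ
    let ψ' : (Fin c →₀ ℕ) → P →ₗ[k] N := fun s => ψ s ∘ₗ r
    have hψ' : pull i ψ' = ψ := by
      funext s; ext y; simp [pull, ψ', hr']
    let φ : (Fin c →₀ ℕ) → M →ₗ[k] N := fun s => Dop (opM P N) (!ε) ψ' s ∘ₗ t
    have hφ : ∀ s, Rg Finset.univ (n + 1) s → pull p φ s = Dop (opM P N) (!ε) ψ' s := by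
      intro s hs
      ext x
      refine descend_aux hex t ht' _ (fun y => ?_) x
      have e := hψ s hs
      rw [← hψ', Dop_pull] at e
      exact LinearMap.congr_fun e y
    obtain ⟨G, hG⟩ := h φ (fun s hs => by
      have e := Dop_congr (opM P N) ε hφ s hs
      rw [Dop_Dop _ (opM_rel P N), Dop_pull] at e
      ext m
      obtain ⟨x, rfl⟩ := hp m
      exact LinearMap.congr_fun e x)
    refine ⟨ψ' - pull p G, fun s hs => ?_, fun s hs => ?_⟩
    · rw [Dop_sub, Dop_pull, ← hG s hs, ← hφ s hs]
      exact sub_self _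
    · rw [← hψ']
      ext y
      simp [pull, hpi]
  · intro h F hF
    obtain ⟨G, hG⟩ := (Ex_of_projective n ε : EM k c P N ε (n + 1)) (pull p F) (fun s hs => by
      rw [Dop_pull, hF s hs, LinearMap.zero_comp])
    obtain ⟨Ψ, hΨ1, hΨ2⟩ := h (pull i G) (fun s hs => by
      rw [Dop_pull, ← hG s hs]
      ext y
      simp [pull, hpi])
    refine ⟨fun s => (G - Ψ) s ∘ₗ t, fun s hs => ?_⟩
    have e1 : ∀ s, Rg Finset.univ n s → pull p (fun s => (G - Ψ) s ∘ₗ t) s = (G - Ψ) s := by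
      intro s hs
      ext x
      refine descend_aux hex t ht' ((G - Ψ) s) (fun y => ?_) x
      have e := LinearMap.congr_fun (hΨ2 s hs) y
      exact sub_eq_zero.2 e.symm
    have e2 := Dop_congr (opM P N) (!ε) e1 s hs
    rw [Dop_pull, Dop_sub, hΨ1 s hs, sub_zero, ← hG s hs] at e2
    ext m
    obtain ⟨x, rfl⟩ := hp m
    exact (LinearMap.congr_fun e2 x).symm

lemma EM_shift [Module.Projective (ExteriorAlgebra k (Fin c → k)) P]
    (hi : Function.Injective i) (hp : Function.Surjective p) (hex : Function.Exact i p) (ε n) :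
    EM k c M N ε (n + 2) ↔ EM k c K N (!ε) (n + 1) := by
  obtain ⟨r, hr⟩ := LinearMap.exists_leftInverse_of_injective (i.restrictScalars k)
    (LinearMap.ker_eq_bot.2 hi)
  have hr' : ∀ y, r (i y) = y := fun y => LinearMap.congr_fun hr y
  rw [EM_succ_iff (N := N) hi hp hex]
  constructor
  · intro h ψ hψ
    obtain ⟨Ψ, h1, h2⟩ := h ψ hψ
    obtain ⟨w, hw⟩ := (Ex_of_projective n (!ε) : EM k c P N (!ε) (n + 1)) Ψ h1
    refine ⟨pull i w, fun s hs => ?_⟩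
    rw [← h2 s hs, Dop_pull, ← hw s hs]
    rfl
  · intro h ψ hψ
    obtain ⟨w, hw⟩ := h ψ hψ
    rw [Bool.not_not] at hw
    let w' : (Fin c →₀ ℕ) → P →ₗ[k] N := fun s => w s ∘ₗ r
    have hw' : pull i w' = w := by
      funext s; ext y; simp [pull, w', hr']
    refine ⟨Dop (opM P N) ε w', fun s hs => ?_, fun s hs => ?_⟩
    · have := Dop_Dop _ (opM_rel (k := k) (c := c) P N) (!ε) w' s
      rwa [Bool.not_not] at this
    · rw [hw s hs]
      have := Dop_pull i ε w' s
      rw [hw'] at this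
      exact this.symm

lemma linear_of_comm (f : P →ₗ[k] N) (hf : ∀ (i : Fin c) x, f (xg k i • x) = xg k i • f x)
    (a : ExteriorAlgebra k (Fin c → k)) (x : P) : f (a • x) = a • f x := by
  induction a using ExteriorAlgebra.induction generalizing x with
  | algebraMap r => simp [algebraMap_smul]
  | ι v =>
    rw [iota_eq]
    simp [Finset.sum_smul, hf]
  | mul a b ha hb => rw [mul_smul, ha, hb, mul_smul]
  | add a b ha hb => rw [add_smul, map_add, ha, hb, add_smul]

lemma Dop_one_iff (ε) (F : (Fin c →₀ ℕ) → P →ₗ[k] N) :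
    (∀ s, Rg Finset.univ 1 s → Dop (opM P N) ε F s = 0) ↔ ∀ j : Fin c, opM P N ε j (F 0) = 0 := by
  have hsingle : ∀ j : Fin c, Dop (opM P N) ε F (Finsupp.single j 1) = opM P N ε j (F 0) := by
    intro j
    unfold Dop
    rw [Finset.sum_eq_single j]
    · simp
    · intro b _ hb; simp [Finsupp.single_apply, Ne.symm hb]
    · simp
  constructor
  · intro h j
    rw [← hsingle]
    exact h _ ⟨by simp, by simp⟩
  · intro h s hs
    refine Finset.sum_eq_zero fun j _ => ?_
    split_ifs with h0
    · rfl
    · have h2 := degree_sub h0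
      rw [hs.2] at h2
      have h3 : (s - Finsupp.single j 1).degree = 0 := by omega
      rw [Finsupp.degree_eq_zero_iff] at h3
      rw [h3, h j]

lemma EM_one_iff [Module.Projective (ExteriorAlgebra k (Fin c → k)) P]
    (hi : Function.Injective i) (hp : Function.Surjective p) (hex : Function.Exact i p) :
    EM k c M N true 1 ↔ ∀ g : K →ₗ[ExteriorAlgebra k (Fin c → k)] N,
      ∃ g' : P →ₗ[ExteriorAlgebra k (Fin c → k)] N, ∀ y, g' (i y) = g y := by
  rw [EM_succ_iff hi hp hex true 0]
  have h0 : Rg (Finset.univ : Finset (Fin c)) 0 0 := ⟨by simp, by simp⟩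
  constructor
  · intro h g
    obtain ⟨Ψ, h1, h2⟩ := h (fun _ => g.restrictScalars k) ((Dop_one_iff _ _).2 fun j => by
      ext y; simp [opM_apply, sg])
    rw [Bool.not_true, Dop_one_iff] at h1
    have h3 : ∀ (j : Fin c) x, Ψ 0 (xg k j • x) = xg k j • Ψ 0 x := by
      intro j x
      have := LinearMap.congr_fun (h1 j) x
      rw [opM_apply] at this
      simp only [sg, LinearMap.zero_apply] at this
      simp only [Bool.false_eq_true, if_false, neg_smul, one_smul, ← sub_eq_add_neg] at this
      exact (sub_eq_zero.1 this).symm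
    refine ⟨{ toFun := Ψ 0, map_add' := map_add _, map_smul' := linear_of_comm _ h3 }, fun y => ?_⟩
    exact LinearMap.congr_fun (h2 0 h0) y
  · intro h ψ hψ
    rw [Bool.not_true, Dop_one_iff] at hψ
    have h3 : ∀ (j : Fin c) x, ψ 0 (xg k j • x) = xg k j • ψ 0 x := by
      intro j x
      have := LinearMap.congr_fun (hψ j) x
      rw [opM_apply] at this
      simp only [sg, LinearMap.zero_apply] at this
      simp only [Bool.false_eq_true, if_false, neg_smul, one_smul, ← sub_eq_add_neg] at this
      exact (sub_eq_zero.1 this).symm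
    obtain ⟨g', hg'⟩ := h { toFun := ψ 0, map_add' := map_add _, map_smul' := linear_of_comm _ h3 }
    refine ⟨fun _ => g'.restrictScalars k, (Dop_one_iff _ _).2 fun j => by
      ext y; simp [opM_apply, sg], fun s hs => ?_⟩
    have : s = 0 := (Finsupp.degree_eq_zero_iff s).1 hs.2
    subst this
    ext y
    exact hg' y

end SES

lemma finite_ext_aux (J : Finset (Fin c)) :
    ∃ B : Submodule k (ExteriorAlgebra k (Fin c → k)), B.FG ∧ 1 ∈ B ∧
      ∀ i ∈ J, ∀ b ∈ B, xg k i * b ∈ B := by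
  induction J using Finset.induction_on with
  | empty => exact ⟨k ∙ 1, Submodule.fg_span_singleton _, Submodule.mem_span_singleton_self _,
      by simp⟩
  | insert j J hj ih =>
    obtain ⟨B, hB, h1, hJ⟩ := ih
    refine ⟨B ⊔ B.map (LinearMap.mulLeft k (xg k j)), hB.sup (hB.map _),
      Submodule.mem_sup_left h1, ?_⟩
    intro i hi b hb
    obtain ⟨b1, hb1, b2, hb2, rfl⟩ := Submodule.mem_sup.1 hb
    obtain ⟨b2, hb2, rfl⟩ := hb2
    simp only [LinearMap.mulLeft_apply, mul_add, ← mul_assoc]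
    rcases Finset.mem_insert.1 hi with rfl | hi
    · rw [xg_sq, zero_mul, add_zero]
      exact Submodule.mem_sup_right ⟨b1, hb1, rfl⟩
    · refine Submodule.add_mem _ (Submodule.mem_sup_left (hJ i hi b1 hb1)) ?_
      rw [xg_anti, neg_mul, mul_assoc]
      exact Submodule.neg_mem _ (Submodule.mem_sup_right ⟨_, hJ i hi b2 hb2, rfl⟩)

lemma finite_ext : Module.Finite k (ExteriorAlgebra k (Fin c → k)) := by
  obtain ⟨B, hB, h1, hJ⟩ := finite_ext_aux (k := k) (Finset.univ : Finset (Fin c))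
  have : ∀ a : ExteriorAlgebra k (Fin c → k), ∀ b ∈ B, a * b ∈ B := by
    intro a
    induction a using ExteriorAlgebra.induction with
    | algebraMap r => intro b hb; rw [← Algebra.smul_def]; exact B.smul_mem _ hb
    | ι v =>
      intro b hb
      rw [iota_eq, Finset.sum_mul]
      refine Submodule.sum_mem _ fun j _ => ?_
      rw [smul_mul_assoc]
      exact B.smul_mem _ (hJ j (Finset.mem_univ _) b hb)
    | mul x y hx hy => intro b hb; rw [mul_assoc]; exact hx _ (hy _ hb)
    | add x y hx hy => intro b hb; rw [add_mul]; exact B.add_mem (hx _ hb) (hy _ hb)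
  have htop : B = ⊤ := by
    rw [eq_top_iff]
    intro a _
    simpa using this a 1 h1
  exact ⟨htop ▸ hB⟩

/-- Sign of the differential. -/
def tau (n : ℕ) : Bool := decide (Odd n)

lemma tau_succ (n : ℕ) : tau (n + 1) = !tau n := by
  simp [tau, Nat.odd_add_one, -Nat.not_odd_iff_even]

section Chain

variable {X : ℕ → Type*} [∀ n, AddCommGroup (X n)] [∀ n, Module k (X n)]
  [∀ n, Module (ExteriorAlgebra k (Fin c → k)) (X n)]
  [∀ n, IsScalarTower k (ExteriorAlgebra k (Fin c → k)) (X n)]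
  [∀ n, Module.Projective (ExteriorAlgebra k (Fin c → k)) (X n)]
  (d : ∀ n, X (n + 1) →ₗ[ExteriorAlgebra k (Fin c → k)] X n)

/-- The inclusion of a syzygy. -/
def inc (hd : ∀ n, Function.Exact (d (n + 1)) (d n)) (m : ℕ) :
    (X (m + 1) ⧸ LinearMap.range (d (m + 1))) →ₗ[ExteriorAlgebra k (Fin c → k)] X m :=
  (LinearMap.range (d (m + 1))).liftQ (d m) (by
    rintro _ ⟨y, rfl⟩
    exact (hd m _).2 ⟨y, rfl⟩)

lemma inc_mk (hd : ∀ n, Function.Exact (d (n + 1)) (d n)) (m : ℕ) (x : X (m + 1)) :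
    inc d hd m (Submodule.Quotient.mk x) = d m x := rfl

lemma inc_inj (hd : ∀ n, Function.Exact (d (n + 1)) (d n)) (m : ℕ) :
    Function.Injective (inc d hd m) := by
  rw [injective_iff_map_eq_zero]
  intro y hy
  obtain ⟨x, rfl⟩ := Submodule.Quotient.mk_surjective _ y
  rw [inc_mk] at hy
  rw [Submodule.Quotient.mk_eq_zero]
  exact (hd m x).1 hy

lemma inc_exact (hd : ∀ n, Function.Exact (d (n + 1)) (d n)) (m : ℕ) :
    Function.Exact (inc d hd m) (LinearMap.range (d m)).mkQ := by
  intro x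
  rw [Submodule.mkQ_apply, Submodule.Quotient.mk_eq_zero]
  constructor
  · rintro ⟨y, rfl⟩
    exact ⟨Submodule.Quotient.mk y, rfl⟩
  · rintro ⟨y, rfl⟩
    obtain ⟨x, rfl⟩ := Submodule.Quotient.mk_surjective _ y
    exact ⟨x, rfl⟩

lemma chain_iff (hd : ∀ n, Function.Exact (d (n + 1)) (d n)) (n : ℕ) : ∀ m l, l = m + n →
    (EM k c (X m ⧸ LinearMap.range (d m)) N (tau (n + 1)) (n + 1) ↔
      ∀ f : X (l + 1) →ₗ[ExteriorAlgebra k (Fin c → k)] N, f ∘ₗ d (l + 1) = 0 →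
        ∃ g : X l →ₗ[ExteriorAlgebra k (Fin c → k)] N, g ∘ₗ d l = f) := by
  induction n with
  | zero =>
    intro m l hl
    obtain rfl : m = l := by omega
    have ht : tau (0 + 1) = true := by simp [tau]
    rw [ht, EM_one_iff (inc_inj d hd m) (Submodule.mkQ_surjective _) (inc_exact d hd m)]
    constructor
    · intro h f hf
      obtain ⟨g, hg⟩ := h ((LinearMap.range (d (m + 1))).liftQ f (by
        rintro _ ⟨y, rfl⟩
        exact LinearMap.congr_fun hf y))
      exact ⟨g, LinearMap.ext fun x => hg (Submodule.Quotient.mk x)⟩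
    · intro h g
      obtain ⟨g', hg'⟩ := h (g ∘ₗ (LinearMap.range (d (m + 1))).mkQ) (by
        ext x
        have : (LinearMap.range (d (m + 1))).mkQ (d (m + 1) x) = 0 := by
          rw [Submodule.mkQ_apply, Submodule.Quotient.mk_eq_zero]
          exact ⟨x, rfl⟩
        simp only [LinearMap.comp_apply, this, map_zero, LinearMap.zero_apply])
      refine ⟨g', fun y => ?_⟩
      obtain ⟨x, rfl⟩ := Submodule.Quotient.mk_surjective _ y
      exact LinearMap.congr_fun hg' x
  | succ n ih =>
    intro m l hl
    rw [EM_shift (inc_inj d hd m) (Submodule.mkQ_surjective _) (inc_exact d hd m),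
      tau_succ (n + 1), Bool.not_not]
    exact ih (m + 1) l (by omega)

end Chain

end Mods

section Cat

variable {k : Type} [Field k] {c : ℕ}

lemma ext_iff (M N : Type) [AddCommGroup M] [Module (ExteriorAlgebra k (Fin c → k)) M]
    [Module k M] [IsScalarTower k (ExteriorAlgebra k (Fin c → k)) M]
    [AddCommGroup N] [Module (ExteriorAlgebra k (Fin c → k)) N]
    [Module k N] [IsScalarTower k (ExteriorAlgebra k (Fin c → k)) N] (n : ℕ) :
    Subsingleton (((_root_.Ext k (ModuleCat (ExteriorAlgebra k (Fin c → k))) (n + 1)).obj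
        (Opposite.op (ModuleCat.of (ExteriorAlgebra k (Fin c → k)) M))).obj
        (ModuleCat.of (ExteriorAlgebra k (Fin c → k)) N)) ↔
      EM k c M N (tau (n + 1)) (n + 1) := by
  let P := projectiveResolution (ModuleCat.of (ExteriorAlgebra k (Fin c → k)) M)
  rw [← ModuleCat.isZero_iff_subsingleton,
    (P.isoExt (R := k) (n + 1) (ModuleCat.of (ExteriorAlgebra k (Fin c → k)) N)).isZero_iff,
    ← HomologicalComplex.exactAt_iff_isZero_homology,
    HomologicalComplex.exactAt_iff' _ n (n + 1) (n + 2) (by simp) (by simp),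
    ShortComplex.moduleCat_exact_iff]
  letI (m : ℕ) : Module k (P.complex.X m) := ModuleCat.moduleOfAlgebraModule _
  haveI (m : ℕ) : IsScalarTower k (ExteriorAlgebra k (Fin c → k)) (P.complex.X m) :=
    ModuleCat.isScalarTower_of_algebra_moduleCat _
  haveI (m : ℕ) : Module.Projective (ExteriorAlgebra k (Fin c → k)) (P.complex.X m) := by
    rw [IsProjective.iff_projective]
    exact P.projective m
  let d (m : ℕ) : P.complex.X (m + 1) →ₗ[ExteriorAlgebra k (Fin c → k)] P.complex.X m :=
    (P.complex.d (m + 1) m).hom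
  have hd : ∀ m, Function.Exact (d (m + 1)) (d m) := by
    intro m
    have := (ShortComplex.ShortExact.moduleCat_exact_iff_function_exact _).1 (P.exact_succ m)
    exact this
  let π : P.complex.X 0 ⟶ ModuleCat.of (ExteriorAlgebra k (Fin c → k)) M := P.π.f 0
  have hπ : Function.Surjective π.hom := by
    have : Epi π := inferInstanceAs (Epi (P.π.f 0))
    exact (ModuleCat.epi_iff_surjective π).1 this
  have hπ2 : LinearMap.range (d 0) = LinearMap.ker π.hom := by
    have h := (ShortComplex.mk (P.complex.d 1 0) (P.π.f 0)
      P.complex_d_comp_π_f_zero).exact_of_g_is_cokernel P.isColimitCokernelCofork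
    exact h.moduleCat_range_eq_ker
  let e : (P.complex.X 0 ⧸ LinearMap.range (d 0)) ≃ₗ[ExteriorAlgebra k (Fin c → k)] M :=
    (Submodule.quotEquivOfEq _ _ hπ2).trans (π.hom.quotKerEquivOfSurjective hπ)
  have hM : EM k c M N (tau (n + 1)) (n + 1) ↔
      EM k c (P.complex.X 0 ⧸ LinearMap.range (d 0)) N (tau (n + 1)) (n + 1) :=
    ⟨Ex_retract e.toLinearMap e.symm.toLinearMap (fun x => e.symm_apply_apply x) _ _,
      Ex_retract e.symm.toLinearMap e.toLinearMap (fun x => e.apply_symm_apply x) _ _⟩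
  rw [hM]
  refine Iff.trans ?_ (chain_iff (k := k) (c := c) (N := N) (X := fun m => P.complex.X m) d hd
    n 0 n (by omega)).symm
  constructor
  · intro h f hf
    obtain ⟨g, hg⟩ := h (ModuleCat.ofHom f) (ModuleCat.hom_ext hf)
    exact ⟨ModuleCat.Hom.hom g, congrArg ModuleCat.Hom.hom hg⟩
  · intro h f hf
    obtain ⟨g, hg⟩ := h (ModuleCat.Hom.hom f) (congrArg ModuleCat.Hom.hom hf)
    exact ⟨ModuleCat.ofHom g, ModuleCat.hom_ext hg⟩

end Cat

end ExtAux

/-- Let `k` be a field, `c ≥ 1` an integer, and `A` the exterior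
algebra on a `c`-dimensional `k`-vector space (equivalently
`k⟨x 1, …, x c⟩/(x i ^ 2, x i x j + x j x i)`).  Then for finitely generated left
`A`-modules `M, N`, either `Ext_A^n(M,N) = 0` for all `n > 0`, or there is a
non-negative integer `m₀` such that `Ext_A^n(M,N) ≠ 0` for all even `n ≥ m₀`, or for
all odd `n ≥ m₀`. -/
theorem stmt_12 (k : Type) [Field k] (c : ℕ) (hc : 1 ≤ c)
    (M N : Type) [AddCommGroup M] [Module (ExteriorAlgebra k (Fin c → k)) M]
    [Module.Finite (ExteriorAlgebra k (Fin c → k)) M]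
    [AddCommGroup N] [Module (ExteriorAlgebra k (Fin c → k)) N]
    [Module.Finite (ExteriorAlgebra k (Fin c → k)) N] :
    (∀ n : ℕ, 0 < n → Subsingleton
      (((_root_.Ext k (ModuleCat (ExteriorAlgebra k (Fin c → k))) n).obj
        (Opposite.op (ModuleCat.of (ExteriorAlgebra k (Fin c → k)) M))).obj
        (ModuleCat.of (ExteriorAlgebra k (Fin c → k)) N))) ∨
    ∃ m₀ : ℕ,
      (∀ n ≥ m₀, Even n → Nontrivial
        (((_root_.Ext k (ModuleCat (ExteriorAlgebra k (Fin c → k))) n).obj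
          (Opposite.op (ModuleCat.of (ExteriorAlgebra k (Fin c → k)) M))).obj
          (ModuleCat.of (ExteriorAlgebra k (Fin c → k)) N))) ∨
      (∀ n ≥ m₀, Odd n → Nontrivial
        (((_root_.Ext k (ModuleCat (ExteriorAlgebra k (Fin c → k))) n).obj
          (Opposite.op (ModuleCat.of (ExteriorAlgebra k (Fin c → k)) M))).obj
          (ModuleCat.of (ExteriorAlgebra k (Fin c → k)) N))) := by
  letI : Module k M := Module.restrictScalars k (ExteriorAlgebra k (Fin c → k)) M
  haveI : IsScalarTower k (ExteriorAlgebra k (Fin c → k)) M := IsScalarTower.restrictScalars _ _ _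
  letI : Module k N := Module.restrictScalars k (ExteriorAlgebra k (Fin c → k)) N
  haveI : IsScalarTower k (ExteriorAlgebra k (Fin c → k)) N := IsScalarTower.restrictScalars _ _ _
  haveI : Module.Finite k (ExteriorAlgebra k (Fin c → k)) := ExtAux.finite_ext
  haveI : Module.Finite k M := Module.Finite.trans (ExteriorAlgebra k (Fin c → k)) M
  haveI : Module.Finite k N := Module.Finite.trans (ExteriorAlgebra k (Fin c → k)) N
  have hExt : ∀ n, 1 ≤ n → (Subsingleton
      (((_root_.Ext k (ModuleCat (ExteriorAlgebra k (Fin c → k))) n).obj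
        (Opposite.op (ModuleCat.of (ExteriorAlgebra k (Fin c → k)) M))).obj
        (ModuleCat.of (ExteriorAlgebra k (Fin c → k)) N)) ↔
      ExtAux.EM k c M N (ExtAux.tau n) n) := by
    intro n hn
    obtain ⟨m, rfl⟩ : ∃ m, n = m + 1 := ⟨n - 1, by omega⟩
    exact ExtAux.ext_iff M N m
  obtain ⟨N₀, hN₀⟩ := ExtAux.Ex_succ (ExtAux.opM (k := k) (c := c) M N)
  by_contra hcon
  push Not at hcon
  obtain ⟨⟨n, hn, hn'⟩, h2⟩ := hcon
  obtain ⟨⟨n1, hn1, he, h1⟩, ⟨n2, hn2, ho, h2⟩⟩ := h2 (N₀ + 1)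
  rw [hExt n1 (by omega)] at h1
  rw [hExt n2 (by omega)] at h2
  have t1 : ExtAux.tau n1 = false := by simpa [ExtAux.tau] using he
  have t2 : ExtAux.tau n2 = true := by simpa [ExtAux.tau] using ho
  rw [t1] at h1
  rw [t2] at h2
  have hall := ExtAux.Ex_of_eventually _ (ExtAux.opM_rel (k := k) (c := c) M N) Finset.univ
    (max n1 n2) (fun m hm ε => by
      cases ε
      · exact hN₀ n1 (by omega) false h1 m (by omega)
      · exact hN₀ n2 (by omega) true h2 m (by omega))
  have := (hExt n hn).2 (hall n hn _)
  exact not_subsingleton_iff_nontrivial.2 hn' this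
end
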